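/- arXiv:2212.07974 — 2 statements merged into one kernel-verified Lean document; each statement's English description precedes it below -/
import Mathlib

section
/- For every α ∈ (0, 4/5], the function x ↦ φ(-α, 0, -x) is log-concave on [0,∞). -/
/-- The Wright function `φ(ρ, β, x) = ∑ x^n / (n! Γ(β + ρ n))`. -/
noncomputable def wright (ρ β x : ℝ) : ℝ :=
  ∑' n : ℕ, x ^ n / ((n.factorial : ℝ) * Real.Gamma (β + ρ * n))

/-- `f` is log-concave on the set `S`. -/
def LogConcaveOn' (f : ℝ → ℝ) (S : Set ℝ) : Prop :=
  ∀ x ∈ S, ∀ y ∈ S, ∀ t ∈ Set.Icc (0 : ℝ) 1,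
    f ((1 - t) * x + t * y) ≥ f x ^ (1 - t) * f y ^ t

set_option linter.unusedVariables false
set_option maxRecDepth 100000
set_option maxHeartbeats 4000000

lemma b4 {a b : ℝ} (ha : 0 ≤ a) (hb : 0 ≤ b) (n0 n1 n2 n3 n4 : ℕ) :
    0 ≤ (n0 : ℝ) * b^4 + n1 * a * b^3 + n2 * a^2 * b^2 + n3 * a^3 * b + n4 * a^4 := by
  positivity

lemma b6 {a b : ℝ} (ha : 0 ≤ a) (hb : 0 ≤ b) (n0 n1 n2 n3 n4 n5 n6 : ℕ) :
    0 ≤ (n0 : ℝ) * b^6 + n1 * a * b^5 + n2 * a^2 * b^4 + n3 * a^3 * b^3 + n4 * a^4 * b^2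
      + n5 * a^5 * b + n6 * a^6 := by
  positivity

lemma b4z {a b : ℝ} (ha : 0 ≤ a) (hb : 0 ≤ b) {n0 n1 n2 n3 n4 : ℝ} (h0 : 0 ≤ n0) (h1 : 0 ≤ n1)
    (h2 : 0 ≤ n2) (h3 : 0 ≤ n3) (h4 : 0 ≤ n4) :
    0 ≤ n0 * b^4 + n1 * a * b^3 + n2 * a^2 * b^2 + n3 * a^3 * b + n4 * a^4 := by
  positivity

lemma b3p {a b : ℝ} (ha : 0 ≤ a) (hb : 0 ≤ b) {n0 n1 n2 n3 : ℝ} (h0 : 0 ≤ n0) (h1 : 0 ≤ n1)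
    (h2 : 0 ≤ n2) (h3 : 0 ≤ n3) :
    0 ≤ n0 * b^3 + n1 * a * b^2 + n2 * a^2 * b + n3 * a^3 := by
  positivity

lemma polyI0_aux {a b c d e f : ℝ} (ha : 0 ≤ a) (hb : 0 ≤ b) (hc : 0 ≤ c) (hd : 0 ≤ d)
    (he : 0 ≤ e) (hf : 0 ≤ f) : 0 ≤ (a+b)*(a*(e+f)+e*(a+b))*(a*(e+f)+e*b)*(7*(e+f)+2*e)*(a+b)^1
      - 4*(a*(e+f)+e*b)^2*(a+b)^2*(e+f)
      - (a*(e+f)+e*(a+b))^2*((a+b)^2*(e+f)+(2*(a+b)*(e+f)+2*e*b)*(a+b)+0*(e+f)) := by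
  have h := b3p he hf
    (b4 ha hb 0 0 0 0 0)
    (b4 ha hb 0 0 1 4 3)
    (b4 ha hb 0 1 3 7 5)
    (b4 ha hb 0 1 2 3 2)
  refine (mul_nonneg_iff_of_pos_left (by norm_num : (0:ℝ) < 1)).1 (le_of_le_of_eq h ?_)
  push_cast
  ring

lemma polyI0 {s z p : ℝ} (hs0 : 0 ≤ s) (hs1 : s ≤ 1) (hz0 : 0 ≤ z) (hz1 : z ≤ 1)
    (hp0 : 0 ≤ p) (hp1 : p ≤ 1) :
    0 ≤ 1*(s+p)*(s+p*(1-s))*(7+2*p)-4*(s+p*(1-s))^2-(s+p)^2*(1^2+(2+2*p*(1-s))*1+0) := by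
  have h := polyI0_aux (sub_nonneg.2 hs0) (sub_nonneg.2 hs1) (sub_nonneg.2 hz0) (sub_nonneg.2 hz1)
    hp0 (sub_nonneg.2 hp1)
  refine le_of_le_of_eq h ?_
  ring

lemma polyI1_aux {a b c d e f : ℝ} (ha : 0 ≤ a) (hb : 0 ≤ b) (hc : 0 ≤ c) (hd : 0 ≤ d)
    (he : 0 ≤ e) (hf : 0 ≤ f) : 0 ≤ ((a+b)*(c+d)^2+3/4*(d*((c+d)+c))*b)*(a*(e+f)+e*(a+b))*(a*(e+f)+e*b)*(7*(e+f)+2*e)*(a+b)^1*(c+d)^2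
      - 4*(a*(e+f)+e*b)^2*(a+b)^2*(c+d)^4*(e+f)
      - (a*(e+f)+e*(a+b))^2*(((a+b)*(c+d)^2+3/4*(d*((c+d)+c))*b)^2*(e+f)+(2*(a+b)*(e+f)+2*e*b)*((a+b)*(c+d)^2+3/4*(d*((c+d)+c))*b)*(c+d)^2+(2*(3/4)*b*(c*d*((c+d)^2+3/4*(2*(c+d)^2-c*(c+d)-c^2)/3)*b-3*c^2*(c+d)^2*a))*(e+f)) := by
  have h := b3p he hf
    (b4z hc hd
      (b4 ha hb 0 0 27 36 0)
      (b4 ha hb 0 0 72 144 0)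
      (b4 ha hb 0 0 78 252 0)
      (b4 ha hb 0 0 48 216 0)
      (b4 ha hb 0 0 0 72 0))
    (b4z hc hd
      (b4 ha hb 0 54 139 184 48)
      (b4 ha hb 0 144 376 736 192)
      (b4 ha hb 0 156 570 1344 288)
      (b4 ha hb 0 96 568 1216 192)
      (b4 ha hb 0 0 160 424 48))
    (b4z hc hd
      (b4 ha hb 27 130 168 220 80)
      (b4 ha hb 72 304 384 880 320)
      (b4 ha hb 78 396 864 1788 480)
      (b4 ha hb 48 400 1248 1816 320)
      (b4 ha hb 0 88 480 688 80))
    (b4z hc hd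
      (b4 ha hb 27 76 56 72 32)
      (b4 ha hb 72 160 80 288 128)
      (b4 ha hb 78 240 372 696 192)
      (b4 ha hb 48 304 728 816 128)
      (b4 ha hb 0 88 320 336 32))
  refine (mul_nonneg_iff_of_pos_left (by norm_num : (0:ℝ) < 16)).1 (le_of_le_of_eq h ?_)
  push_cast
  ring

lemma polyI1 {s z p : ℝ} (hs0 : 0 ≤ s) (hs1 : s ≤ 1) (hz0 : 0 ≤ z) (hz1 : z ≤ 1)
    (hp0 : 0 ≤ p) (hp1 : p ≤ 1) :
    0 ≤ (1+3/4*(1-z^2)*(1-s))*(s+p)*(s+p*(1-s))*(7+2*p)-4*(s+p*(1-s))^2-(s+p)^2*((1+3/4*(1-z^2)*(1-s))^2+(2+2*p*(1-s))*(1+3/4*(1-z^2)*(1-s))+(2*(3/4)*(1-s)*(z*(1-z)*(1+(3/4)*(2-z-z^2)/3)*(1-s)-3*z^2*s))) := by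
  have h := polyI1_aux (sub_nonneg.2 hs0) (sub_nonneg.2 hs1) (sub_nonneg.2 hz0) (sub_nonneg.2 hz1)
    hp0 (sub_nonneg.2 hp1)
  refine le_of_le_of_eq h ?_
  ring

lemma polyII0a_aux {a b c d e f : ℝ} (ha : 0 ≤ a) (hb : 0 ≤ b) (hc : 0 ≤ c) (hd : 0 ≤ d)
    (he : 0 ≤ e) (hf : 0 ≤ f) : 0 ≤ (2*(a+b))*((a*(2*(a+b))+a^2)*(2*(e+f))+e*(2*(a+b))^2)*(a*(2*(e+f))+e*(a+2*b))*(9*(2*(e+f))+2*e)*(2*(a+b))^2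
      - 4*(a*(2*(e+f))+e*(a+2*b))^2*(2*(a+b))^4*(2*(e+f))
      - ((a*(2*(a+b))+a^2)*(2*(e+f))+e*(2*(a+b))^2)^2*((2*(a+b))^2*(2*(e+f))+(4*(2*(a+b))*(2*(e+f))-2*a*(2*(e+f))+2*e*(a+2*b))*(2*(a+b))+0*(2*(e+f))) := by
  have h := b3p he hf
    (b6 ha hb 0 0 0 64 160 160 64)
    (b6 ha hb 0 0 128 544 800 592 208)
    (b6 ha hb 0 64 448 1056 1088 608 192)
    (b6 ha hb 0 64 320 576 448 176 48)
  refine (mul_nonneg_iff_of_pos_left (by norm_num : (0:ℝ) < 1)).1 (le_of_le_of_eq h ?_)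
  push_cast
  ring

lemma polyII0a {s z p : ℝ} (hs0 : 0 ≤ s) (hs1 : s ≤ 1/2) (hz0 : 0 ≤ z) (hz1 : z ≤ 1)
    (hp0 : 0 ≤ p) (hp1 : p ≤ 1/2) :
    0 ≤ 1*(s+s^2+p)*(s+p*(1-s))*(9+2*p)-4*(s+p*(1-s))^2-(s+s^2+p)^2*(1^2+(4-2*s+2*p*(1-s))*1+0) := by
  have h := polyII0a_aux (sub_nonneg.2 hs0) (sub_nonneg.2 hs1) (sub_nonneg.2 hz0) (sub_nonneg.2 hz1)
    hp0 (sub_nonneg.2 hp1)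
  refine le_of_le_of_eq h ?_
  ring

lemma polyII0b_aux {a b c d e f : ℝ} (ha : 0 ≤ a) (hb : 0 ≤ b) (hc : 0 ≤ c) (hd : 0 ≤ d)
    (he : 0 ≤ e) (hf : 0 ≤ f) : 0 ≤ (2*(a+b))*(((2*a+b)*(2*(a+b))+(2*a+b)^2)*(2*(e+f))+e*(2*(a+b))^2)*((2*a+b)*(2*(e+f))+e*b)*(9*(2*(e+f))+2*e)*(2*(a+b))^2
      - 4*((2*a+b)*(2*(e+f))+e*b)^2*(2*(a+b))^4*(2*(e+f))
      - (((2*a+b)*(2*(a+b))+(2*a+b)^2)*(2*(e+f))+e*(2*(a+b))^2)^2*((2*(a+b))^2*(2*(e+f))+(4*(2*(a+b))*(2*(e+f))-2*(2*a+b)*(2*(e+f))+2*e*b)*(2*(a+b))+0*(2*(e+f))) := by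
  have h := b3p he hf
    (b6 ha hb 64 608 2400 5056 6016 3840 1024)
    (b6 ha hb 208 1904 7360 15456 18624 12160 3328)
    (b6 ha hb 192 1696 6528 14048 17664 12096 3456)
    (b6 ha hb 48 400 1568 3648 5056 3776 1152)
  refine (mul_nonneg_iff_of_pos_left (by norm_num : (0:ℝ) < 1)).1 (le_of_le_of_eq h ?_)
  push_cast
  ring

lemma polyII0b {s z p : ℝ} (hs0 : 1/2 ≤ s) (hs1 : s ≤ 1) (hz0 : 0 ≤ z) (hz1 : z ≤ 1)
    (hp0 : 0 ≤ p) (hp1 : p ≤ 1/2) :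
    0 ≤ 1*(s+s^2+p)*(s+p*(1-s))*(9+2*p)-4*(s+p*(1-s))^2-(s+s^2+p)^2*(1^2+(4-2*s+2*p*(1-s))*1+0) := by
  have h := polyII0b_aux (sub_nonneg.2 hs0) (sub_nonneg.2 hs1) (sub_nonneg.2 hz0) (sub_nonneg.2 hz1)
    hp0 (sub_nonneg.2 hp1)
  refine le_of_le_of_eq h ?_
  ring

lemma polyII1a_aux {a b c d e f : ℝ} (ha : 0 ≤ a) (hb : 0 ≤ b) (hc : 0 ≤ c) (hd : 0 ≤ d)
    (he : 0 ≤ e) (hf : 0 ≤ f) : 0 ≤ ((2*(a+b))*(2*(c+d))^2+3/4*((c+2*d)*((2*(c+d))+c))*(a+2*b))*((a*(2*(a+b))+a^2)*(2*(e+f))+e*(2*(a+b))^2)*(a*(2*(e+f))+e*(a+2*b))*(9*(2*(e+f))+2*e)*(2*(a+b))^2*(2*(c+d))^2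
      - 4*(a*(2*(e+f))+e*(a+2*b))^2*(2*(a+b))^4*(2*(c+d))^4*(2*(e+f))
      - ((a*(2*(a+b))+a^2)*(2*(e+f))+e*(2*(a+b))^2)^2*(((2*(a+b))*(2*(c+d))^2+3/4*((c+2*d)*((2*(c+d))+c))*(a+2*b))^2*(2*(e+f))+(4*(2*(a+b))*(2*(e+f))-2*a*(2*(e+f))+2*e*(a+2*b))*((2*(a+b))*(2*(c+d))^2+3/4*((c+2*d)*((2*(c+d))+c))*(a+2*b))*(2*(c+d))^2+(2*(3/4)*(a+2*b)*(c*(c+2*d)*((2*(c+d))^2+3/4*(2*(2*(c+d))^2-c*(2*(c+d))-c^2)/3)*(a+2*b)-3*c^2*(2*(c+d))^2*a))*(2*(e+f))) := by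
  have h := b3p he hf
    (b4z hc hd
      (b6 ha hb 0 0 6912 23552 28544 16640 4208)
      (b6 ha hb 0 0 23040 75776 88832 52736 14240)
      (b6 ha hb 0 0 29184 96000 115392 73920 21360)
      (b6 ha hb 0 0 16896 58880 78464 56192 16832)
      (b6 ha hb 0 0 3600 14144 22040 17648 5369))
    (b4z hc hd
      (b6 ha hb 0 13824 74752 146816 131392 60416 13136)
      (b6 ha hb 0 46080 243712 460544 390784 177152 41312)
      (b6 ha hb 0 58368 308736 583488 503712 246336 62688)
      (b6 ha hb 0 33792 185344 372608 360640 202880 53984)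
      (b6 ha hb 0 7200 42688 96248 109300 69920 18887))
    (b4z hc hd
      (b6 ha hb 6912 58112 178112 255744 179968 64768 11664)
      (b6 ha hb 23040 190976 568448 774144 496384 162304 30816)
      (b6 ha hb 29184 241920 717312 970944 624672 220608 48144)
      (b6 ha hb 16896 143360 441728 642432 480064 213376 50496)
      (b6 ha hb 3600 32144 107252 176928 160168 85264 20679))
    (b4z hc hd
      (b6 ha hb 6912 44288 110272 132480 77120 20992 2736)
      (b6 ha hb 23040 144896 347776 389376 194432 37888 3744)
      (b6 ha hb 29184 183552 437760 483456 236352 48192 6816)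
      (b6 ha hb 16896 109568 273280 328704 197888 66688 13344)
      (b6 ha hb 3600 24944 68164 94824 72908 32992 7161))
  refine (mul_nonneg_iff_of_pos_left (by norm_num : (0:ℝ) < 2)).1 (le_of_le_of_eq h ?_)
  push_cast
  ring

lemma polyII1a {s z p : ℝ} (hs0 : 0 ≤ s) (hs1 : s ≤ 1/2) (hz0 : 0 ≤ z) (hz1 : z ≤ 1/2)
    (hp0 : 0 ≤ p) (hp1 : p ≤ 1/2) :
    0 ≤ (1+3/4*(1-z^2)*(1-s))*(s+s^2+p)*(s+p*(1-s))*(9+2*p)-4*(s+p*(1-s))^2-(s+s^2+p)^2*((1+3/4*(1-z^2)*(1-s))^2+(4-2*s+2*p*(1-s))*(1+3/4*(1-z^2)*(1-s))+(2*(3/4)*(1-s)*(z*(1-z)*(1+(3/4)*(2-z-z^2)/3)*(1-s)-3*z^2*s))) := by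
  have h := polyII1a_aux (sub_nonneg.2 hs0) (sub_nonneg.2 hs1) (sub_nonneg.2 hz0) (sub_nonneg.2 hz1)
    hp0 (sub_nonneg.2 hp1)
  refine le_of_le_of_eq h ?_
  ring

lemma polyII1b_aux {a b c d e f : ℝ} (ha : 0 ≤ a) (hb : 0 ≤ b) (hc : 0 ≤ c) (hd : 0 ≤ d)
    (he : 0 ≤ e) (hf : 0 ≤ f) : 0 ≤ ((2*(a+b))*(2*(c+d))^2+3/4*((c+2*d)*((2*(c+d))+c))*b)*(((2*a+b)*(2*(a+b))+(2*a+b)^2)*(2*(e+f))+e*(2*(a+b))^2)*((2*a+b)*(2*(e+f))+e*b)*(9*(2*(e+f))+2*e)*(2*(a+b))^2*(2*(c+d))^2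
      - 4*((2*a+b)*(2*(e+f))+e*b)^2*(2*(a+b))^4*(2*(c+d))^4*(2*(e+f))
      - (((2*a+b)*(2*(a+b))+(2*a+b)^2)*(2*(e+f))+e*(2*(a+b))^2)^2*(((2*(a+b))*(2*(c+d))^2+3/4*((c+2*d)*((2*(c+d))+c))*b)^2*(2*(e+f))+(4*(2*(a+b))*(2*(e+f))-2*(2*a+b)*(2*(e+f))+2*e*b)*((2*(a+b))*(2*(c+d))^2+3/4*((c+2*d)*((2*(c+d))+c))*b)*(2*(c+d))^2+(2*(3/4)*b*(c*(c+2*d)*((2*(c+d))^2+3/4*(2*(2*(c+d))^2-c*(2*(c+d))-c^2)/3)*b-3*c^2*(2*(c+d))^2*(2*a+b)))*(2*(e+f))) := by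
  have h := b3p he hf
    (b4z hc hd
      (b6 ha hb 4208 33856 114624 212480 229376 135168 32768)
      (b6 ha hb 14240 118144 415872 803840 899072 540672 131072)
      (b6 ha hb 21360 182400 657792 1287936 1435392 844800 196608)
      (b6 ha hb 16832 145792 526464 1014272 1091072 608256 131072)
      (b6 ha hb 5369 46780 167700 315296 324416 168960 32768))
    (b4z hc hd
      (b6 ha hb 13136 97216 315392 589440 666624 416768 106496)
      (b6 ha hb 41312 318592 1097984 2189568 2601984 1667072 425984)
      (b6 ha hb 62688 505920 1801632 3622848 4235136 2622720 638976)
      (b6 ha hb 53984 444928 1570880 3034752 3330816 1911296 425984)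
      (b6 ha hb 18887 156724 543320 1003272 1027680 538880 106496))
    (b4z hc hd
      (b6 ha hb 11664 75200 232128 459520 580800 402432 110592)
      (b6 ha hb 30816 207488 722304 1635328 2248320 1609728 442368)
      (b6 ha hb 48144 357120 1307232 2905152 3789696 2560512 663552)
      (b6 ha hb 50496 392576 1376064 2742400 3157632 1901568 442368)
      (b6 ha hb 20679 162884 548268 1002496 1031556 548352 110592))
    (b4z hc hd
      (b6 ha hb 2736 11840 31360 82560 143552 120832 36864)
      (b6 ha hb 3744 7040 40192 249600 545408 483328 147456)
      (b6 ha hb 6816 33600 163392 570240 989952 782592 221184)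
      (b6 ha hb 13344 93440 331648 721920 917888 598528 147456)
      (b6 ha hb 7161 52940 172648 314520 328292 178432 36864))
  refine (mul_nonneg_iff_of_pos_left (by norm_num : (0:ℝ) < 2)).1 (le_of_le_of_eq h ?_)
  push_cast
  ring

lemma polyII1b {s z p : ℝ} (hs0 : 1/2 ≤ s) (hs1 : s ≤ 1) (hz0 : 0 ≤ z) (hz1 : z ≤ 1/2)
    (hp0 : 0 ≤ p) (hp1 : p ≤ 1/2) :
    0 ≤ (1+3/4*(1-z^2)*(1-s))*(s+s^2+p)*(s+p*(1-s))*(9+2*p)-4*(s+p*(1-s))^2-(s+s^2+p)^2*((1+3/4*(1-z^2)*(1-s))^2+(4-2*s+2*p*(1-s))*(1+3/4*(1-z^2)*(1-s))+(2*(3/4)*(1-s)*(z*(1-z)*(1+(3/4)*(2-z-z^2)/3)*(1-s)-3*z^2*s))) := by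
  have h := polyII1b_aux (sub_nonneg.2 hs0) (sub_nonneg.2 hs1) (sub_nonneg.2 hz0) (sub_nonneg.2 hz1)
    hp0 (sub_nonneg.2 hp1)
  refine le_of_le_of_eq h ?_
  ring

lemma polyII1c_aux {a b c d e f : ℝ} (ha : 0 ≤ a) (hb : 0 ≤ b) (hc : 0 ≤ c) (hd : 0 ≤ d)
    (he : 0 ≤ e) (hf : 0 ≤ f) : 0 ≤ ((a+b)*(2*(c+d))^2+3/4*(d*((2*(c+d))+(2*c+d)))*b)*((a*(a+b)+a^2)*(2*(e+f))+e*(a+b)^2)*(a*(2*(e+f))+e*b)*(9*(2*(e+f))+2*e)*(a+b)^2*(2*(c+d))^2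
      - 4*(a*(2*(e+f))+e*b)^2*(a+b)^4*(2*(c+d))^4*(2*(e+f))
      - ((a*(a+b)+a^2)*(2*(e+f))+e*(a+b)^2)^2*(((a+b)*(2*(c+d))^2+3/4*(d*((2*(c+d))+(2*c+d)))*b)^2*(2*(e+f))+(4*(a+b)*(2*(e+f))-2*a*(2*(e+f))+2*e*b)*((a+b)*(2*(c+d))^2+3/4*(d*((2*(c+d))+(2*c+d)))*b)*(2*(c+d))^2+(2*(3/4)*b*((2*c+d)*d*((2*(c+d))^2+3/4*(2*(2*(c+d))^2-(2*c+d)*(2*(c+d))-(2*c+d)^2)/3)*b-3*(2*c+d)^2*(2*(c+d))^2*a))*(2*(e+f))) := by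
  have h := b3p he hf
    (b4z hc hd
      (b6 ha hb 0 0 900 3472 6224 8832 2048)
      (b6 ha hb 0 0 2976 15232 34304 43776 8192)
      (b6 ha hb 0 0 3552 26880 71616 82560 12288)
      (b6 ha hb 0 0 1536 20992 64256 69120 8192)
      (b6 ha hb 0 0 0 5632 20480 21504 2048))
    (b4z hc hd
      (b6 ha hb 0 900 6172 14436 19960 27424 6656)
      (b6 ha hb 0 2976 24160 72288 122176 140224 26624)
      (b6 ha hb 0 3552 37536 143232 272640 271392 39936)
      (b6 ha hb 0 1536 25600 123264 255232 231808 26624)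
      (b6 ha hb 0 0 5632 36864 83968 73216 6656))
    (b4z hc hd
      (b6 ha hb 225 2668 10098 16892 18849 27072 6912)
      (b6 ha hb 744 9760 44112 97568 135144 144768 27648)
      (b6 ha hb 888 13824 77808 214080 327672 290112 41472)
      (b6 ha hb 384 8320 60672 197504 321408 254208 27648)
      (b6 ha hb 0 1408 16128 62720 109056 81792 6912))
    (b4z hc hd
      (b6 ha hb 225 1768 4826 5928 5113 8480 2304)
      (b6 ha hb 744 6784 22928 40512 47272 48320 9216)
      (b6 ha hb 888 10272 43824 97728 126648 101280 13824)
      (b6 ha hb 384 6784 36608 95232 130432 91520 9216)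
      (b6 ha hb 0 1408 10496 31488 45568 30080 2304))
  refine (mul_nonneg_iff_of_pos_left (by norm_num : (0:ℝ) < 8)).1 (le_of_le_of_eq h ?_)
  push_cast
  ring

lemma polyII1c {s z p : ℝ} (hs0 : 0 ≤ s) (hs1 : s ≤ 1) (hz0 : 1/2 ≤ z) (hz1 : z ≤ 1)
    (hp0 : 0 ≤ p) (hp1 : p ≤ 1/2) :
    0 ≤ (1+3/4*(1-z^2)*(1-s))*(s+s^2+p)*(s+p*(1-s))*(9+2*p)-4*(s+p*(1-s))^2-(s+s^2+p)^2*((1+3/4*(1-z^2)*(1-s))^2+(4-2*s+2*p*(1-s))*(1+3/4*(1-z^2)*(1-s))+(2*(3/4)*(1-s)*(z*(1-z)*(1+(3/4)*(2-z-z^2)/3)*(1-s)-3*z^2*s))) := by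
  have h := polyII1c_aux (sub_nonneg.2 hs0) (sub_nonneg.2 hs1) (sub_nonneg.2 hz0) (sub_nonneg.2 hz1)
    hp0 (sub_nonneg.2 hp1)
  refine le_of_le_of_eq h ?_
  ring

/-- The error terms of the final polynomial inequality. -/
noncomputable def eX (M s z : ℝ) : ℝ := 1 + M * (1 - z^2) * (1 - s)

noncomputable def eTh (M s z : ℝ) : ℝ :=
  2 * M * (1 - s) * (z * (1 - z) * (1 + M * (2 - z - z^2) / 3) * (1 - s) - 3 * z^2 * s)

lemma concave_M {M s z b q lin co : ℝ} (hM0 : 0 ≤ M) (hM1 : M ≤ 3/4)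
    (hz0 : 0 ≤ z) (hz1 : z ≤ 1)
    (h0 : 0 ≤ 1*b*q*lin-4*q^2-b^2*(1^2+co*1+0))
    (h1 : 0 ≤ (1+3/4*(1-z^2)*(1-s))*b*q*lin-4*q^2-b^2*((1+3/4*(1-z^2)*(1-s))^2
      +co*(1+3/4*(1-z^2)*(1-s))
      +(2*(3/4)*(1-s)*(z*(1-z)*(1+(3/4)*(2-z-z^2)/3)*(1-s)-3*z^2*s)))) :
    0 ≤ eX M s z * b * q * lin - 4 * q^2 - b^2 * (eX M s z ^2 + co * eX M s z + eTh M s z) := by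
  have h2 : 0 ≤ M * (3/4 - M) * (b^2 * (1-s)^2 * ((1-z^2)^2 + 2/3 * z * (1-z) * ((1 - z) * (2+z)))) := by
    have a1 : 0 ≤ 3/4 - M := by linarith
    have a2 : 0 ≤ 1 - z := by linarith
    positivity
  have h3 := mul_nonneg (show (0:ℝ) ≤ 1 - 4/3*M by linarith) h0
  have h4 := mul_nonneg (show (0:ℝ) ≤ 4/3*M by linarith) h1
  refine le_of_le_of_eq (add_nonneg (add_nonneg h3 h4) h2) ?_
  unfold eX eTh
  ring

lemma endI {M s z p : ℝ} (hM0 : 0 ≤ M) (hM1 : M ≤ 3/4) (hs0 : 0 ≤ s) (hs1 : s ≤ 1)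
    (hz0 : 0 ≤ z) (hz1 : z ≤ 1) (hp0 : 0 ≤ p) (hp1 : p ≤ 1) :
    0 ≤ eX M s z * (s+p) * (s+p*(1-s)) * (7+2*p) - 4 * (s+p*(1-s))^2
      - (s+p)^2 * (eX M s z ^2 + (2+2*p*(1-s)) * eX M s z + eTh M s z) :=
  concave_M hM0 hM1 hz0 hz1 (polyI0 hs0 hs1 hz0 hz1 hp0 hp1) (polyI1 hs0 hs1 hz0 hz1 hp0 hp1)

lemma endII {M s z p : ℝ} (hM0 : 0 ≤ M) (hM1 : M ≤ 3/4) (hs0 : 0 ≤ s) (hs1 : s ≤ 1)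
    (hz0 : 0 ≤ z) (hz1 : z ≤ 1) (hp0 : 0 ≤ p) (hp1 : p ≤ 1/2) :
    0 ≤ eX M s z * (s+s^2+p) * (s+p*(1-s)) * (9+2*p) - 4 * (s+p*(1-s))^2
      - (s+s^2+p)^2 * (eX M s z ^2 + (4-2*s+2*p*(1-s)) * eX M s z + eTh M s z) := by
  refine concave_M hM0 hM1 hz0 hz1 ?_ ?_
  · rcases le_total s (1/2) with h | h
    · exact polyII0a hs0 h hz0 hz1 hp0 hp1
    · exact polyII0b h hs1 hz0 hz1 hp0 hp1
  · rcases le_total z (1/2) with h' | h'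
    · rcases le_total s (1/2) with h | h
      · exact polyII1a hs0 h hz0 h' hp0 hp1
      · exact polyII1b h hs1 hz0 h' hp0 hp1
    · exact polyII1c hs0 hs1 h' hz1 hp0 hp1

lemma bern_s {s p : ℝ} (hs0 : 0 < s) (hp0 : 0 ≤ p) (hp1 : p ≤ 1) :
    s ≤ s ^ p * (s + p * (1 - s)) := by
  have h := rpow_one_add_le_one_add_mul_self (s := 1/s - 1) (by
    have : 0 < 1/s := by positivity
    linarith) hp0 hp1
  have e : 1 + (1/s - 1) = s⁻¹ := by rw [one_div]; ring
  rw [e, Real.inv_rpow hs0.le] at h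
  have hsp : 0 < s ^ p := Real.rpow_pos_of_pos hs0 p
  have h2 := mul_le_mul_of_nonneg_left h (mul_pos hsp hs0).le
  have e1 : s ^ p * s * (s ^ p)⁻¹ = s := by field_simp
  have e2 : s ^ p * s * (1 + p * (1/s - 1)) = s ^ p * (s + p * (1 - s)) := by
    field_simp
  rwa [e1, e2] at h2

lemma quad_le {A c B B1 : ℝ} (hA : 0 ≤ A) (hB : 1 ≤ B) (hB1 : B ≤ B1) (hA1 : A ≤ c + 1)
    (h : A * B1^2 - (5 + c) * B1 + 4 ≤ 0) : A * B^2 - (5 + c) * B + 4 ≤ 0 := by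
  rcases eq_or_lt_of_le (hB.trans hB1) with e | e
  · have : B = B1 := by linarith
    rw [this]; exact h
  · have h1 : (B1 - 1) * (A * B^2 - (5 + c) * B + 4) =
        (B1 - B) * (A - c - 1) + (B - 1) * (A * B1^2 - (5 + c) * B1 + 4)
          - A * ((B - 1) * (B1 - B) * (B1 - 1)) := by ring
    have h2 : (B1 - B) * (A - c - 1) ≤ 0 :=
      mul_nonpos_of_nonneg_of_nonpos (by linarith) (by linarith)
    have h3 : (B - 1) * (A * B1^2 - (5 + c) * B1 + 4) ≤ 0 :=
      mul_nonpos_of_nonneg_of_nonpos (by linarith) h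
    have h4 : 0 ≤ A * ((B - 1) * (B1 - B) * (B1 - 1)) :=
      mul_nonneg hA (mul_nonneg (mul_nonneg (by linarith) (by linarith)) (by linarith))
    by_contra hc
    push Not at hc
    have := mul_pos (sub_pos.2 e) hc
    linarith

/-- The final pointwise inequality. -/
lemma final_ineq {M s z r A B : ℝ} (hM0 : 0 ≤ M) (hM1 : M ≤ 3/4) (hs0 : 0 < s) (hs1 : s < 1)
    (hz0 : 0 ≤ z) (hz1 : z ≤ 1) (hr1 : 1 ≤ r) (hr2 : r ≤ 5/2)
    (hA : A * (eX M s z)^2 = (eX M s z)^2 + (2*s + 2*r*(1-s)) * eX M s z + eTh M s z)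
    (hA1 : A ≤ 2*r + 1) (hB : 1 ≤ B) (hB1 : B * (1 - s) ≤ (1 - s^r) * eX M s z) :
    A * B^2 - (5 + 2*r) * B + 4 ≤ 0 := by
  have hX : 1 ≤ eX M s z := by
    unfold eX
    have : 0 ≤ M * (1 - z^2) * (1 - s) :=
      mul_nonneg (mul_nonneg hM0 (by nlinarith)) (by linarith)
    linarith
  have hA0 : 0 ≤ A := by
    have h1 : 0 ≤ A * (eX M s z)^2 := by
      rw [hA]
      have h2 : -(6 * M * (1-s) * z^2 * s) ≤ eTh M s z := by
        unfold eTh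
        have : 0 ≤ 2 * M * (1 - s) * (z * (1 - z) * (1 + M * ((1 - z) * (2 + z)) / 3) * (1 - s)) := by
          have a1 : 0 ≤ 1 - s := by linarith
          have a2 : 0 ≤ 1 - z := by linarith
          positivity
        nlinarith
      have h3 : M * z^2 * ((1-s)*s) ≤ 3/4 * 1 * (1/4) := by
        have : z^2 ≤ 1 := by nlinarith
        have h5 : (1-s)*s ≤ 1/4 := by nlinarith [sq_nonneg (s - 1/2)]
        have h6 : 0 ≤ (1-s)*s := mul_nonneg (by linarith) hs0.le
        gcongr
      have h4 : 0 ≤ (2*s + 2*r*(1-s)) := by nlinarith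
      nlinarith [mul_nonneg h4 (by linarith : 0 ≤ eX M s z - 1)]
    by_contra hc
    push Not at hc
    have : A * eX M s z ^2 < 0 := mul_neg_of_neg_of_pos hc (by positivity)
    linarith
  have hfin : ∀ b q : ℝ, 0 < q → 0 ≤ b → (1 - s^r) * q ≤ (1 - s) * b →
      0 ≤ eX M s z * b * q * (5 + 2*r) - 4 * q^2
      - b^2 * (eX M s z ^2 + (2*s + 2*r*(1-s)) * eX M s z + eTh M s z) →
      A * B^2 - (5 + 2*r) * B + 4 ≤ 0 := by
    intro b q hq hb h1 h2
    refine quad_le (B1 := eX M s z * b / q) hA0 hB ?_ hA1 ?_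
    · rw [le_div_iff₀ hq]
      have : (B * q) * (1 - s) ≤ (eX M s z * b) * (1 - s) := by
        nlinarith [mul_le_mul_of_nonneg_right hB1 hq.le,
          mul_le_mul_of_nonneg_left h1 (by linarith : 0 ≤ eX M s z)]
      exact le_of_mul_le_mul_right this (by linarith)
    · have : A * (eX M s z * b / q)^2 - (5 + 2*r) * (eX M s z * b / q) + 4
        = - (eX M s z * b * q * (5 + 2*r) - 4 * q^2 - b^2 * (A * (eX M s z)^2)) / q^2 := by
        field_simp
        ring
      rw [this, hA]
      apply div_nonpos_of_nonpos_of_nonneg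
      · linarith
      · positivity
  rcases le_total r 2 with h | h
  · have hq : 0 < s + (r-1)*(1-s) := by nlinarith
    refine hfin (s + (r-1)) (s + (r-1)*(1-s)) hq (by linarith) ?_ ?_
    · have := bern_s hs0 (by linarith : 0 ≤ r - 1) (by linarith)
      have e : s ^ r = s * s ^ (r-1) := by
        rw [Real.rpow_sub_one hs0.ne']; field_simp
      rw [e]; nlinarith
    · refine le_of_le_of_eq (endI hM0 hM1 hs0.le hs1.le hz0 hz1 (by linarith : 0 ≤ r - 1) (by linarith)) ?_
      ring
  · have hq : 0 < s + (r-2)*(1-s) := by nlinarith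
    refine hfin (s + s^2 + (r-2)) (s + (r-2)*(1-s)) hq (by nlinarith) ?_ ?_
    · have := bern_s hs0 (by linarith : 0 ≤ r - 2) (by linarith)
      have e : s ^ r = s^2 * s ^ (r-2) := by
        rw [Real.rpow_sub hs0, Real.rpow_two]; field_simp
      rw [e]; nlinarith [mul_pos hs0 hs0]
    · refine le_of_le_of_eq (endII hM0 hM1 hs0.le hs1.le hz0 hz1 (by linarith : 0 ≤ r - 2) (by linarith)) ?_
      ring

open Real Set Filter Topology

lemma monoOn_Ioo_of_hasDerivAt {f f' : ℝ → ℝ} {b : ℝ}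
    (hf : ∀ u ∈ Ioo 0 b, HasDerivAt f (f' u) u) (h0 : ∀ u ∈ Ioo 0 b, 0 ≤ f' u) :
    MonotoneOn f (Ioo 0 b) := by
  refine monotoneOn_of_deriv_nonneg (convex_Ioo 0 b)
    (fun u hu => (hf u hu).continuousAt.continuousWithinAt) ?_ ?_
  · rw [interior_Ioo]; exact fun u hu => (hf u hu).differentiableAt.differentiableWithinAt
  · rw [interior_Ioo]; intro u hu; rw [(hf u hu).deriv]; exact h0 u hu

lemma ge_of_hasDerivAt_nonneg {f f' : ℝ → ℝ} {b l : ℝ}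
    (hf : ∀ u ∈ Ioo 0 b, HasDerivAt f (f' u) u) (h0 : ∀ u ∈ Ioo 0 b, 0 ≤ f' u)
    (hl : Tendsto f (𝓝[>] 0) (𝓝 l)) : ∀ u ∈ Ioo 0 b, l ≤ f u := by
  intro u hu
  refine le_of_tendsto hl ?_
  filter_upwards [Ioo_mem_nhdsGT hu.1] with v hv
  exact monoOn_Ioo_of_hasDerivAt hf h0 ⟨hv.1, hv.2.trans hu.2⟩ hu hv.2.le

lemma le_of_hasDerivAt_nonpos {f f' : ℝ → ℝ} {b l : ℝ}
    (hf : ∀ u ∈ Ioo 0 b, HasDerivAt f (f' u) u) (h0 : ∀ u ∈ Ioo 0 b, f' u ≤ 0)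
    (hl : Tendsto f (𝓝[>] 0) (𝓝 l)) : ∀ u ∈ Ioo 0 b, f u ≤ l := by
  intro u hu
  have := ge_of_hasDerivAt_nonneg (f := fun u => - f u) (f' := fun u => - f' u) (l := -l)
    (fun u hu => (hf u hu).neg) (fun u hu => by have := h0 u hu; linarith) hl.neg u hu
  linarith

noncomputable section

def tC (δ u : ℝ) : ℝ := cos (δ * u) - cos u
def tD (δ u : ℝ) : ℝ := (sin (δ * u) - δ * sin u) / tC δ u
def tW (δ u : ℝ) : ℝ := (1 - δ^2) * sin u / tC δ u
def tV (δ u : ℝ) : ℝ := tW δ u / (1 + tD δ u ^ 2)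
def tp (δ u : ℝ) : ℝ := tV δ u * tD δ u
/-- First derivative of H. -/
def tH (δ u : ℝ) : ℝ := (1 - δ^2) / (2 * tV δ u)
/-- Second derivative of H over the square of the first. -/
def tN (δ u : ℝ) : ℝ := 1 + (tV δ u ^ 2 - 3 * tp δ u ^ 2 + 4 * δ * tp δ u) / (1 - δ^2)
/-- `dp/dH`. -/
def tpZ (δ u : ℝ) : ℝ := (1 / (1 - δ^2)) * (-(1 - δ^2) * tp δ u - 3 * tp δ u * tV δ u ^ 2
  + tp δ u ^ 3 - 2 * δ * tp δ u ^ 2 + 2 * δ * tV δ u ^ 2)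
/-- `dN/dH`. -/
def tNZ (δ u : ℝ) : ℝ := (1 / (1 - δ^2)) * (-2 * tV δ u ^ 2 * tN δ u - 6 * tp δ u * tpZ δ u
  + 4 * δ * tpZ δ u)

end

section trig

variable {δ u : ℝ}

lemma tC_pos (h0 : 0 ≤ δ) (h1 : δ < 1) (hu : u ∈ Ioo 0 π) : 0 < tC δ u := by
  have hu0 := hu.1
  have hu1 := hu.2
  refine sub_pos.2 (cos_lt_cos_of_nonneg_of_le_pi (by positivity) hu1.le ?_)
  nlinarith

lemma tC_deriv : HasDerivAt (tC δ) (sin u - δ * sin (δ * u)) u := by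
  have h1 : HasDerivAt (fun u => cos (δ * u)) (-sin (δ * u) * (δ * 1)) u :=
    ((hasDerivAt_id u).const_mul δ).cos
  exact (h1.sub (hasDerivAt_cos u)).congr_deriv (by ring)

lemma beta_pos (h0 : 0 ≤ δ) (h1 : δ < 1) : 0 < 1 - δ^2 := by nlinarith

lemma tD_deriv (h0 : 0 ≤ δ) (h1 : δ < 1) (hu : u ∈ Ioo 0 π) :
    HasDerivAt (tD δ) (δ * (1 + tD δ u ^ 2) - tD δ u * tW δ u) u := by
  have hC := tC_pos h0 h1 hu
  have e1 : HasDerivAt (fun u => sin (δ * u)) (cos (δ * u) * (δ * 1)) u :=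
    ((hasDerivAt_id u).const_mul δ).sin
  have e2 := (e1.sub ((hasDerivAt_sin u).const_mul δ)).div (tC_deriv (δ := δ) (u := u)) hC.ne'
  refine e2.congr_deriv ?_
  simp only [Pi.sub_apply]
  unfold tD tW
  field_simp
  unfold tC
  ring

lemma tW_deriv (h0 : 0 ≤ δ) (h1 : δ < 1) (hu : u ∈ Ioo 0 π) :
    HasDerivAt (tW δ) (-(1/2) * ((1 - δ^2) * (1 + tD δ u ^ 2) + tW δ u ^ 2)) u := by
  have hC := tC_pos h0 h1 hu
  have e2 := ((hasDerivAt_sin u).const_mul (1 - δ^2)).div (tC_deriv (δ := δ) (u := u)) hC.ne'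
  refine e2.congr_deriv ?_
  unfold tD tW
  field_simp
  have e3 : sin u ^ 2 - sin (δ * u) ^ 2 - tC δ u ^ 2 = 2 * cos u * tC δ u := by
    unfold tC
    nlinarith [sin_sq_add_cos_sq u, sin_sq_add_cos_sq (δ * u)]
  linear_combination (-(1-δ^2)) * e3

lemma tW_pos (h0 : 0 ≤ δ) (h1 : δ < 1) (hu : u ∈ Ioo 0 π) : 0 < tW δ u :=
  div_pos (mul_pos (beta_pos h0 h1) (sin_pos_of_mem_Ioo hu)) (tC_pos h0 h1 hu)

lemma tD_nonneg (h0 : 0 ≤ δ) (h1 : δ < 1) (hu : u ∈ Ioo 0 π) : 0 ≤ tD δ u := by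
  refine div_nonneg ?_ (tC_pos h0 h1 hu).le
  have h2 : (0:ℝ) ∈ Icc 0 π := ⟨le_rfl, pi_pos.le⟩
  have h3 : u ∈ Icc 0 π := ⟨hu.1.le, hu.2.le⟩
  have := strictConcaveOn_sin_Icc.concaveOn.2 h2 h3 (by linarith : 0 ≤ 1 - δ) h0 (by ring)
  simp at this
  linarith

lemma tV_pos (h0 : 0 ≤ δ) (h1 : δ < 1) (hu : u ∈ Ioo 0 π) : 0 < tV δ u :=
  div_pos (tW_pos h0 h1 hu) (by positivity)

lemma tH_pos (h0 : 0 ≤ δ) (h1 : δ < 1) (hu : u ∈ Ioo 0 π) : 0 < tH δ u :=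
  div_pos (beta_pos h0 h1) (by have := tV_pos h0 h1 hu; positivity)

lemma tp_nonneg (h0 : 0 ≤ δ) (h1 : δ < 1) (hu : u ∈ Ioo 0 π) : 0 ≤ tp δ u :=
  mul_nonneg (tV_pos h0 h1 hu).le (tD_nonneg h0 h1 hu)

lemma tV_deriv (h0 : 0 ≤ δ) (h1 : δ < 1) (hu : u ∈ Ioo 0 π) :
    HasDerivAt (tV δ) (-(1 - δ^2) / 2 * tN δ u) u := by
  have hb := beta_pos h0 h1
  have hD : 0 < 1 + tD δ u ^ 2 := by positivity
  have e := (tW_deriv h0 h1 hu).div (((tD_deriv h0 h1 hu).pow 2).const_add 1) hD.ne'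
  refine e.congr_deriv ?_
  unfold tN tp tV
  simp only [Pi.pow_apply]
  field_simp
  push_cast
  ring

lemma tp_deriv (h0 : 0 ≤ δ) (h1 : δ < 1) (hu : u ∈ Ioo 0 π) :
    HasDerivAt (tp δ) (tpZ δ u * tH δ u) u := by
  have hb := beta_pos h0 h1
  have hV := tV_pos h0 h1 hu
  have e := (tV_deriv h0 h1 hu).mul (tD_deriv h0 h1 hu)
  refine e.congr_deriv ?_
  have hW : tW δ u = tV δ u * (1 + tD δ u ^ 2) := by
    unfold tV; field_simp
  unfold tpZ tH tN tp
  rw [hW]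
  field_simp
  ring

lemma tH_deriv (h0 : 0 ≤ δ) (h1 : δ < 1) (hu : u ∈ Ioo 0 π) :
    HasDerivAt (tH δ) (tN δ u * tH δ u ^ 2) u := by
  have hb := beta_pos h0 h1
  have hV := tV_pos h0 h1 hu
  have e := (hasDerivAt_const u (1 - δ^2)).div ((tV_deriv h0 h1 hu).const_mul 2) (by positivity)
  refine e.congr_deriv ?_
  unfold tH
  field_simp
  ring

lemma tN_deriv (h0 : 0 ≤ δ) (h1 : δ < 1) (hu : u ∈ Ioo 0 π) :
    HasDerivAt (tN δ) (tNZ δ u * tH δ u) u := by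
  have hb := beta_pos h0 h1
  have hV := tV_pos h0 h1 hu
  have hp := tp_deriv h0 h1 hu
  have e := (((((tV_deriv h0 h1 hu).pow 2).sub ((hp.pow 2).const_mul 3)).add
    (hp.const_mul (4 * δ))).div_const (1 - δ^2)).const_add 1
  refine e.congr_deriv ?_
  unfold tNZ tH
  field_simp
  push_cast
  ring

lemma claimL (h0 : 0 ≤ δ) (h1 : δ < 1) (hu : u ∈ Ioo 0 π) :
    0 ≤ tNZ δ u + 2 * tN δ u * (tN δ u - 1) := by
  have hb := beta_pos h0 h1
  have hV := tV_pos h0 h1 hu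
  have hp := tp_nonneg h0 h1 hu
  have e : (tNZ δ u + 2 * tN δ u * (tN δ u - 1)) = 2 / (1-δ^2)^2 * (2 * δ * (1 - δ^2) * tp δ u
      + tV δ u ^ 2 * (4 * δ^2 - 8 * δ * tp δ u + 6 * tp δ u ^ 2)
      + tp δ u ^2 * (12 * δ^2 - 16 * δ * tp δ u + 6 * tp δ u ^2)) := by
    unfold tNZ tN tpZ
    field_simp
    ring
  rw [e]
  have a1 : 0 ≤ 4 * δ^2 - 8 * δ * tp δ u + 6 * tp δ u ^ 2 := by
    nlinarith [sq_nonneg (2 * δ - 2 * tp δ u), sq_nonneg (tp δ u)]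
  have a2 : 0 ≤ 12 * δ^2 - 16 * δ * tp δ u + 6 * tp δ u ^2 := by
    nlinarith [sq_nonneg (3 * δ - 2 * tp δ u), sq_nonneg (tp δ u), sq_nonneg δ]
  positivity

lemma tD_tendsto (h0 : 0 ≤ δ) (h1 : δ < 1) : Tendsto (tD δ) (𝓝[>] 0) (𝓝 0) := by
  have hb := beta_pos h0 h1
  have key : ∀ᶠ u in 𝓝[>] (0:ℝ), tD δ u ≤ (π^2 * δ / (8 * (1 - δ^2))) * u := by
    filter_upwards [Ioo_mem_nhdsGT (show (0:ℝ) < 1 by norm_num)] with u hu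
    have hu0 := hu.1
    have hu1 := hu.2
    have hpi := pi_gt_three
    have hpu : u ∈ Ioo 0 π := ⟨hu.1, by linarith⟩
    unfold tD
    rw [div_le_iff₀ (tC_pos h0 h1 hpu)]
    have n1 : sin (δ * u) ≤ δ * u := sin_le (by positivity)
    have n2 : u - u^3/4 < sin u := by
      have := sin_gt_sub_cube hu0
      have : 0 < u^3 := by positivity
      linarith
    have n3 : sin (δ * u) - δ * sin u ≤ δ * u^3/4 := by nlinarith
    have c1 : tC δ u = 2 * sin ((1 + δ) / 2 * u) * sin ((1 - δ) / 2 * u) := by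
      unfold tC
      rw [cos_sub_cos]
      have e1 : (δ * u + u) / 2 = (1 + δ) / 2 * u := by ring
      have e2 : (δ * u - u) / 2 = -((1 - δ) / 2 * u) := by ring
      rw [e1, e2, sin_neg]; ring
    have c2 : 2 / π * ((1 + δ) / 2 * u) ≤ sin ((1 + δ) / 2 * u) :=
      mul_le_sin (by positivity) (by nlinarith)
    have c3 : 2 / π * ((1 - δ) / 2 * u) ≤ sin ((1 - δ) / 2 * u) :=
      mul_le_sin (mul_nonneg (by linarith) hu0.le) (by nlinarith)
    have c4 : 2 * (2 / π * ((1 + δ) / 2 * u)) * (2 / π * ((1 - δ) / 2 * u)) ≤ tC δ u := by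
      rw [c1]
      have : 0 ≤ 2 / π * ((1 - δ) / 2 * u) :=
        mul_nonneg (by positivity) (mul_nonneg (by linarith) hu0.le)
      have h5 : 0 ≤ 2 / π * ((1 + δ) / 2 * u) := by positivity
      have h6 := h5.trans c2
      gcongr
    calc sin (δ * u) - δ * sin u ≤ δ * u^3/4 := n3
      _ = (π^2 * δ / (8 * (1 - δ^2))) * u *
          (2 * (2 / π * ((1 + δ) / 2 * u)) * (2 / π * ((1 - δ) / 2 * u))) := by
          field_simp
          ring
      _ ≤ _ := by gcongr
  refine tendsto_of_tendsto_of_tendsto_of_le_of_le' tendsto_const_nhds ?_ ?_ key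
  · have : Tendsto (fun u : ℝ => (π^2 * δ / (8 * (1 - δ^2))) * u) (𝓝 0)
        (𝓝 ((π^2 * δ / (8 * (1 - δ^2))) * 0)) := (continuous_const.mul continuous_id).tendsto 0
    rw [mul_zero] at this
    exact this.mono_left nhdsWithin_le_nhds
  · filter_upwards [Ioo_mem_nhdsGT pi_pos] with u hu using tD_nonneg h0 h1 hu

lemma tC_tendsto : Tendsto (tC δ) (𝓝[>] 0) (𝓝 0) := by
  have : Continuous (tC δ) := by unfold tC; fun_prop
  have h := this.tendsto 0
  simp [tC] at h
  exact h.mono_left nhdsWithin_le_nhds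

lemma sin_tendsto : Tendsto sin (𝓝[>] 0) (𝓝 0) := by
  have h := continuous_sin.tendsto 0
  simp at h
  exact h.mono_left nhdsWithin_le_nhds

/-- The first derivative of H tends to 0 at 0. -/
lemma tH_tendsto (h0 : 0 ≤ δ) (h1 : δ < 1) : Tendsto (tH δ) (𝓝[>] 0) (𝓝 0) := by
  have hb := beta_pos h0 h1
  have hD := tD_tendsto h0 h1
  -- `C / sin u` tends to zero
  have h2 : Tendsto (fun u => tC δ u / sin u) (𝓝[>] 0) (𝓝 0) := by
    have key : ∀ᶠ u in 𝓝[>] (0:ℝ), tC δ u / sin u ≤ sin u := by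
      filter_upwards [Ioo_mem_nhdsGT (show (0:ℝ) < π / 2 by positivity)] with u hu
      have hu0 := hu.1
      have hu1 := hu.2
      have hs : 0 < sin u := sin_pos_of_mem_Ioo ⟨hu0, by linarith [pi_pos]⟩
      have hc : 0 ≤ cos u := cos_nonneg_of_mem_Icc ⟨by linarith, hu1.le⟩
      rw [div_le_iff₀ hs]
      unfold tC
      nlinarith [cos_le_one (δ * u), sin_sq_add_cos_sq u, cos_le_one u]
    refine tendsto_of_tendsto_of_tendsto_of_le_of_le' tendsto_const_nhds sin_tendsto ?_ key
    filter_upwards [Ioo_mem_nhdsGT pi_pos] with u hu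
    exact div_nonneg (tC_pos h0 h1 hu).le (sin_pos_of_mem_Ioo hu).le
  have h3 : Tendsto (fun u => (1/2) * (1 + tD δ u ^ 2) * (tC δ u / sin u)) (𝓝[>] 0)
      (𝓝 ((1/2) * (1 + 0 ^ 2) * 0)) := (((hD.pow 2).const_add 1).const_mul (1/2)).mul h2
  rw [mul_zero] at h3
  refine h3.congr' ?_
  filter_upwards [Ioo_mem_nhdsGT pi_pos] with u hu
  have hC := tC_pos h0 h1 hu
  have hs := sin_pos_of_mem_Ioo hu
  unfold tH tV tW
  field_simp

lemma tp_le (h0 : 0 ≤ δ) (h1 : δ < 1) (hu : u ∈ Ioo 0 π) : tp δ u ≤ 2 * δ / 3 := by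
  have hb := beta_pos h0 h1
  have main : ∀ u ∈ Ioo 0 π, 0 ≤ (2 * δ * (1 + tD δ u ^ 2) - 3 * tD δ u * tW δ u)
      * (tC δ u * √(tC δ u)) := by
    refine ge_of_hasDerivAt_nonneg (f' := fun u => (tC δ u * √(tC δ u)) *
      ((3/2) * (1 - δ^2) * tD δ u * (1 + tD δ u ^ 2) - (1/2) * δ * tD δ u *
        (δ * (1 + tD δ u ^ 2) - tD δ u * tW δ u) + (3/2) * δ^2 * tD δ u * (1 + tD δ u ^ 2)))
      ?_ ?_ ?_
    · intro u hu
      have hC := tC_pos h0 h1 hu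
      have hD := tD_deriv h0 h1 hu
      have hW := tW_deriv h0 h1 hu
      have hCd : HasDerivAt (tC δ) ((tW δ u - δ * tD δ u) * tC δ u) u := by
        refine tC_deriv.congr_deriv ?_
        unfold tW tD
        field_simp
        ring
      have e := ((((hD.pow 2).const_add 1).const_mul (2 * δ)).sub ((hD.const_mul 3).mul hW)).mul
        (hCd.mul (hCd.sqrt hC.ne'))
      refine e.congr_deriv ?_
      have hs : √(tC δ u) ≠ 0 := (sqrt_pos.2 hC).ne'
      have hs2 : tC δ u = √(tC δ u) ^ 2 := (sq_sqrt hC.le).symm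
      simp only [Pi.pow_apply, Pi.mul_apply, Pi.sub_apply]
      generalize √(tC δ u) = x at *
      rw [hs2]
      field_simp
      push_cast
      ring
    · intro u hu
      have hC := tC_pos h0 h1 hu
      have hD := tD_nonneg h0 h1 hu
      have hW := tW_pos h0 h1 hu
      have e : (3/2) * (1 - δ^2) * tD δ u * (1 + tD δ u ^ 2) - (1/2) * δ * tD δ u *
        (δ * (1 + tD δ u ^ 2) - tD δ u * tW δ u) + (3/2) * δ^2 * tD δ u * (1 + tD δ u ^ 2)
        = (3/2) * (1 - δ^2) * tD δ u * (1 + tD δ u ^ 2) + (1/2) * δ * tD δ u ^ 2 * tW δ u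
          + δ^2 * tD δ u * (1 + tD δ u ^ 2) := by ring
      rw [e]
      positivity
    · have hD := tD_tendsto h0 h1
      have hC := tC_tendsto (δ := δ)
      have h3 : Tendsto (fun u => (2 * δ * (1 + tD δ u ^ 2) * tC δ u
          - 3 * (1 - δ^2) * (tD δ u * sin u)) * √(tC δ u)) (𝓝[>] 0)
          (𝓝 ((2 * δ * (1 + 0 ^ 2) * 0 - 3 * (1 - δ^2) * (0 * 0)) * √0)) :=
        (((((hD.pow 2).const_add 1).const_mul (2 * δ)).mul hC).sub
          ((hD.mul sin_tendsto).const_mul (3 * (1 - δ^2)))).mul hC.sqrt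
      rw [sqrt_zero, mul_zero] at h3
      refine h3.congr' ?_
      filter_upwards [Ioo_mem_nhdsGT pi_pos] with u hu
      have hC := tC_pos h0 h1 hu
      have e : tW δ u * tC δ u = (1 - δ^2) * sin u := by unfold tW; field_simp
      linear_combination (3 * tD δ u * √(tC δ u)) * e
  have hC := tC_pos h0 h1 hu
  have h2 := nonneg_of_mul_nonneg_left (main u hu) (by positivity)
  have hD : 0 < 1 + tD δ u ^ 2 := by positivity
  have : tp δ u = tD δ u * tW δ u / (1 + tD δ u ^ 2) := by unfold tp tV; ring
  rw [this, div_le_iff₀ hD]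
  linarith

end trig

open Real Set Filter Topology

noncomputable section

def tS (δ u : ℝ) : ℝ := tV δ u ^ 2 / (tV δ u ^ 2 + (1 - δ^2))
def tM (δ : ℝ) : ℝ := 4 * δ^2 / (3 * (1 - δ^2))
def tz (δ u : ℝ) : ℝ := 1 - 3 * tp δ u / (2 * δ)

end

section ptw

variable {δ u : ℝ}

lemma tS_pos (h0 : 0 ≤ δ) (h1 : δ < 1) (hu : u ∈ Ioo 0 π) : 0 < tS δ u := by
  have hb := beta_pos h0 h1
  have hV := tV_pos h0 h1 hu
  unfold tS; positivity

lemma one_sub_tS (h0 : 0 ≤ δ) (h1 : δ < 1) (hu : u ∈ Ioo 0 π) :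
    1 - tS δ u = (1 - δ^2) / (tV δ u ^ 2 + (1 - δ^2)) := by
  have hb := beta_pos h0 h1
  have hV := tV_pos h0 h1 hu
  have : 0 < tV δ u ^ 2 + (1 - δ^2) := by positivity
  unfold tS; field_simp; ring

lemma tS_lt (h0 : 0 ≤ δ) (h1 : δ < 1) (hu : u ∈ Ioo 0 π) : tS δ u < 1 := by
  have hb := beta_pos h0 h1
  have hV := tV_pos h0 h1 hu
  have := one_sub_tS h0 h1 hu
  have h2 : 0 < (1 - δ^2) / (tV δ u ^ 2 + (1 - δ^2)) := by positivity
  linarith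

lemma tN_mul (h0 : 0 ≤ δ) (h1 : δ < 1) (hu : u ∈ Ioo 0 π) :
    tN δ u * (1 - tS δ u) = 1 + (4 * δ * tp δ u - 3 * tp δ u ^ 2) / (1 - δ^2) * (1 - tS δ u) := by
  have hb := beta_pos h0 h1
  have hV := tV_pos h0 h1 hu
  have : 0 < tV δ u ^ 2 + (1 - δ^2) := by positivity
  rw [one_sub_tS h0 h1 hu]
  unfold tN; field_simp; ring

lemma te_nonneg (h0 : 0 ≤ δ) (h1 : δ < 1) (hu : u ∈ Ioo 0 π) :
    0 ≤ (4 * δ * tp δ u - 3 * tp δ u ^ 2) / (1 - δ^2) := by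
  have hb := beta_pos h0 h1
  have hp := tp_nonneg h0 h1 hu
  have hp2 := tp_le h0 h1 hu
  refine div_nonneg ?_ hb.le
  nlinarith

lemma tN_ge (h0 : 0 ≤ δ) (h1 : δ < 1) (hu : u ∈ Ioo 0 π) : 1 ≤ tN δ u * (1 - tS δ u) := by
  rw [tN_mul h0 h1 hu]
  have := mul_nonneg (te_nonneg h0 h1 hu) (sub_pos.2 (tS_lt h0 h1 hu)).le
  linarith

lemma tN_one_lt (h0 : 0 ≤ δ) (h1 : δ < 1) (hu : u ∈ Ioo 0 π) : 1 < tN δ u := by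
  have hs := tS_pos h0 h1 hu
  have hs1 := tS_lt h0 h1 hu
  have h := tN_ge h0 h1 hu
  by_contra hc
  push Not at hc
  nlinarith

lemma te_eq (h0 : 0 ≤ δ) (h1 : δ < 1) (hu : u ∈ Ioo 0 π) :
    (4 * δ * tp δ u - 3 * tp δ u ^ 2) / (1 - δ^2) = tM δ * (1 - tz δ u ^ 2) := by
  have hb := beta_pos h0 h1
  rcases eq_or_lt_of_le h0 with h | h
  · have hp := tp_nonneg h0 h1 hu
    have hp2 := tp_le h0 h1 hu
    have : tp δ u = 0 := by rw [← h] at hp2 hp ⊢; linarith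
    rw [this, ← h]; simp [tM]
  · unfold tM tz
    field_simp
    ring

lemma tN_mul' (h0 : 0 ≤ δ) (h1 : δ < 1) (hu : u ∈ Ioo 0 π) :
    tN δ u * (1 - tS δ u) = eX (tM δ) (tS δ u) (tz δ u) := by
  rw [tN_mul h0 h1 hu, te_eq h0 h1 hu]; rfl

lemma tNZ_mul (h0 : 0 ≤ δ) (h1 : δ < 1) (hu : u ∈ Ioo 0 π) :
    tNZ δ u * (1 - tS δ u)^2 = - (2 * tS δ u * eX (tM δ) (tS δ u) (tz δ u)
      + eTh (tM δ) (tS δ u) (tz δ u)) := by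
  have hb := beta_pos h0 h1
  have hV := tV_pos h0 h1 hu
  have hV2 : 0 < tV δ u ^ 2 + (1 - δ^2) := by positivity
  rcases eq_or_lt_of_le h0 with h | h
  · have hp := tp_nonneg h0 h1 hu
    have hp2 := tp_le h0 h1 hu
    have hp3 : tp δ u = 0 := by rw [← h] at hp2 hp ⊢; linarith
    have hM : tM δ = 0 := by rw [← h]; simp [tM]
    have hpz : tpZ δ u = 0 := by unfold tpZ; rw [hp3, ← h]; ring
    rw [hM]
    unfold tNZ
    rw [hpz]
    unfold eX eTh
    rw [one_sub_tS h0 h1 hu]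
    unfold tN tS
    rw [hp3, ← h]
    rw [← h] at hV2
    field_simp
    ring
  · have hs : tV δ u ^ 2 = (1 - δ^2) * tS δ u / (1 - tS δ u) := by
      rw [one_sub_tS h0 h1 hu]; unfold tS; field_simp
    have hs1 : 0 < 1 - tS δ u := sub_pos.2 (tS_lt h0 h1 hu)
    have hp : tp δ u = 2 * δ / 3 * (1 - tz δ u) := by unfold tz; field_simp; ring
    have hM : tM δ = 4 * δ^2 / (3 * (1 - δ^2)) := rfl
    unfold tNZ tN tpZ eX eTh
    rw [hM, hp, hs]
    generalize tS δ u = s at *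
    generalize tz δ u = z at *
    field_simp
    ring

lemma tS_deriv (h0 : 0 ≤ δ) (h1 : δ < 1) (hu : u ∈ Ioo 0 π) :
    HasDerivAt (tS δ) (-2 * tS δ u * (tN δ u * (1 - tS δ u)) * tH δ u) u := by
  have hb := beta_pos h0 h1
  have hV := tV_pos h0 h1 hu
  have hV2 : 0 < tV δ u ^ 2 + (1 - δ^2) := by positivity
  have e := ((tV_deriv h0 h1 hu).pow 2).div (((tV_deriv h0 h1 hu).pow 2).add_const (1 - δ^2)) hV2.ne'
  refine e.congr_deriv ?_
  rw [one_sub_tS h0 h1 hu]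
  unfold tS tH
  simp only [Pi.pow_apply]
  field_simp
  push_cast
  ring

lemma tS_tendsto (h0 : 0 ≤ δ) (h1 : δ < 1) : Tendsto (tS δ) (𝓝[>] 0) (𝓝 1) := by
  have hb := beta_pos h0 h1
  have hH := tH_tendsto h0 h1
  have h3 : Tendsto (fun u => (1 - δ^2) / ((1 - δ^2) + 4 * tH δ u ^2)) (𝓝[>] 0)
      (𝓝 ((1 - δ^2) / ((1 - δ^2) + 4 * 0 ^ 2))) := by
    refine tendsto_const_nhds.div (((hH.pow 2).const_mul 4).const_add _) ?_
    simp; exact hb.ne'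
  have e : (1 - δ^2) / ((1 - δ^2) + 4 * 0 ^ 2) = 1 := by field_simp; ring
  rw [e] at h3
  refine h3.congr' ?_
  filter_upwards [Ioo_mem_nhdsGT pi_pos] with u hu
  have hV := tV_pos h0 h1 hu
  have hV2 : 0 < tV δ u ^ 2 + (1 - δ^2) := by positivity
  unfold tS tH
  have : (1 - δ^2) + 4 * ((1 - δ^2) / (2 * tV δ u))^2 = (1 - δ^2) * (tV δ u ^ 2 + (1 - δ^2)) / tV δ u ^ 2 := by
    field_simp
    ring
  rw [this]
  field_simp

variable {Z : ℝ → ℝ}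

lemma Z_nonneg (h0 : 0 ≤ δ) (h1 : δ < 1) (hZ : ∀ u ∈ Ioo 0 π, HasDerivAt Z (tH δ u) u)
    (hZ0 : Tendsto Z (𝓝[>] 0) (𝓝 0)) (hu : u ∈ Ioo 0 π) : 0 ≤ Z u :=
  ge_of_hasDerivAt_nonneg hZ (fun _ hu => (tH_pos h0 h1 hu).le) hZ0 u hu

lemma Z_le (h0 : 0 ≤ δ) (h1 : δ < 1) (hZ : ∀ u ∈ Ioo 0 π, HasDerivAt Z (tH δ u) u)
    (hZ0 : Tendsto Z (𝓝[>] 0) (𝓝 0)) (hu : u ∈ Ioo 0 π) : Z u ≤ u * tH δ u := by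
  have := ge_of_hasDerivAt_nonneg (f := fun u => u * tH δ u - Z u)
    (f' := fun u => u * (tN δ u * tH δ u ^ 2)) (l := 0) (b := π) ?_ ?_ ?_ u hu
  · linarith
  · intro u hu
    refine (((hasDerivAt_id u).mul (tH_deriv h0 h1 hu)).sub (hZ u hu)).congr_deriv ?_
    simp
  · intro u hu
    have := hu.1
    have := tN_one_lt h0 h1 hu
    positivity
  · have hi : Tendsto (fun u : ℝ => u) (𝓝[>] 0) (𝓝 0) := tendsto_id.mono_left nhdsWithin_le_nhds
    have := (hi.mul (tH_tendsto h0 h1)).sub hZ0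
    simpa using this

lemma tS_le_exp (h0 : 0 ≤ δ) (h1 : δ < 1) (hZ : ∀ u ∈ Ioo 0 π, HasDerivAt Z (tH δ u) u)
    (hZ0 : Tendsto Z (𝓝[>] 0) (𝓝 0)) (hu : u ∈ Ioo 0 π) : tS δ u ≤ exp (-2 * Z u) := by
  have := le_of_hasDerivAt_nonpos (f := fun u => tS δ u * exp (2 * Z u))
    (f' := fun u => -2 * (tS δ u * tH δ u * exp (2 * Z u)) * (tN δ u * (1 - tS δ u) - 1))
    (l := 1) (b := π) ?_ ?_ ?_ u hu
  · have e : exp (-2 * Z u) = (exp (2 * Z u))⁻¹ := by rw [← exp_neg]; ring_nf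
    rw [e, ← one_div, le_div_iff₀ (exp_pos _)]; exact this
  · intro u hu
    refine ((tS_deriv h0 h1 hu).mul ((hZ u hu).const_mul 2).exp).congr_deriv ?_
    ring
  · intro u hu
    have a1 := tN_ge h0 h1 hu
    have a2 := tS_pos h0 h1 hu
    have a3 := tH_pos h0 h1 hu
    have : 0 ≤ (tS δ u * tH δ u * exp (2 * Z u)) * (tN δ u * (1 - tS δ u) - 1) :=
      mul_nonneg (by positivity) (by linarith)
    linarith
  · have := (tS_tendsto h0 h1).mul (hZ0.const_mul 2).rexp
    simpa using this

lemma exp_le_T (h0 : 0 ≤ δ) (h1 : δ < 1) (hZ : ∀ u ∈ Ioo 0 π, HasDerivAt Z (tH δ u) u)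
    (hZ0 : Tendsto Z (𝓝[>] 0) (𝓝 0)) (hu : u ∈ Ioo 0 π) :
    exp (-2 * Z u) ≤ 1 - 1 / tN δ u := by
  have := ge_of_hasDerivAt_nonneg (f := fun u => (1 - 1 / tN δ u) * exp (2 * Z u))
    (f' := fun u => (tNZ δ u + 2 * tN δ u * (tN δ u - 1)) / tN δ u ^ 2 * tH δ u * exp (2 * Z u))
    (l := 1) (b := π) ?_ ?_ ?_ u hu
  · have e : exp (-2 * Z u) = (exp (2 * Z u))⁻¹ := by rw [← exp_neg]; ring_nf
    rw [e, ← one_div, div_le_iff₀ (exp_pos _)]; exact this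
  · intro u hu
    have hN := tN_one_lt h0 h1 hu
    have hN0 : tN δ u ≠ 0 := by linarith
    refine (((hasDerivAt_const u 1).sub ((hasDerivAt_const u 1).div (tN_deriv h0 h1 hu) hN0)).mul
      ((hZ u hu).const_mul 2).exp).congr_deriv ?_
    simp only [Pi.sub_apply, Pi.div_apply]
    field_simp
    ring
  · intro u hu
    have a1 := claimL h0 h1 hu
    have a3 := tH_pos h0 h1 hu
    have hN := tN_one_lt h0 h1 hu
    positivity
  · have hT : Tendsto (fun u => 1 - 1 / tN δ u) (𝓝[>] 0) (𝓝 1) := by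
      refine tendsto_of_tendsto_of_tendsto_of_le_of_le' (tS_tendsto h0 h1) tendsto_const_nhds ?_ ?_
      · filter_upwards [Ioo_mem_nhdsGT pi_pos] with u hu
        have hN := tN_one_lt h0 h1 hu
        have := tN_ge h0 h1 hu
        have : 1 / tN δ u ≤ 1 - tS δ u := by
          rw [div_le_iff₀ (by linarith)]; linarith
        linarith
      · filter_upwards [Ioo_mem_nhdsGT pi_pos] with u hu
        have hN := tN_one_lt h0 h1 hu
        have : 0 < 1 / tN δ u := by positivity
        linarith
    have := hT.mul (hZ0.const_mul 2).rexp
    simpa using this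

set_option maxHeartbeats 1000000 in
/-- Bounds and the pointwise inequality used for `α ≥ 1/2`. -/
lemma pointwise (h0 : 0 ≤ δ) (h1 : δ ≤ 3/5) (hZ : ∀ u ∈ Ioo 0 π, HasDerivAt Z (tH δ u) u)
    (hZ0 : Tendsto Z (𝓝[>] 0) (𝓝 0)) (hu : u ∈ Ioo 0 π) {r : ℝ} (hr1 : 1 ≤ r) (hr2 : r ≤ 5/2) :
    ((1 - exp (-(2*r) * Z u)) * tN δ u - 2)^2 ≤ (1 - exp (-(2*r) * Z u)) * tN δ u
      + (1 - exp (-(2*r) * Z u)) * (2 * r * exp (-(2*r) * Z u) * tN δ u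
        + (1 - exp (-(2*r) * Z u)) * tNZ δ u) ∧
    0 ≤ (1 - exp (-(2*r) * Z u)) * tN δ u ∧ (1 - exp (-(2*r) * Z u)) * tN δ u ≤ 5 := by
  have hd1 : δ < 1 := by linarith
  have hb := beta_pos h0 hd1
  have hN := tN_one_lt h0 hd1 hu
  have hs0 := tS_pos h0 hd1 hu
  have hs1 := tS_lt h0 hd1 hu
  have hZn := Z_nonneg h0 hd1 hZ hZ0 hu
  have hE1 : exp (-(2*r) * Z u) ≤ exp (-2 * Z u) := exp_le_exp.2 (by nlinarith)
  have hE2 : exp (-(2*r) * Z u) = exp (-2 * Z u) ^ r := by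
    rw [← exp_mul]; ring_nf
  have hT := exp_le_T h0 hd1 hZ hZ0 hu
  have hS := tS_le_exp h0 hd1 hZ hZ0 hu
  have hE3 : tS δ u ^ r ≤ exp (-(2*r) * Z u) := by
    rw [hE2]; exact rpow_le_rpow hs0.le hS (by linarith)
  have hM0 : 0 ≤ tM δ := by unfold tM; positivity
  have hM1 : tM δ ≤ 3/4 := by
    unfold tM; rw [div_le_iff₀ (by positivity)]; nlinarith
  have hp := tp_nonneg h0 hd1 hu
  have hp2 := tp_le h0 hd1 hu
  have hz1 : tz δ u ≤ 1 := by
    unfold tz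
    have : 0 ≤ 3 * tp δ u / (2 * δ) := by positivity
    linarith
  have hz0 : 0 ≤ tz δ u := by
    unfold tz
    have : 3 * tp δ u / (2 * δ) ≤ 1 := div_le_one_of_le₀ (by linarith) (by linarith)
    linarith
  have hX := tN_mul' h0 hd1 hu
  have hΘ := tNZ_mul h0 hd1 hu
  set E := exp (-(2*r) * Z u) with hE
  set N := tN δ u with hNdef
  set X := eX (tM δ) (tS δ u) (tz δ u) with hXdef
  have hB : 1 ≤ (1 - E) * N := by
    have : 1 / N ≤ 1 - E := by linarith
    rwa [div_le_iff₀ (by linarith)] at this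
  have hB1 : (1 - E) * N * (1 - tS δ u) ≤ (1 - tS δ u ^ r) * X := by
    rw [mul_assoc, hX]
    have hXp : 0 ≤ X := by rw [← hX]; exact mul_nonneg (by linarith) (by linarith)
    exact mul_le_mul_of_nonneg_right (by linarith) hXp
  have hL := claimL h0 hd1 hu
  have hA : (1 + 2 * r / N - tNZ δ u / N^2) * X^2 = X^2 + (2 * tS δ u + 2 * r * (1 - tS δ u)) * X
      + eTh (tM δ) (tS δ u) (tz δ u) := by
    have e1 : (2 * r / N) * X^2 = 2 * r * (1 - tS δ u) * X := by
      rw [← hX]; field_simp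
    have e2 : tNZ δ u / N^2 * X^2 = tNZ δ u * (1 - tS δ u)^2 := by
      rw [← hX]; field_simp
    rw [sub_mul, add_mul, e1, e2, hΘ]
    ring
  have hA1 : 1 + 2 * r / N - tNZ δ u / N^2 ≤ 2 * r + 1 := by
    have e1 : 1 + 2 * r / N - tNZ δ u / N^2 = 2 * r + 1 - ((tNZ δ u + 2 * N * (N - 1)) + (2 * r - 2) * (N * (N-1))) / N^2 := by
      field_simp; ring
    rw [e1]
    have : 0 ≤ (tNZ δ u + 2 * N * (N - 1)) + (2 * r - 2) * (N * (N-1)) :=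
      add_nonneg hL (mul_nonneg (by linarith) (mul_nonneg (by linarith) (by linarith)))
    have : 0 ≤ ((tNZ δ u + 2 * N * (N - 1)) + (2 * r - 2) * (N * (N-1))) / N^2 := by positivity
    linarith
  have hf := final_ineq hM0 hM1 hs0 hs1 hz0 hz1 hr1 hr2 hA hA1 hB hB1
  refine ⟨?_, by linarith, ?_⟩
  · have e : ((1 - E) * N - 2)^2 - ((1 - E) * N + (1 - E) * (2 * r * E * N + (1 - E) * tNZ δ u)) =
      (1 + 2 * r / N - tNZ δ u / N^2) * ((1 - E) * N)^2 - (5 + 2*r) * ((1 - E) * N) + 4 := by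
      field_simp; ring
    linarith
  · have hXle : X ≤ 7/4 := by
      rw [hXdef]; unfold eX
      have a1 : tM δ * (1 - tz δ u ^ 2) ≤ 3/4 * 1 := by
        exact mul_le_mul hM1 (by nlinarith) (by nlinarith) (by norm_num)
      have a2 : tM δ * (1 - tz δ u ^ 2) * (1 - tS δ u) ≤ 3/4 * 1 * 1 := by
        exact mul_le_mul a1 (by linarith) (by linarith) (by norm_num)
      linarith
    have hbern : 1 - r * (1 - tS δ u) ≤ tS δ u ^ r := by
      have := one_add_mul_self_le_rpow_one_add (s := tS δ u - 1) (by linarith) hr1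
      rw [add_sub_cancel] at this
      linarith
    have : (1 - E) * N * (1 - tS δ u) ≤ 5 * (1 - tS δ u) := by
      have h8 : r * (1 - tS δ u) ≤ 5/2 * (1 - tS δ u) :=
        mul_le_mul_of_nonneg_right hr2 (by linarith)
      have h7 : (1 - tS δ u ^ r) ≤ 5/2 * (1 - tS δ u) := by linarith
      have hX1 : 0 ≤ X := by rw [← hX]; exact mul_nonneg (by linarith) (by linarith)
      have h9 : (1 - tS δ u ^ r) * X ≤ 5/2 * (1 - tS δ u) * (7/4) :=
        mul_le_mul h7 hXle hX1 (by linarith)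
      linarith
    exact le_of_mul_le_mul_right this (by linarith)

end ptw

open Real Set Filter Topology

noncomputable section

def wH (α u : ℝ) : ℝ := α * log (sin (α * u)) + (1 - α) * log (sin ((1 - α) * u)) - log (sin u)
def wH0 (α : ℝ) : ℝ := α * log α + (1 - α) * log (1 - α)
def wa (α u : ℝ) : ℝ := exp (wH α u / (1 - α))
def wa0 (α : ℝ) : ℝ := exp (wH0 α / (1 - α))
def wd (α : ℝ) : ℝ := |1 - 2 * α|

end

section waSec

variable {α u : ℝ}

lemma wd_nonneg : 0 ≤ wd α := abs_nonneg _

lemma wd_lt (h0 : 0 < α) (h1 : α < 1) : wd α < 1 := by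
  unfold wd; rw [abs_lt]; constructor <;> linarith

lemma tH_neg (d u : ℝ) : tH (-d) u = tH d u := by
  have hC : tC (-d) u = tC d u := by unfold tC; rw [neg_mul, cos_neg]
  have hD : tD (-d) u = - tD d u := by unfold tD; rw [hC, neg_mul, sin_neg]; ring
  unfold tH tV tW
  rw [hC, hD]; simp

lemma tH_wd (α u : ℝ) : tH (wd α) u = tH (1 - 2 * α) u := by
  unfold wd
  rcases abs_choice (1 - 2 * α) with h | h
  · rw [h]
  · rw [h, tH_neg]

lemma mul_mem (h0 : 0 < α) (h1 : α < 1) (hu : u ∈ Ioo 0 π) : α * u ∈ Ioo 0 π :=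
  ⟨mul_pos h0 hu.1, by nlinarith [hu.1, hu.2]⟩

lemma wH_deriv (h0 : 0 < α) (h1 : α < 1) (hu : u ∈ Ioo 0 π) :
    HasDerivAt (wH α) (tH (wd α) u) u := by
  have hA := sin_pos_of_mem_Ioo (mul_mem h0 h1 hu)
  have hG := sin_pos_of_mem_Ioo (mul_mem (sub_pos.2 h1) (by linarith : 1 - α < 1) hu)
  have hs := sin_pos_of_mem_Ioo hu
  have e1 : HasDerivAt (fun u => sin (α * u)) (cos (α * u) * (α * 1)) u :=
    ((hasDerivAt_id u).const_mul α).sin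
  have e2 : HasDerivAt (fun u => sin ((1 - α) * u)) (cos ((1 - α) * u) * ((1 - α) * 1)) u :=
    ((hasDerivAt_id u).const_mul (1 - α)).sin
  have e := (((e1.log hA.ne').const_mul α).add ((e2.log hG.ne').const_mul (1 - α))).sub
    ((hasDerivAt_sin u).log hs.ne')
  refine e.congr_deriv ?_
  rw [tH_wd]
  have k1 : sin u = sin (α * u) * cos ((1 - α) * u) + cos (α * u) * sin ((1 - α) * u) := by
    rw [← sin_add]; ring_nf
  have k2 : cos u = cos (α * u) * cos ((1 - α) * u) - sin (α * u) * sin ((1 - α) * u) := by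
    rw [← cos_add]; ring_nf
  have k3 : sin ((1 - 2 * α) * u) = sin ((1 - α) * u) * cos (α * u) - cos ((1 - α) * u) * sin (α * u) := by
    rw [← sin_sub]; ring_nf
  have k4 : cos ((1 - 2 * α) * u) = cos ((1 - α) * u) * cos (α * u) + sin ((1 - α) * u) * sin (α * u) := by
    rw [← cos_sub]; ring_nf
  have hC : tC (1 - 2 * α) u = 2 * sin (α * u) * sin ((1 - α) * u) := by
    unfold tC; rw [k4, k2]; ring
  have hb : (1 - (1 - 2 * α)^2) ≠ 0 := by
    have : 0 < α * (1 - α) := mul_pos h0 (by linarith)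
    nlinarith
  have hT : tH (1 - 2 * α) u = (1 + tD (1 - 2 * α) u ^ 2) * (sin (α * u) * sin ((1 - α) * u)) / sin u := by
    unfold tH tV tW
    rw [hC]
    field_simp
  have hD : tD (1 - 2 * α) u = (α * cos (α * u) * sin ((1 - α) * u) - (1 - α) * cos ((1 - α) * u) * sin (α * u)) / (sin (α * u) * sin ((1 - α) * u)) := by
    unfold tD
    rw [hC, k3, k1]
    field_simp
    ring
  rw [hT, hD, k2]
  rw [k1] at hs ⊢
  generalize sin (α * u) = x at *
  generalize sin ((1 - α) * u) = y at *
  generalize cos (α * u) = X at *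
  generalize cos ((1 - α) * u) = Y at *
  have hs' := hs.ne'
  field_simp
  ring

lemma log_sin_tendsto {k : ℝ} (hk : 0 < k) :
    Tendsto (fun u => log (sin (k * u)) - log u) (𝓝[>] 0) (𝓝 (log k)) := by
  have h1 : Tendsto (fun u => sin (k * u) / u) (𝓝[>] 0) (𝓝 k) := by
    have e1 : HasDerivAt (fun u => sin (k * u)) (cos (k * 0) * (k * 1)) 0 :=
      ((hasDerivAt_id (0:ℝ)).const_mul k).sin
    have h := e1.tendsto_slope_zero_right
    simp only [mul_zero, cos_zero, zero_add, sin_zero, sub_zero, mul_one, one_mul, smul_eq_mul] at h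
    refine h.congr fun u => ?_
    rw [div_eq_inv_mul]
  have h2 := h1.log hk.ne'
  refine h2.congr' ?_
  filter_upwards [Ioo_mem_nhdsGT (div_pos pi_pos hk)] with u hu
  have hu0 := hu.1
  have : k * u < π := by have := hu.2; rw [lt_div_iff₀ hk] at this; linarith
  have hs : 0 < sin (k * u) := sin_pos_of_mem_Ioo ⟨by positivity, this⟩
  rw [log_div hs.ne' hu0.ne']

lemma wH_tendsto (h0 : 0 < α) (h1 : α < 1) : Tendsto (wH α) (𝓝[>] 0) (𝓝 (wH0 α)) := by
  have h := (((log_sin_tendsto h0).const_mul α).add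
    ((log_sin_tendsto (sub_pos.2 h1)).const_mul (1 - α))).sub (log_sin_tendsto one_pos)
  rw [log_one, sub_zero] at h
  refine h.congr fun u => ?_
  unfold wH
  rw [one_mul]
  ring

lemma wZ_deriv (h0 : 0 < α) (h1 : α < 1) (u) (hu : u ∈ Ioo 0 π) :
    HasDerivAt (fun u => wH α u - wH0 α) (tH (wd α) u) u := (wH_deriv h0 h1 hu).sub_const _

lemma wZ_tendsto (h0 : 0 < α) (h1 : α < 1) :
    Tendsto (fun u => wH α u - wH0 α) (𝓝[>] 0) (𝓝 0) := by
  simpa using (wH_tendsto h0 h1).sub_const (wH0 α)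

lemma wH_atTop (h0 : 0 < α) (h1 : α < 1) : Tendsto (wH α) (𝓝[<] π) atTop := by
  have a1 : 0 < sin (α * π) := sin_pos_of_mem_Ioo ⟨by positivity, by nlinarith [pi_pos]⟩
  have a2 : 0 < sin ((1 - α) * π) :=
    sin_pos_of_mem_Ioo ⟨mul_pos (by linarith) pi_pos, by nlinarith [pi_pos]⟩
  have c1 : ContinuousAt (fun u => α * log (sin (α * u)) + (1 - α) * log (sin ((1 - α) * u))) π := by
    refine ContinuousAt.add (continuousAt_const.mul (ContinuousAt.log (by fun_prop) a1.ne'))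
      (continuousAt_const.mul (ContinuousAt.log (by fun_prop) a2.ne'))
  have c2 : Tendsto (fun u => log (sin u)) (𝓝[<] π) atBot := by
    refine tendsto_log_nhdsGT_zero.comp ?_
    rw [tendsto_nhdsWithin_iff]
    constructor
    · have := continuous_sin.tendsto π
      rw [sin_pi] at this
      exact this.mono_left nhdsWithin_le_nhds
    · filter_upwards [Ioo_mem_nhdsLT pi_pos] with u hu using sin_pos_of_mem_Ioo hu
  have c3 : Tendsto (fun u => - log (sin u)) (𝓝[<] π) atTop := tendsto_neg_atBot_atTop.comp c2
  have := (c1.tendsto.mono_left (nhdsWithin_le_nhds (s := Iio π))).add_atTop c3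
  exact this

lemma wa_pos : 0 < wa α u := exp_pos _
lemma wa0_pos : 0 < wa0 α := exp_pos _

lemma wa_deriv (h0 : 0 < α) (h1 : α < 1) (hu : u ∈ Ioo 0 π) :
    HasDerivAt (wa α) (wa α u * (tH (wd α) u / (1 - α))) u :=
  ((wH_deriv h0 h1 hu).div_const _).exp

lemma wa_tendsto (h0 : 0 < α) (h1 : α < 1) : Tendsto (wa α) (𝓝[>] 0) (𝓝 (wa0 α)) :=
  ((wH_tendsto h0 h1).div_const _).rexp

lemma wa_atTop (h0 : 0 < α) (h1 : α < 1) : Tendsto (wa α) (𝓝[<] π) atTop :=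
  tendsto_exp_atTop.comp ((wH_atTop h0 h1).atTop_div_const (by linarith))

lemma wa_mono (h0 : 0 < α) (h1 : α < 1) : MonotoneOn (wa α) (Ioo 0 π) :=
  monoOn_Ioo_of_hasDerivAt (fun _ hu => wa_deriv h0 h1 hu) fun u hu => by
    have := tH_pos wd_nonneg (wd_lt h0 h1) hu
    have := wa_pos (α := α) (u := u)
    have : 0 < 1 - α := by linarith
    positivity

lemma wa_ge (h0 : 0 < α) (h1 : α < 1) (hu : u ∈ Ioo 0 π) : wa0 α ≤ wa α u :=
  ge_of_hasDerivAt_nonneg (fun _ hu => wa_deriv h0 h1 hu) (fun u hu => by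
    have := tH_pos wd_nonneg (wd_lt h0 h1) hu
    have := wa_pos (α := α) (u := u)
    have : 0 < 1 - α := by linarith
    positivity) (wa_tendsto h0 h1) u hu

lemma wa_cont (h0 : 0 < α) (h1 : α < 1) : ContinuousOn (wa α) (Ioo 0 π) :=
  fun _ hu => (wa_deriv h0 h1 hu).continuousAt.continuousWithinAt

end waSec

open Real Set Filter Topology MeasureTheory

/-- If φ is at most minus the derivative of Ψ on `(0, b)` with `Ψ` vanishing at both ends, then `∫ φ ≤ 0`. -/
lemma integral_nonpos_of_deriv {b : ℝ} (hb : 0 < b) {Ψ Ψ' φ : ℝ → ℝ}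
    (hd : ∀ u ∈ Ioo 0 b, HasDerivAt Ψ (Ψ' u) u) (hφ : IntegrableOn φ (Ioo 0 b))
    (hle : ∀ u ∈ Ioo 0 b, φ u ≤ - Ψ' u)
    (h0 : Tendsto Ψ (𝓝[>] 0) (𝓝 0)) (h1 : Tendsto Ψ (𝓝[<] b) (𝓝 0)) :
    ∫ u in Ioo 0 b, φ u ≤ 0 := by
  classical
  set F : ℝ → ℝ := Function.update (Function.update (fun u => - Ψ u) 0 0) b 0 with hF
  have Fderiv : ∀ x ∈ Ioo 0 b, HasDerivAt F (-Ψ' x) x := by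
    refine fun x hx => (hd x hx).neg.congr_of_eventuallyEq ?_
    filter_upwards [Ioo_mem_nhds hx.1 hx.2] with _ hy
    unfold F
    rw [Function.update_of_ne hy.2.ne, Function.update_of_ne hy.1.ne']
    rfl
  have h0' : Tendsto (fun u => - Ψ u) (𝓝[>] 0) (𝓝 0) := by simpa using h0.neg
  have h1' : Tendsto (fun u => - Ψ u) (𝓝[<] b) (𝓝 0) := by simpa using h1.neg
  have hcont : ContinuousOn F (Icc 0 b) := by
    rw [continuousOn_update_iff, continuousOn_update_iff, Icc_sdiff_right, Ico_sdiff_left]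
    refine ⟨⟨fun z hz => (hd z hz).neg.continuousAt.continuousWithinAt, ?_⟩, ?_⟩
    · exact fun _ => h0'.mono_left (nhdsWithin_mono _ Ioo_subset_Ioi_self)
    · rintro -
      refine (h1'.congr' ?_).mono_left (nhdsWithin_mono _ Ico_subset_Iio_self)
      filter_upwards [Ioo_mem_nhdsLT hb] with z hz
      rw [Function.update_of_ne hz.1.ne']
  have := intervalIntegral.integral_le_sub_of_hasDeriv_right_of_le hb.le hcont
    (fun x hx => (Fderiv x hx).hasDerivWithinAt) (φ := φ)
    (by rwa [integrableOn_Icc_iff_integrableOn_Ioo]) hle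
  rw [intervalIntegral.integral_of_le hb.le, integral_Ioc_eq_integral_Ioo] at this
  simpa [F, hb.ne, hb.ne'] using this

lemma pow_exp_bound {w : ℝ} (hw : 0 < w) (k : ℕ) {x : ℝ} (hx : 0 ≤ x) :
    x ^ k * exp (-(x * w)) ≤ k.factorial / w ^ k := by
  have h := Real.pow_div_factorial_le_exp (x * w) (by positivity) k
  rw [exp_neg, le_div_iff₀ (by positivity), ← div_eq_mul_inv, div_mul_eq_mul_div,
    div_le_iff₀ (exp_pos _)]
  rw [div_le_iff₀ (by positivity), mul_pow] at h
  linarith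

noncomputable def wG (α : ℝ) (k : ℕ) (w : ℝ) : ℝ :=
  ∫ u in Ioo 0 π, wa α u ^ k * exp (-(wa α u * w))

section G
variable {α w : ℝ}

lemma wG_integrable (h0 : 0 < α) (h1 : α < 1) (hw : 0 < w) (k : ℕ) :
    IntegrableOn (fun u => wa α u ^ k * exp (-(wa α u * w))) (Ioo 0 π) := by
  have hc := wa_cont h0 h1
  have hm : AEStronglyMeasurable (fun u => wa α u ^ k * exp (-(wa α u * w)))
      (volume.restrict (Ioo 0 π)) := by
    apply ContinuousOn.aestronglyMeasurable _ measurableSet_Ioo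
    exact (hc.pow k).mul (hc.mul continuousOn_const).neg.rexp
  refine Integrable.of_bound hm (k.factorial / w ^ k) ?_
  refine Eventually.of_forall fun u => ?_
  have := pow_exp_bound hw k (wa_pos (α := α) (u := u)).le
  rw [norm_of_nonneg (by have := wa_pos (α := α) (u := u); positivity)]
  exact this

lemma wG_pos (h0 : 0 < α) (h1 : α < 1) (hw : 0 < w) (k : ℕ) : 0 < wG α k w := by
  unfold wG
  rw [setIntegral_pos_iff_support_of_nonneg_ae]
  · have : Function.support (fun u => wa α u ^ k * exp (-(wa α u * w))) = univ := by
      rw [Function.support_eq_univ]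
      intro u
      have := wa_pos (α := α) (u := u)
      positivity
    rw [this]; simp [pi_pos]
  · exact Eventually.of_forall fun u => by
      have := wa_pos (α := α) (u := u)
      simp only [Pi.zero_apply]
      positivity
  · exact wG_integrable h0 h1 hw k

lemma wG_deriv (h0 : 0 < α) (h1 : α < 1) (hw : 0 < w) (k : ℕ) :
    HasDerivAt (wG α k) (- wG α (k+1) w) w := by
  have hc := wa_cont h0 h1
  have := hasDerivAt_integral_of_dominated_loc_of_deriv_le (μ := volume.restrict (Ioo 0 π))
    (F := fun w u => wa α u ^ k * exp (-(wa α u * w)))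
    (F' := fun w u => - (wa α u ^ (k+1) * exp (-(wa α u * w)))) (x₀ := w)
    (s := Ioi (w/2)) (bound := fun _ => (k+1).factorial / (w/2) ^ (k+1))
    (Ioi_mem_nhds (by linarith)) ?_ ?_ ?_ ?_ ?_ ?_
  · have h2 := this.2
    rw [integral_neg] at h2
    exact h2
  · refine Eventually.of_forall fun x => ?_
    apply ContinuousOn.aestronglyMeasurable _ measurableSet_Ioo
    exact (hc.pow k).mul (hc.mul continuousOn_const).neg.rexp
  · exact wG_integrable h0 h1 hw k
  · exact (wG_integrable h0 h1 hw (k+1)).neg.aestronglyMeasurable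
  · refine Eventually.of_forall fun u x hx => ?_
    have ha := wa_pos (α := α) (u := u)
    rw [norm_neg, norm_of_nonneg (by positivity)]
    have := pow_exp_bound (half_pos hw) (k+1) ha.le
    refine le_trans ?_ this
    have hx : w/2 < x := hx
    gcongr
  · exact integrable_const _
  · refine Eventually.of_forall fun u x hx => ?_
    have e := ((((hasDerivAt_id x).const_mul (wa α u)).neg.exp).const_mul (wa α u ^ k))
    refine e.congr_deriv ?_
    simp
    ring

lemma end_tendsto (h0 : 0 < α) (h1 : α < 1) (hw : 0 < w) {Ψ : ℝ → ℝ} {K : ℝ}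
    (hΨ : ∀ u ∈ Ioo 0 π, |Ψ u| ≤ u * (wa α u * exp (-(wa α u * w)) * (wa α u * w + K))) :
    Tendsto Ψ (𝓝[>] 0) (𝓝 0) ∧ Tendsto Ψ (𝓝[<] π) (𝓝 0) := by
  have ha0 := wa_tendsto h0 h1
  have ha1 := wa_atTop h0 h1
  constructor
  · refine squeeze_zero_norm' (a := fun u => u * (wa α u * exp (-(wa α u * w)) * (wa α u * w + K))) ?_ ?_
    · filter_upwards [Ioo_mem_nhdsGT pi_pos] with u hu using hΨ u hu
    · have hi : Tendsto (fun u : ℝ => u) (𝓝[>] 0) (𝓝 0) := tendsto_id.mono_left nhdsWithin_le_nhds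
      have := hi.mul ((ha0.mul (ha0.mul_const w).neg.rexp).mul ((ha0.mul_const w).add_const K))
      rwa [zero_mul] at this
  · refine squeeze_zero_norm' (a := fun u => u * (wa α u * exp (-(wa α u * w)) * (wa α u * w + K))) ?_ ?_
    · filter_upwards [Ioo_mem_nhdsLT pi_pos] with u hu using hΨ u hu
    · have hi : Tendsto (fun u : ℝ => u) (𝓝[<] π) (𝓝 π) := tendsto_id.mono_left nhdsWithin_le_nhds
      have hm : Tendsto (fun u => wa α u * w) (𝓝[<] π) atTop := ha1.atTop_mul_const hw
      have l1 := (tendsto_pow_mul_exp_neg_atTop_nhds_zero 1).comp hm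
      have l2 := (tendsto_pow_mul_exp_neg_atTop_nhds_zero 2).comp hm
      have := hi.mul ((l2.add (l1.const_mul K)).const_mul w⁻¹)
      simp only [mul_zero, add_zero] at this
      refine this.congr fun u => ?_
      simp only [Function.comp]
      field_simp

/-- The variance inequality follows from an integral inequality. -/
lemma var_of_integral (h0 : 0 < α) (h1 : α < 1) (hw : 0 < w) (κ : ℝ)
    (h : ∫ u in Ioo 0 π, wa α u * exp (-(wa α u * w)) *
      ((wa α u * w - κ)^2 - α * (wa α u * w) - (1 - α)) ≤ 0) :
    w^2 * wG α 3 w * wG α 1 w ≤ w^2 * wG α 2 w ^ 2 + α * w * wG α 1 w * wG α 2 w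
      + (1 - α) * wG α 1 w ^ 2 := by
  have i1 := wG_integrable h0 h1 hw 1
  have i2 := wG_integrable h0 h1 hw 2
  have i3 := wG_integrable h0 h1 hw 3
  have e : ∫ u in Ioo 0 π, wa α u * exp (-(wa α u * w)) *
      ((wa α u * w - κ)^2 - α * (wa α u * w) - (1 - α)) =
      w^2 * wG α 3 w - (2 * κ + α) * w * wG α 2 w + (κ^2 - (1 - α)) * wG α 1 w := by
    unfold wG
    rw [← integral_const_mul, ← integral_const_mul, ← integral_const_mul, ← integral_sub, ← integral_add]
    · congr 1; ext u; ring
    · exact (i3.const_mul _).sub (i2.const_mul _)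
    · exact i1.const_mul _
    · exact i3.const_mul _
    · exact i2.const_mul _
  rw [e] at h
  have p1 := wG_pos h0 h1 hw 1
  nlinarith [sq_nonneg (w * wG α 2 w - κ * wG α 1 w), mul_nonpos_of_nonpos_of_nonneg h p1.le]

end G

open Real Set Filter Topology MeasureTheory

section H
variable {α w : ℝ}

lemma wE_eq (h1 : α < 1) (u : ℝ) :
    exp (-(1 / (1 - α)) * (wH α u - wH0 α)) * wa α u = wa0 α := by
  unfold wa wa0
  rw [← exp_add]
  congr 1
  have : (1 - α) ≠ 0 := by linarith
  field_simp
  ring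

lemma alg_large {γ e N R a α w : ℝ} (hα2 : α = 1 - γ)
    (hm : 0 ≤ α * (e * (a * w)))
    (p3 : γ ^ 2 * ((1 - e) * N - 2) ^ 2 ≤ γ ^ 2 * ((1 - e) * N + (1 - e) * R)) :
    (a * w - (e * a * w + (1 - 2 * γ))) ^ 2 - α * (a * w) - γ ≤
    -((1 - γ * ((1 - e) * N) - (1 - e) * (a * w)) *
            ((1 - e) * (a * w) - γ * ((1 - e) * N) + (4 * γ - α)) +
          (1 - e) * (a * w) - γ ^ 2 * (1 - e) * R) := by
  subst hα2
  linarith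

lemma var_large (hα : 1/2 ≤ α) (hα' : α ≤ 4/5) (hw : 0 < w) :
    w^2 * wG α 3 w * wG α 1 w ≤ w^2 * wG α 2 w ^ 2 + α * w * wG α 1 w * wG α 2 w
      + (1 - α) * wG α 1 w ^ 2 := by
  have h0 : 0 < α := by linarith
  have h1 : α < 1 := by linarith
  set γ := 1 - α with hγ
  have hγ0 : 0 < γ := by linarith
  have hd35 : wd α ≤ 3/5 := by
    unfold wd; rw [abs_le]; constructor <;> linarith
  have hd0 : 0 ≤ wd α := wd_nonneg
  have hd1 := wd_lt h0 h1
  set Z : ℝ → ℝ := fun u => wH α u - wH0 α with hZ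
  have hZd : ∀ u ∈ Ioo 0 π, HasDerivAt Z (tH (wd α) u) u := fun u hu => wZ_deriv h0 h1 u hu
  have hZt : Tendsto Z (𝓝[>] 0) (𝓝 0) := wZ_tendsto h0 h1
  set E : ℝ → ℝ := fun u => exp (-(1/γ) * Z u) with hE
  have hEa : ∀ u, E u * wa α u = wa0 α := fun u => wE_eq h1 u
  have hpt : ∀ u ∈ Ioo 0 π, ((1 - E u) * tN (wd α) u - 2)^2 ≤ (1 - E u) * tN (wd α) u +
      (1 - E u) * ((1/γ) * E u * tN (wd α) u + (1 - E u) * tNZ (wd α) u) ∧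
      0 ≤ (1 - E u) * tN (wd α) u ∧ (1 - E u) * tN (wd α) u ≤ 5 := by
    intro u hu
    have := pointwise hd0 hd35 hZd hZt hu (r := (1/γ)/2)
      (by rw [div_div, le_div_iff₀ (by positivity)]; linarith)
      (by rw [div_div, div_le_iff₀ (by positivity)]; linarith)
    rw [mul_div_cancel₀ _ (two_ne_zero)] at this
    exact this
  have hEd : ∀ u ∈ Ioo 0 π, HasDerivAt E (E u * (-(1/γ) * tH (wd α) u)) u := fun u hu =>
    ((hZd u hu).const_mul _).exp
  have hE0 : ∀ u ∈ Ioo 0 π, E u ≤ 1 := fun u hu => by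
    have := Z_nonneg hd0 hd1 hZd hZt hu
    simp only [E]
    rw [exp_le_one_iff]
    have : 0 ≤ 1/γ * Z u := by positivity
    linarith
  set C : ℝ := 4 * γ - α with hC
  set Ψ : ℝ → ℝ := fun u => (γ * (1 - E u) / tH (wd α) u) * (wa α u * exp (-(wa α u * w))) *
    ((wa α u * w - wa0 α * w) - γ * ((1 - E u) * tN (wd α) u) + C) with hΨ
  apply var_of_integral h0 h1 hw (wa0 α * w + (1 - 2 * γ))
  have hends : Tendsto Ψ (𝓝[>] 0) (𝓝 0) ∧ Tendsto Ψ (𝓝[<] π) (𝓝 0) := by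
    refine end_tendsto h0 h1 hw (K := 10) fun u hu => ?_
    have hT := tH_pos hd0 hd1 hu
    have ha := wa_pos (α := α) (u := u)
    have ha0 := wa0_pos (α := α)
    have hE1 := hE0 u hu
    have hq : γ * (1 - E u) / tH (wd α) u ≤ u := by
      rw [div_le_iff₀ hT]
      have e1 : 1 - 1/γ * Z u ≤ E u := by
        have := add_one_le_exp (-(1/γ) * Z u)
        simp only [E]; linarith
      have e2 := Z_le hd0 hd1 hZd hZt hu
      have : γ * (1 - E u) ≤ γ * (1/γ * Z u) := by
        apply mul_le_mul_of_nonneg_left _ hγ0.le; linarith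
      have e3 : γ * (1/γ * Z u) = Z u := by field_simp
      linarith
    have hq0 : 0 ≤ γ * (1 - E u) / tH (wd α) u := by
      have : 0 ≤ 1 - E u := by linarith
      positivity
    obtain ⟨-, p1, p2⟩ := hpt u hu
    simp only [Ψ]
    rw [abs_mul, abs_of_nonneg (by positivity), mul_assoc]
    refine mul_le_mul hq ?_ (by positivity) hu.1.le
    apply mul_le_mul_of_nonneg_left _ (by positivity)
    have hge := wa_ge h0 h1 hu
    have m0 : 0 ≤ wa0 α * w := by positivity
    have m1 : wa0 α * w ≤ wa α u * w := by gcongr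
    have b1 : 0 ≤ γ * ((1 - E u) * tN (wd α) u) := by positivity
    have b2 : γ * ((1 - E u) * tN (wd α) u) ≤ 1 * 5 := by gcongr; linarith
    rw [abs_le]; constructor <;> linarith
  refine integral_nonpos_of_deriv pi_pos (Ψ := Ψ) (Ψ' := fun u => wa α u * exp (-(wa α u * w)) *
    ((1 - γ * ((1 - E u) * tN (wd α) u) - (1 - E u) * (wa α u * w)) *
      ((1 - E u) * (wa α u * w) - γ * ((1 - E u) * tN (wd α) u) + C) + (1 - E u) * (wa α u * w)
      - γ^2 * (1 - E u) * ((1/γ) * E u * tN (wd α) u + (1 - E u) * tNZ (wd α) u))) ?_ ?_ ?_ hends.1 hends.2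
  · intro u hu
    have hT := tH_pos hd0 hd1 hu
    have ha := wa_deriv h0 h1 hu
    have e1 := (((hEd u hu).const_sub 1).const_mul γ).div (tH_deriv hd0 hd1 hu) hT.ne'
    have e2 := ha.mul ((ha.mul_const w).neg.exp)
    have e3 := ((((ha.mul_const w).sub_const (wa0 α * w))).sub
      ((((hEd u hu).const_sub 1).mul (tN_deriv hd0 hd1 hu)).const_mul γ)).add_const C
    refine ((e1.mul e2).mul e3).congr_deriv ?_
    simp only [Pi.mul_apply, Pi.div_apply, Pi.neg_apply, Pi.sub_apply]
    rw [← hEa u, ← hγ]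
    generalize tH (wd α) u = T at *
    generalize E u = e at *
    generalize tN (wd α) u = N at *
    generalize tNZ (wd α) u = NZ at *
    generalize exp (-(wa α u * w)) = X at *
    generalize wa α u = a at *
    have hT' := hT.ne'
    have hγ' := hγ0.ne'
    clear_value C
    field_simp
    ring
  · have i1 := wG_integrable h0 h1 hw 1
    have i2 := wG_integrable h0 h1 hw 2
    have i3 := wG_integrable h0 h1 hw 3
    refine (((i3.const_mul (w^2)).sub (i2.const_mul ((2 * (wa0 α * w + (1 - 2 * γ)) + α) * w))).add
      (i1.const_mul ((wa0 α * w + (1 - 2 * γ))^2 - γ))).congr ?_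
    refine Eventually.of_forall fun u => ?_
    simp only [Pi.add_apply, Pi.sub_apply]
    ring
  · intro u hu
    obtain ⟨p0, p1, p2⟩ := hpt u hu
    have ha := wa_pos (α := α) (u := u)
    have ha0 := wa0_pos (α := α)
    have hX := exp_pos (-(wa α u * w))
    generalize exp (-(wa α u * w)) = X at hX ⊢
    rw [← mul_neg]
    apply mul_le_mul_of_nonneg_left _ (by positivity)
    rw [← hEa u, ← hγ, hC]
    have hm : 0 ≤ α * (E u * (wa α u * w)) := by
      have : 0 < E u := exp_pos _
      positivity
    have p3 := mul_le_mul_of_nonneg_left p0 (sq_nonneg γ)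
    exact alg_large (by linarith) hm p3

end H

open Real Set Filter Topology MeasureTheory

section I
variable {α w : ℝ}

lemma exists_wA (h0 : 0 < α) (h1 : α < 1) : ∃ A : ℝ → ℝ,
    (∀ u ∈ Ioo 0 π, HasDerivAt A (wa α u) u) ∧ Tendsto A (𝓝[>] 0) (𝓝 0) := by
  have hc := wa_cont h0 h1
  have hbd : ∀ u ∈ Ioo 0 π, ∀ t ∈ Ioc 0 u, ‖wa α t‖ ≤ wa α u := fun u hu t ht => by
    rw [norm_of_nonneg wa_pos.le]
    exact wa_mono h0 h1 ⟨ht.1, ht.2.trans_lt hu.2⟩ hu ht.2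
  have h_intg : ∀ u ∈ Ioo 0 π, IntervalIntegrable (wa α) volume 0 u := fun u hu => by
    rw [intervalIntegrable_iff_integrableOn_Ioc_of_le hu.1.le]
    refine Integrable.of_bound (C := wa α u) ?_ ?_
    · exact (hc.mono fun t ht => ⟨ht.1, ht.2.trans_lt hu.2⟩).aestronglyMeasurable measurableSet_Ioc
    · exact (ae_restrict_iff' measurableSet_Ioc).2 (Eventually.of_forall (hbd u hu))
  refine ⟨fun u => ∫ t in (0:ℝ)..u, wa α t, fun u hu => ?_, ?_⟩
  · exact intervalIntegral.integral_hasDerivAt_right (h_intg u hu)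
      (hc.stronglyMeasurableAtFilter isOpen_Ioo u hu) (hc.continuousAt (isOpen_Ioo.mem_nhds hu))
  · refine squeeze_zero_norm' (a := fun u => wa α u * |u - 0|) ?_ ?_
    · filter_upwards [Ioo_mem_nhdsGT pi_pos] with u hu
      refine intervalIntegral.norm_integral_le_of_norm_le_const ?_
      rw [uIoc_of_le hu.1.le]
      exact hbd u hu
    · have hi : Tendsto (fun u : ℝ => |u - 0|) (𝓝[>] 0) (𝓝 0) := by
        have : Continuous (fun u : ℝ => |u - 0|) := by fun_prop
        have := this.tendsto 0
        simp only [sub_zero, abs_zero] at this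
        simpa using this.mono_left nhdsWithin_le_nhds
      simpa using (wa_tendsto h0 h1).mul hi

lemma NT_ge {δ u : ℝ} (h0 : 0 ≤ δ) (h1 : δ < 1) (hu : u ∈ Ioo 0 π) :
    (1 - δ^2) ≤ 4 * tH δ u * (tN δ u * tH δ u) := by
  have hb := beta_pos h0 h1
  have hV := tV_pos h0 h1 hu
  have hN := tN_ge h0 h1 hu
  rw [one_sub_tS h0 h1 hu] at hN
  have hpos : 0 < tV δ u ^ 2 + (1 - δ^2) := by positivity
  rw [← mul_div_assoc, le_div_iff₀ hpos] at hN
  have e : 4 * tH δ u * (tN δ u * tH δ u) = (tN δ u * (1 - δ^2)) * (1 - δ^2) / tV δ u ^ 2 := by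
    unfold tH; field_simp; ring
  rw [e, le_div_iff₀ (by positivity)]
  nlinarith

lemma var_small (h0 : 0 < α) (hα : α ≤ 1/2) (hw : 0 < w) :
    w^2 * wG α 3 w * wG α 1 w ≤ w^2 * wG α 2 w ^ 2 + α * w * wG α 1 w * wG α 2 w
      + (1 - α) * wG α 1 w ^ 2 := by
  have h1 : α < 1 := by linarith
  obtain ⟨γ, hγ⟩ : ∃ γ, γ = 1 - α := ⟨_, rfl⟩
  have hγ0 : 0 < γ := by linarith
  have hγ' := hγ0.ne'
  have hd0 : 0 ≤ wd α := wd_nonneg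
  have hd1 := wd_lt h0 h1
  have hβ := beta_pos hd0 hd1
  obtain ⟨A, hA, hA0⟩ := exists_wA h0 h1
  have ha : ∀ u ∈ Ioo 0 π, HasDerivAt (wa α) (wa α u * (tH (wd α) u / γ)) u :=
    fun u hu => by rw [hγ]; exact wa_deriv h0 h1 hu
  have hT0 : ∀ u ∈ Ioo 0 π, 0 < tH (wd α) u := fun u hu => tH_pos hd0 hd1 hu
  have hN0 : ∀ u ∈ Ioo 0 π, 1 < tN (wd α) u := fun u hu => tN_one_lt hd0 hd1 hu
  have hTt := tH_tendsto hd0 hd1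
  have hat := wa_tendsto h0 h1
  have hAnn : ∀ u ∈ Ioo 0 π, 0 ≤ A u :=
    ge_of_hasDerivAt_nonneg hA (fun u _ => wa_pos.le) hA0
  have hAle : ∀ u ∈ Ioo 0 π, A u ≤ u * wa α u := by
    intro u hu
    have hd : ∀ u ∈ Ioo 0 π, HasDerivAt (fun u => u * wa α u - A u)
        ((1 * wa α u + u * (wa α u * (tH (wd α) u / γ))) - wa α u) u := fun u hu =>
      ((hasDerivAt_id u).mul (ha u hu)).sub (hA u hu)
    have := ge_of_hasDerivAt_nonneg hd (l := 0) (fun u hu => by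
      have := hu.1
      have := hT0 u hu
      have := wa_pos (α := α) (u := u)
      have : 0 ≤ u * (wa α u * (tH (wd α) u / γ)) := by positivity
      linarith) (by
      have hi : Tendsto (fun u : ℝ => u) (𝓝[>] 0) (𝓝 0) := tendsto_id.mono_left nhdsWithin_le_nhds
      simpa using (hi.mul hat).sub hA0) u hu
    linarith
  -- lower bound on A
  have hAR : ∀ u ∈ Ioo 0 π, α / γ * wa α u ≤ A u * (tN (wd α) u * tH (wd α) u) := by
    intro u hu
    have hd : ∀ u ∈ Ioo 0 π, HasDerivAt
        (fun u => A u - α / γ * wa α u / (tN (wd α) u * tH (wd α) u))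
        (wa α u - α / γ * wa α u * (1 / γ / tN (wd α) u - tNZ (wd α) u / tN (wd α) u ^ 2 - 1)) u := by
      intro u hu
      have hT := hT0 u hu
      have hN := hN0 u hu
      have hNp : 0 < tN (wd α) u := by linarith
      refine ((hA u hu).sub (((ha u hu).const_mul (α / γ)).div
        ((tN_deriv hd0 hd1 hu).mul (tH_deriv hd0 hd1 hu)) (by
          simp only [Pi.mul_apply]; positivity))).congr_deriv ?_
      simp only [Pi.mul_apply]
      generalize tN (wd α) u = N at *
      generalize tNZ (wd α) u = NZ at *
      generalize tH (wd α) u = T at *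
      have := hNp.ne'
      have := hT.ne'
      field_simp
      ring
    have key := ge_of_hasDerivAt_nonneg hd (l := 0) (fun u hu => by
      have hN := hN0 u hu
      have hNp : 0 < tN (wd α) u := by linarith
      have hL := claimL hd0 hd1 hu
      have hap := wa_pos (α := α) (u := u)
      have e1 : 1 / γ / tN (wd α) u - tNZ (wd α) u / tN (wd α) u ^ 2 - 1 ≤ 1 := by
        have : 1 / γ ≤ 2 := by rw [div_le_iff₀ hγ0]; linarith
        have e2 : 1 / γ / tN (wd α) u ≤ 2 / tN (wd α) u := by gcongr
        have e3 : - (tNZ (wd α) u / tN (wd α) u ^ 2) ≤ 2 - 2 / tN (wd α) u := by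
          rw [neg_le, le_div_iff₀ (by positivity)]
          have : -(2 - 2 / tN (wd α) u) * tN (wd α) u ^ 2 = - (2 * tN (wd α) u * (tN (wd α) u - 1)) := by
            field_simp
          linarith
        linarith
      have e4 : α / γ ≤ 1 := by rw [div_le_one hγ0]; linarith
      have e5 : 0 ≤ α / γ := by positivity
      have e6 : α / γ * (1 / γ / tN (wd α) u - tNZ (wd α) u / tN (wd α) u ^ 2 - 1) ≤ 1 := by
        calc _ ≤ α / γ * 1 := mul_le_mul_of_nonneg_left e1 e5
          _ ≤ 1 := by linarith
      nlinarith) (by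
      have hR : Tendsto (fun u => α / γ * wa α u / (tN (wd α) u * tH (wd α) u)) (𝓝[>] 0) (𝓝 0) := by
        refine squeeze_zero_norm' (a := fun u => α / γ * wa α u * (4 * tH (wd α) u) / (1 - wd α ^ 2)) ?_ ?_
        · filter_upwards [Ioo_mem_nhdsGT pi_pos] with u hu
          have hT := hT0 u hu
          have hN := hN0 u hu
          have hNp : 0 < tN (wd α) u := by linarith
          have hap := wa_pos (α := α) (u := u)
          rw [norm_of_nonneg (by positivity), div_le_div_iff₀ (by positivity) hβ, mul_assoc]
          rw [mul_assoc (α / γ * wa α u)]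
          rw [mul_assoc (α / γ)]
          apply mul_le_mul_of_nonneg_left _ (by positivity)
          apply mul_le_mul_of_nonneg_left _ (by positivity)
          exact NT_ge hd0 hd1 hu
        · have := ((hat.const_mul (α / γ)).mul (hTt.const_mul 4)).div_const (1 - wd α ^ 2)
          simpa using this
      simpa using hA0.sub hR) u hu
    have hT := hT0 u hu
    have hN := hN0 u hu
    have hNp : 0 < tN (wd α) u := by linarith
    rwa [sub_nonneg, div_le_iff₀ (by positivity)] at key
  -- monotonicity of Pa
  set Pa : ℝ → ℝ := fun u => wa α u - A u * tH (wd α) u with hPa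
  have hPd : ∀ u ∈ Ioo 0 π, HasDerivAt Pa
      (tH (wd α) u * (α / γ * wa α u - A u * (tN (wd α) u * tH (wd α) u))) u := by
    intro u hu
    refine ((ha u hu).sub ((hA u hu).mul (tH_deriv hd0 hd1 hu))).congr_deriv ?_
    have : α = 1 - γ := by linarith
    have e : α / γ = 1 / γ - 1 := by rw [this]; field_simp
    rw [e]
    ring
  have hPn : ∀ u ∈ Ioo 0 π, tH (wd α) u * (α / γ * wa α u - A u * (tN (wd α) u * tH (wd α) u)) ≤ 0 :=
    fun u hu => mul_nonpos_of_nonneg_of_nonpos (hT0 u hu).le (by linarith [hAR u hu])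
  have hPle : ∀ u ∈ Ioo 0 π, Pa u ≤ wa0 α := le_of_hasDerivAt_nonpos hPd hPn (by
    simpa using hat.sub (hA0.mul hTt))
  have hPanti : ∀ u ∈ Ioo 0 π, ∀ v ∈ Ioo 0 π, u ≤ v → Pa v ≤ Pa u := by
    intro u hu v hv huv
    have := monoOn_Ioo_of_hasDerivAt (fun u hu => (hPd u hu).neg)
      (fun u hu => by linarith [hPn u hu]) hu hv huv
    simpa using this
  have i1 := wG_integrable h0 h1 hw 1
  have i2 := wG_integrable h0 h1 hw 2
  have i3 := wG_integrable h0 h1 hw 3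
  have p1 := wG_pos h0 h1 hw 1
  have p2 := wG_pos h0 h1 hw 2
  obtain ⟨κ, hκ⟩ : ∃ κ, κ = w * wG α 2 w / wG α 1 w := ⟨_, rfl⟩
  have hκ' : κ * wG α 1 w = w * wG α 2 w := by rw [hκ]; field_simp
  obtain ⟨C, hC⟩ : ∃ C, ∀ u ∈ Ioo 0 π, (w * Pa u - C) * (wa α u * w - κ) ≤ 0 := by
    set S : Set ℝ := (fun u => w * Pa u) '' {u | u ∈ Ioo 0 π ∧ κ < wa α u * w} with hS
    have hne : S.Nonempty := by
      have h := ((wa_atTop h0 h1).atTop_mul_const hw).eventually_gt_atTop κ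
      obtain ⟨u, hu⟩ := (h.and (Ioo_mem_nhdsLT pi_pos)).exists
      exact ⟨_, u, ⟨hu.2, hu.1⟩, rfl⟩
    have hbd : BddAbove S := by
      refine ⟨w * wa0 α, ?_⟩
      rintro _ ⟨u, hu, rfl⟩
      exact mul_le_mul_of_nonneg_left (hPle u hu.1) hw.le
    refine ⟨sSup S, fun u hu => ?_⟩
    rcases lt_or_ge κ (wa α u * w) with h | h
    · apply mul_nonpos_of_nonpos_of_nonneg _ (by linarith)
      have := le_csSup hbd ⟨u, ⟨hu, h⟩, rfl⟩
      simp only at this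
      linarith
    · apply mul_nonpos_of_nonneg_of_nonpos _ (by linarith)
      have : sSup S ≤ w * Pa u := by
        refine csSup_le hne ?_
        rintro _ ⟨v, hv, rfl⟩
        apply mul_le_mul_of_nonneg_left _ hw.le
        apply hPanti u hu v hv.1
        by_contra hlt
        have h3 := wa_mono h0 h1 hv.1 hu (not_le.1 hlt).le
        have := mul_le_mul_of_nonneg_right h3 hw.le
        linarith [hv.2]
      linarith
  set Ψ : ℝ → ℝ := fun u => γ * A u * exp (-(wa α u * w)) * (wa α u * w - κ + 1) with hΨ
  have hends : Tendsto Ψ (𝓝[>] 0) (𝓝 0) ∧ Tendsto Ψ (𝓝[<] π) (𝓝 0) := by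
    refine end_tendsto h0 h1 hw (K := |κ| + 1) fun u hu => ?_
    have hap := wa_pos (α := α) (u := u)
    have hA1 := hAnn u hu
    have hA2 := hAle u hu
    have hm : 0 < wa α u * w := by positivity
    simp only [Ψ]
    rw [abs_mul, abs_of_nonneg (by positivity)]
    have e1 : |wa α u * w - κ + 1| ≤ wa α u * w + (|κ| + 1) := by
      rw [abs_le]
      have := neg_abs_le κ
      have := le_abs_self κ
      constructor <;> linarith
    have e2 : γ * A u ≤ u * wa α u := by nlinarith
    rw [← mul_assoc, ← mul_assoc]
    have hu0 := hu.1
    gcongr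
  have h_intg : ∫ u in Ioo 0 π, wa α u * exp (-(wa α u * w)) *
      ((wa α u * w - κ)^2 - (C - κ + γ) * (wa α u * w - κ) - γ) ≤ 0 := by
    refine integral_nonpos_of_deriv pi_pos (Ψ := Ψ) (Ψ' := fun u => wa α u * exp (-(wa α u * w)) *
      (γ * (wa α u * w - κ + 1) - A u * tH (wd α) u * w * (wa α u * w - κ))) ?_ ?_ ?_ hends.1 hends.2
    · intro u hu
      have hau := ha u hu
      refine ((((hA u hu).const_mul γ).mul ((hau.mul_const w).neg.exp)).mul
        (((hau.mul_const w).sub_const κ).add_const 1)).congr_deriv ?_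
      simp only [Pi.mul_apply, Pi.neg_apply]
      generalize exp (-(wa α u * w)) = X at *
      field_simp
      ring
    · refine (((i3.const_mul (w^2)).sub (i2.const_mul ((2 * κ + (C - κ + γ)) * w))).add
        (i1.const_mul (κ^2 + (C - κ + γ) * κ - γ))).congr ?_
      refine Eventually.of_forall fun u => ?_
      simp only [Pi.add_apply, Pi.sub_apply]
      ring
    · intro u hu
      have hap := wa_pos (α := α) (u := u)
      have hX := exp_pos (-(wa α u * w))
      generalize exp (-(wa α u * w)) = X at hX ⊢
      rw [← mul_neg]
      apply mul_le_mul_of_nonneg_left _ (by positivity)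
      have := hC u hu
      simp only [Pa] at this
      nlinarith
  have e : ∫ u in Ioo 0 π, wa α u * exp (-(wa α u * w)) *
      ((wa α u * w - κ)^2 - (C - κ + γ) * (wa α u * w - κ) - γ) =
      w^2 * wG α 3 w - (2 * κ + (C - κ + γ)) * w * wG α 2 w +
        (κ^2 + (C - κ + γ) * κ - γ) * wG α 1 w := by
    unfold wG
    rw [← integral_const_mul, ← integral_const_mul, ← integral_const_mul, ← integral_sub, ← integral_add]
    · congr 1; ext u; ring
    · exact (i3.const_mul _).sub (i2.const_mul _)
    · exact i1.const_mul _
    · exact i3.const_mul _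
    · exact i2.const_mul _
  rw [e] at h_intg
  have f1 : w^2 * wG α 3 w - w * wG α 2 w * κ - γ * wG α 1 w ≤ 0 := by
    have : (κ^2 + (C - κ + γ) * κ - γ) * wG α 1 w =
      κ * (κ * wG α 1 w) + (C - κ + γ) * (κ * wG α 1 w) - γ * wG α 1 w := by ring
    rw [this, hκ'] at h_intg
    linarith
  have f2 := mul_le_mul_of_nonneg_right f1 p1.le
  have f3 : (w^2 * wG α 3 w - w * wG α 2 w * κ - γ * wG α 1 w) * wG α 1 w =
    w^2 * wG α 3 w * wG α 1 w - w * wG α 2 w * (κ * wG α 1 w) - γ * wG α 1 w ^ 2 := by ring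
  rw [f3, hκ'] at f2
  have f4 : 0 ≤ α * w * wG α 1 w * wG α 2 w := by positivity
  rw [← hγ]
  nlinarith

lemma var_ineq (h0 : 0 < α) (hα' : α ≤ 4/5) (hw : 0 < w) :
    w^2 * wG α 3 w * wG α 1 w ≤ w^2 * wG α 2 w ^ 2 + α * w * wG α 1 w * wG α 2 w
      + (1 - α) * wG α 1 w ^ 2 := by
  rcases le_total α (1/2) with h | h
  · exact var_small h0 h hw
  · exact var_large h hα' hw

end I

open Real Set Filter Topology MeasureTheory

section K
variable {α : ℝ}

lemma logf_concave (h0 : 0 < α) (hα' : α ≤ 4/5) :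
    ConcaveOn ℝ (Ioi 0) (fun x : ℝ => log (x ^ (1/(1-α)) * wG α 1 (x ^ (1/(1-α))))) := by
  have h1 : α < 1 := by linarith
  obtain ⟨c, hc⟩ : ∃ c, c = 1 / (1 - α) := ⟨_, rfl⟩
  have hγ : 0 < 1 - α := by linarith
  have hc0 : 0 < c := by rw [hc]; positivity
  rw [← hc]
  have hw : ∀ x ∈ Ioi (0:ℝ), HasDerivAt (fun x : ℝ => x ^ c) (c * x ^ c / x) x := by
    intro x hx
    have hx : 0 < x := hx
    refine (Real.hasDerivAt_rpow_const (Or.inl hx.ne')).congr_deriv ?_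
    rw [rpow_sub_one hx.ne', mul_div_assoc]
  have hG : ∀ k, ∀ x ∈ Ioi (0:ℝ), HasDerivAt (fun x : ℝ => wG α k (x ^ c))
      (- wG α (k+1) (x ^ c) * (c * x ^ c / x)) x := fun k x hx =>
    HasDerivAt.comp (h₂ := wG α k) x (wG_deriv h0 h1 (rpow_pos_of_pos hx c) k) (hw x hx)
  have hL : ∀ x ∈ Ioi (0:ℝ), HasDerivAt (fun x : ℝ => log (x ^ c * wG α 1 (x ^ c)))
      (c / x * (1 - x ^ c * wG α 2 (x ^ c) / wG α 1 (x ^ c))) x := by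
    intro x hx
    have hx' : 0 < x := hx
    have hwp := rpow_pos_of_pos hx' c
    have p1 := wG_pos h0 h1 hwp 1
    refine (((hw x hx).mul (hG 1 x hx)).log (by simp only [Pi.mul_apply]; positivity)).congr_deriv ?_
    simp only [Pi.mul_apply]
    field_simp
    ring
  have h_intg : interior (Ioi (0:ℝ)) = Ioi 0 := isOpen_Ioi.interior_eq
  refine concaveOn_of_hasDerivWithinAt2_nonpos (convex_Ioi 0)
    (f' := fun x => c / x * (1 - x ^ c * wG α 2 (x ^ c) / wG α 1 (x ^ c)))
    (f'' := fun x => - (c / x^2 * (1 - x ^ c * wG α 2 (x ^ c) / wG α 1 (x ^ c) + c *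
      (x ^ c * wG α 2 (x ^ c) * wG α 1 (x ^ c) - (x ^ c)^2 * wG α 3 (x ^ c) * wG α 1 (x ^ c)
        + (x ^ c) ^2 * wG α 2 (x ^ c) ^2) / wG α 1 (x ^ c) ^ 2)))
    (fun x hx => (hL x hx).continuousAt.continuousWithinAt) ?_ ?_ ?_
  · rw [h_intg]; exact fun x hx => (hL x hx).hasDerivWithinAt
  · rw [h_intg]
    intro x hx
    have hx' : 0 < x := hx
    have hwp := rpow_pos_of_pos hx' c
    have p1 := wG_pos h0 h1 hwp 1
    refine HasDerivAt.hasDerivWithinAt ?_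
    refine (((hasDerivAt_const x c).div (hasDerivAt_id x) hx'.ne').mul
      ((((hw x hx).mul (hG 2 x hx)).div (hG 1 x hx) p1.ne').const_sub 1)).congr_deriv ?_
    simp only [Pi.mul_apply, Pi.div_apply, id]
    norm_num
    generalize wG α 1 (x ^ c) = G1 at *
    generalize wG α 2 (x ^ c) = G2 at *
    generalize wG α 3 (x ^ c) = G3 at *
    generalize x ^ c = w at *
    field_simp
    ring
  · rw [h_intg]
    intro x hx
    have hx' : 0 < x := hx
    have hwp := rpow_pos_of_pos hx' c
    have p1 := wG_pos h0 h1 hwp 1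
    have hv := var_ineq h0 hα' hwp
    have e : (1 - α) = 1 / c := by rw [hc]; field_simp
    have e2 : α = 1 - 1 / c := by linarith
    rw [Left.neg_nonpos_iff]
    apply mul_nonneg (by positivity)
    generalize hG1 : wG α 1 (x ^ c) = G1 at *
    generalize hG2 : wG α 2 (x ^ c) = G2 at *
    generalize hG3 : wG α 3 (x ^ c) = G3 at *
    generalize x ^ c = w at *
    have e3 : 1 - w * G2 / G1 + c * (w * G2 * G1 - w^2 * G3 * G1 + w^2 * G2^2) / G1 ^ 2 =
      c / G1^2 * ((w^2 * G2^2 + α * w * G1 * G2 + (1 - α) * G1^2) - w^2 * G3 * G1) := by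
      rw [e, e2]; field_simp; ring
    rw [e3]
    apply mul_nonneg (by positivity)
    linarith

lemma logConcave_of_rep (h0 : 0 < α) (hα' : α ≤ 4/5) {f : ℝ → ℝ} {k : ℝ} (hk : 0 < k)
    (hf0 : f 0 = 0)
    (hf : ∀ x, 0 < x → f x = k * (x ^ (1/(1-α)) * wG α 1 (x ^ (1/(1-α))))) :
    LogConcaveOn' f (Ici 0) := by
  have h1 : α < 1 := by linarith
  have hpos : ∀ x, 0 < x → 0 < f x := fun x hx => by
    have hwp := rpow_pos_of_pos hx (1/(1-α))
    have := wG_pos h0 h1 hwp 1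
    rw [hf x hx]; positivity
  have hconc : ∀ x y t : ℝ, 0 < x → 0 < y → 0 ≤ t → t ≤ 1 →
      (1 - t) * log (f x) + t * log (f y) ≤ log (f ((1-t)*x + t*y)) := by
    intro x y t hx hy ht0 ht1
    have hz : 0 < (1-t)*x + t*y := by
      rcases ht0.eq_or_lt with h | h
      · subst h; simpa using hx
      · have : 0 ≤ (1-t)*x := mul_nonneg (by linarith) hx.le
        have : 0 < t * y := by positivity
        linarith
    have key := (logf_concave h0 hα').2 hx hy (by linarith : (0:ℝ) ≤ 1 - t) ht0 (by ring)
    simp only [smul_eq_mul] at key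
    have hl : ∀ x, 0 < x → log (f x) = log k + log (x ^ (1/(1-α)) * wG α 1 (x ^ (1/(1-α)))) := by
      intro x hx
      have hwp := rpow_pos_of_pos hx (1/(1-α))
      have := wG_pos h0 h1 hwp 1
      rw [hf x hx, log_mul hk.ne' (by positivity)]
    rw [hl x hx, hl y hy, hl _ hz]
    linarith
  have hnn : ∀ x, 0 ≤ x → 0 ≤ f x := fun x hx => by
    rcases hx.eq_or_lt with h | h
    · rw [← h, hf0]
    · exact (hpos x h).le
  intro x hx y hy t ht
  have hx : 0 ≤ x := hx
  have hy : 0 ≤ y := hy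
  obtain ⟨ht0, ht1⟩ := ht
  rcases ht0.eq_or_lt with h | ht0'
  · subst h; simp
  rcases ht1.eq_or_lt with h | ht1'
  · subst h; simp
  have hzn : 0 ≤ f ((1-t)*x + t*y) :=
    hnn _ (add_nonneg (mul_nonneg (by linarith) hx) (mul_nonneg ht0 hy))
  rcases hx.eq_or_lt with h | hx'
  · subst h
    rw [hf0, zero_rpow (by linarith)]
    simpa using hzn
  rcases hy.eq_or_lt with h | hy'
  · subst h
    rw [hf0, zero_rpow (by linarith)]
    simpa using hzn
  have hz : 0 < (1-t)*x + t*y := by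
    have : 0 < (1-t)*x := mul_pos (by linarith) hx'
    have : 0 < t * y := by positivity
    linarith
  rw [ge_iff_le, ← log_le_log_iff (mul_pos (rpow_pos_of_pos (hpos x hx') _)
    (rpow_pos_of_pos (hpos y hy') _)) (hpos _ hz),
    log_mul (rpow_pos_of_pos (hpos x hx') _).ne' (rpow_pos_of_pos (hpos y hy') _).ne',
    log_rpow (hpos x hx'), log_rpow (hpos y hy')]
  exact hconc x y t hx' hy' ht0 ht1

end K

open Real Set Filter Topology MeasureTheory

section L
variable {α x : ℝ}

noncomputable def wJ (α x r : ℝ) : ℝ :=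
  exp (-r) * (exp (-(x * r ^ α * cos (α * π))) * sin (x * r ^ α * sin (α * π)))

lemma young_bound (h0 : 0 < α) (h1 : α < 1) (hx : 0 < x) :
    ∃ K, ∀ r, 0 ≤ r → x * r ^ α ≤ r / 2 + K := by
  refine ⟨(1 - α) * (x * (2 * α) ^ α) ^ (1 / (1 - α)), fun r hr => ?_⟩
  have hγ : 0 < 1 - α := by linarith
  have h := Real.geom_mean_le_arith_mean2_weighted (w₁ := α) (w₂ := 1 - α) (p₁ := r / (2 * α))
    (p₂ := (x * (2 * α) ^ α) ^ (1 / (1 - α))) h0.le hγ.le (by positivity) (by positivity) (by ring)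
  rw [← rpow_mul (by positivity), one_div_mul_cancel hγ.ne', rpow_one,
    div_rpow hr (by positivity)] at h
  have e : r ^ α / (2 * α) ^ α * (x * (2 * α) ^ α) = x * r ^ α := by
    have : (2 * α) ^ α ≠ 0 := by positivity
    field_simp
  have e2 : α * (r / (2 * α)) = r / 2 := by field_simp
  rw [e, e2] at h
  exact h

lemma dom_integrable (h0 : 0 < α) (h1 : α < 1) (hx : 0 < x) :
    IntegrableOn (fun r => exp (-r) * exp (x * r ^ α)) (Ioi 0) := by
  obtain ⟨K, hK⟩ := young_bound h0 h1 hx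
  have hi : IntegrableOn (fun r : ℝ => exp K * exp (-(1/2) * r)) (Ioi 0) :=
    (exp_neg_integrableOn_Ioi 0 (by norm_num : (0:ℝ) < 1/2)).const_mul _
  refine Integrable.mono' hi ?_ ?_
  · apply ContinuousOn.aestronglyMeasurable _ measurableSet_Ioi
    have : ContinuousOn (fun r : ℝ => r ^ α) (Ioi 0) := fun r hr =>
      (continuousAt_rpow_const r α (Or.inl (ne_of_gt hr))).continuousWithinAt
    exact continuous_neg.rexp.continuousOn.mul (continuousOn_const.mul this).rexp
  · refine (ae_restrict_iff' measurableSet_Ioi).2 (Eventually.of_forall fun r hr => ?_)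
    have := hK r (le_of_lt hr)
    rw [norm_of_nonneg (by positivity), ← exp_add, ← exp_add, exp_le_exp]
    linarith

lemma series_im (y θ : ℝ) : HasSum (fun n : ℕ => (-y) ^ n / n.factorial * sin (n * θ))
    (- (exp (-(y * cos θ)) * sin (y * sin θ))) := by
  have h := NormedSpace.expSeries_div_hasSum_exp (𝔸 := ℂ) (((-y : ℝ) : ℂ) * Complex.exp (θ * Complex.I))
  have h2 := Complex.hasSum_im h
  rw [← Complex.exp_eq_exp_ℂ, Complex.exp_im] at h2
  have e1 : (((-y : ℝ) : ℂ) * Complex.exp (θ * Complex.I)).re = -(y * cos θ) := by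
    rw [Complex.re_ofReal_mul, Complex.exp_ofReal_mul_I_re]; ring
  have e2 : (((-y : ℝ) : ℂ) * Complex.exp (θ * Complex.I)).im = -(y * sin θ) := by
    rw [Complex.im_ofReal_mul, Complex.exp_ofReal_mul_I_im]; ring
  rw [e1, e2, sin_neg, mul_neg] at h2
  refine h2.congr_fun ?_
  intro n
  rw [mul_pow, ← Complex.exp_nat_mul, ← mul_assoc]
  have : ((-y : ℝ) : ℂ) ^ n * Complex.exp (n * θ * Complex.I) / (n.factorial : ℂ) =
    (((-y) ^ n / n.factorial : ℝ) : ℂ) * Complex.exp (((n * θ : ℝ) : ℂ) * Complex.I) := by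
    push_cast; ring
  rw [this, Complex.im_ofReal_mul, Complex.exp_ofReal_mul_I_im]

lemma inv_Gamma (h0 : 0 < α) (n : ℕ) :
    (Gamma (0 + -α * n))⁻¹ = - (sin (n * (α * π)) * Gamma (n * α + 1)) / π := by
  have h := Real.Gamma_mul_Gamma_one_sub (-(n * α))
  have e1 : (0 + -α * n : ℝ) = -(n * α) := by ring
  have e2 : 1 - -((n:ℝ) * α) = n * α + 1 := by ring
  have e3 : π * -((n:ℝ) * α) = - (n * (α * π)) := by ring
  rw [e2, e3, sin_neg] at h
  rw [e1]
  have hG : 0 < Gamma (n * α + 1) := Gamma_pos_of_pos (by positivity)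
  have h' : Gamma (-(n * α)) = π / -sin (n * (α * π)) / Gamma (n * α + 1) := by
    rw [← h]; field_simp
  rw [h', inv_div, div_div_eq_mul_div]
  ring

lemma wright_eq_integral (h0 : 0 < α) (h1 : α < 1) (hx : 0 < x) :
    IntegrableOn (wJ α x) (Ioi 0) ∧ wright (-α) 0 (-x) = (∫ r in Ioi 0, wJ α x r) / π := by
  have hcr : ContinuousOn (fun r : ℝ => r ^ α) (Ioi 0) := fun r hr =>
      (continuousAt_rpow_const r α (Or.inl (ne_of_gt hr))).continuousWithinAt
  have hI : IntegrableOn (wJ α x) (Ioi 0) := by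
    refine Integrable.mono' (dom_integrable h0 h1 hx) ?_ ?_
    · apply ContinuousOn.aestronglyMeasurable _ measurableSet_Ioi
      unfold wJ
      exact continuous_neg.rexp.continuousOn.mul
        (((continuousOn_const.mul hcr).mul continuousOn_const).neg.rexp.mul
          (continuous_sin.comp_continuousOn ((continuousOn_const.mul hcr).mul continuousOn_const)))
    · refine (ae_restrict_iff' measurableSet_Ioi).2 (Eventually.of_forall fun r hr => ?_)
      have hr : 0 < r := hr
      unfold wJ
      rw [norm_mul, norm_mul, norm_of_nonneg (exp_pos _).le, norm_of_nonneg (exp_pos _).le]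
      apply mul_le_mul_of_nonneg_left _ (exp_pos _).le
      have hy : 0 ≤ x * r ^ α := by positivity
      have e1 : exp (-(x * r ^ α * cos (α * π))) ≤ exp (x * r ^ α) := by
        rw [exp_le_exp]; nlinarith [neg_one_le_cos (α * π)]
      have e2 : ‖sin (x * r ^ α * sin (α * π))‖ ≤ 1 := abs_sin_le_one _
      calc _ ≤ exp (x * r ^ α) * 1 := mul_le_mul e1 e2 (norm_nonneg _) (exp_pos _).le
        _ = _ := mul_one _
  refine ⟨hI, ?_⟩
  have hs : HasSum (fun n : ℕ => ∫ r in Ioi 0, exp (-r) * ((-(x * r ^ α)) ^ n / n.factorial * sin (n * (α * π))))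
      (∫ r in Ioi 0, - wJ α x r) := by
    refine hasSum_integral_of_dominated_convergence
      (fun n r => exp (-r) * ((x * r ^ α) ^ n / n.factorial)) ?_ ?_ ?_ ?_ ?_
    · intro n
      apply ContinuousOn.aestronglyMeasurable _ measurableSet_Ioi
      exact continuous_neg.rexp.continuousOn.mul
        ((((continuousOn_const.mul hcr).neg.pow n).div_const _).mul continuousOn_const)
    · intro n
      refine (ae_restrict_iff' measurableSet_Ioi).2 (Eventually.of_forall fun r hr => ?_)
      have hr : 0 < r := hr
      have hy : 0 ≤ x * r ^ α := by positivity
      rw [norm_mul, norm_of_nonneg (exp_pos _).le]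
      apply mul_le_mul_of_nonneg_left _ (exp_pos _).le
      rw [norm_mul, norm_div, norm_pow, norm_neg, norm_of_nonneg hy,
        norm_of_nonneg (by positivity : (0:ℝ) ≤ (n.factorial : ℝ))]
      exact mul_le_of_le_one_right (by positivity) (abs_sin_le_one _)
    · refine Eventually.of_forall fun r => ?_
      exact (Real.summable_pow_div_factorial _).mul_left _
    · refine (dom_integrable h0 h1 hx).congr ?_
      refine Eventually.of_forall fun r => ?_
      simp only
      rw [tsum_mul_left]
      congr 1
      rw [Real.exp_eq_exp_ℝ, NormedSpace.exp_eq_tsum_div]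
    · refine Eventually.of_forall fun r => ?_
      have := (series_im (x * r ^ α) (α * π)).mul_left (exp (-r))
      rw [mul_neg] at this
      exact this
  have ht : ∀ n : ℕ, (∫ r in Ioi 0, exp (-r) * ((-(x * r ^ α)) ^ n / n.factorial * sin (n * (α * π))))
      = (-π) * ((-x) ^ n / ((n.factorial : ℝ) * Gamma (0 + -α * n))) := by
    intro n
    have e1 : ∫ r in Ioi 0, exp (-r) * ((-(x * r ^ α)) ^ n / n.factorial * sin (n * (α * π))) =
      ∫ r in Ioi 0, ((-x) ^ n / n.factorial * sin (n * (α * π))) * (exp (-r) * r ^ ((n * α + 1) - 1)) := by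
      refine setIntegral_congr_fun measurableSet_Ioi fun r hr => ?_
      have hr : 0 < r := hr
      rw [add_sub_cancel_right, mul_comm (n:ℝ) α, rpow_mul hr.le, rpow_natCast, ← neg_mul, mul_pow]
      ring
    rw [e1, integral_const_mul, ← Real.Gamma_eq_integral (by positivity),
      div_mul_eq_div_div, div_eq_mul_inv _ (Gamma _), inv_Gamma h0]
    have := pi_pos.ne'
    field_simp
  have h3 := hs.tsum_eq
  simp only [ht] at h3
  rw [tsum_mul_left, integral_neg] at h3
  unfold wright
  rw [eq_div_iff pi_pos.ne']
  linarith

end L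

open Real Set Filter Topology MeasureTheory

section M
variable {α x : ℝ}

noncomputable def whh (α x : ℝ) (z : ℂ) : ℂ :=
  Complex.exp (z + Complex.exp z - x * Complex.exp (α * z))

noncomputable def wR (α x s v : ℝ) : ℝ := exp s * cos v - x * exp (α * s) * cos (α * v)
noncomputable def wM (α x s v : ℝ) : ℝ := exp s * sin v - x * exp (α * s) * sin (α * v)

lemma whh_diff (α x : ℝ) : Differentiable ℂ (whh α x) := by
  unfold whh; fun_prop

lemma whh_eq (α x s v : ℝ) : whh α x (s + v * Complex.I) =
    Complex.exp (((s + wR α x s v : ℝ) : ℂ) + ((v + wM α x s v : ℝ) : ℂ) * Complex.I) := by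
  unfold whh wR wM
  congr 1
  have e1 : Complex.exp (s + v * Complex.I) = exp s * (cos v + sin v * Complex.I) := by
    rw [Complex.exp_add, Complex.exp_mul_I]; push_cast; ring
  have e2 : Complex.exp (α * (s + v * Complex.I)) =
      exp (α * s) * (cos (α * v) + sin (α * v) * Complex.I) := by
    have : (α * (s + v * Complex.I) : ℂ) = ((α * s : ℝ) : ℂ) + ((α * v : ℝ) : ℂ) * Complex.I := by
      push_cast; ring
    rw [this, Complex.exp_add, Complex.exp_mul_I]; push_cast; ring
  rw [e1, e2]
  push_cast
  ring

lemma curve_deriv {P : ℂ → ℂ} (hP : ∀ z, HasDerivAt P (whh α x z) z) {s v : ℝ → ℝ} {s' v' t : ℝ}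
    (hs : HasDerivAt s s' t) (hv : HasDerivAt v v' t) :
    HasDerivAt (fun t => (P (s t + v t * Complex.I)).im)
      (exp (s t + wR α x (s t) (v t)) * (s' * sin (v t + wM α x (s t) (v t))
        + v' * cos (v t + wM α x (s t) (v t)))) t := by
  have h1 : HasDerivAt (fun t => ((s t : ℂ) + (v t : ℂ) * Complex.I)) ((s' : ℂ) + (v' : ℂ) * Complex.I) t :=
    hs.ofReal_comp.add (hv.ofReal_comp.mul_const _)
  have h2 := HasDerivAt.scomp t (hP (s t + v t * Complex.I)) h1
  have h3 := Complex.imCLM.hasFDerivAt.comp_hasDerivAt t h2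
  refine h3.congr_deriv ?_
  rw [whh_eq, Complex.exp_add, Complex.exp_mul_I]
  generalize s t + wR α x (s t) (v t) = A
  generalize v t + wM α x (s t) (v t) = B
  rw [← Complex.ofReal_exp, ← Complex.ofReal_cos, ← Complex.ofReal_sin]
  simp [-Complex.ofReal_exp, -Complex.ofReal_cos, -Complex.ofReal_sin]
  ring

lemma exists_prim (α x : ℝ) : ∃ P : ℂ → ℂ, P 0 = 0 ∧ ∀ z, HasDerivAt P (whh α x z) z := by
  obtain ⟨P, h1, h2⟩ := (whh_diff α x).isExactOn_univ.with_val_at 0 0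
  exact ⟨P, h1, fun z => h2 z (mem_univ _)⟩

lemma prim_real {P : ℂ → ℂ} (hP0 : P 0 = 0) (hP : ∀ z, HasDerivAt P (whh α x z) z) (s : ℝ) :
    (P s).im = 0 := by
  have hd : ∀ t : ℝ, HasDerivAt (fun t : ℝ => (P (t + (0:ℝ) * Complex.I)).im) 0 t := by
    intro t
    refine (curve_deriv hP (hasDerivAt_id t) (hasDerivAt_const t 0)).congr_deriv ?_
    simp [wM]
  have := is_const_of_deriv_eq_zero (fun t => (hd t).differentiableAt) (fun t => (hd t).deriv) s 0
  simpa [hP0] using this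

lemma prim_vert {P : ℂ → ℂ} (hP : ∀ z, HasDerivAt P (whh α x z) z) {s v B : ℝ} (hv0 : 0 ≤ v)
    (hvp : v ≤ π) (hB : ∀ t ∈ Icc v π, exp (s + wR α x s t) ≤ B) :
    |(P (s + π * Complex.I)).im - (P (s + v * Complex.I)).im| ≤ B * π := by
  have hd : ∀ t ∈ Icc v π, HasDerivWithinAt (fun t : ℝ => (P (s + t * Complex.I)).im)
      (exp (s + wR α x s t) * cos (t + wM α x s t)) (Icc v π) t := by
    intro t ht
    refine ((curve_deriv hP (hasDerivAt_const t s) (hasDerivAt_id t)).congr_deriv ?_).hasDerivWithinAt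
    simp
  have hB0 : 0 ≤ B := (exp_pos _).le.trans (hB v ⟨le_rfl, hvp⟩)
  have := (convex_Icc v π).norm_image_sub_le_of_norm_hasDerivWithin_le hd (C := B) (fun t ht => by
    rw [norm_mul, norm_of_nonneg (exp_pos _).le]
    calc _ ≤ B * 1 := mul_le_mul (hB t ht) (abs_cos_le_one _) (abs_nonneg _) hB0
      _ = B := mul_one _) (x := v) (y := π) ⟨le_rfl, hvp⟩ ⟨hvp, le_rfl⟩
  refine this.trans ?_
  apply mul_le_mul_of_nonneg_left _ hB0
  rw [norm_of_nonneg (by linarith)]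
  linarith

lemma integral_Ioi_tendsto {g g' : ℝ → ℝ} {m : ℝ} (hd : ∀ r ∈ Ioi (0:ℝ), HasDerivAt g (g' r) r)
    (hi : IntegrableOn g' (Ioi 0)) (h0 : Tendsto g (𝓝[>] 0) (𝓝 0)) (hm : Tendsto g atTop (𝓝 m)) :
    ∫ r in Ioi 0, g' r = m := by
  classical
  have := integral_Ioi_of_hasDerivAt_of_tendsto (f := Function.update g 0 0) (f' := g') (a := 0) (m := m)
    ?_ ?_ hi ?_
  · simpa using this
  · rw [continuousWithinAt_update_same]
    simpa using h0
  · intro r hr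
    refine (hd r hr).congr_of_eventuallyEq ?_
    filter_upwards [Ioi_mem_nhds hr] with y hy
    rw [Function.update_of_ne (ne_of_gt hy)]
  · refine hm.congr' ?_
    filter_upwards [Ioi_mem_atTop 0] with y hy
    rw [Function.update_of_ne (ne_of_gt hy)]

noncomputable def wl (α x u : ℝ) : ℝ := 1 / (1 - α) * (log x + log (sin (α * u)) - log (sin u))

lemma wl_tendsto_zero (h0 : 0 < α) :
    Tendsto (wl α x) (𝓝[>] 0) (𝓝 (1 / (1 - α) * (log x + log α))) := by
  have h := ((((log_sin_tendsto h0).const_add (log x)).sub (log_sin_tendsto one_pos))).const_mul (1 / (1 - α))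
  rw [log_one, sub_zero] at h
  refine h.congr fun u => ?_
  unfold wl
  rw [one_mul]
  ring

lemma wl_atTop (h0 : 0 < α) (h1 : α < 1) : Tendsto (wl α x) (𝓝[<] π) atTop := by
  have a1 : 0 < sin (α * π) := sin_pos_of_mem_Ioo ⟨by positivity, by nlinarith [pi_pos]⟩
  have c1 : ContinuousAt (fun u => log x + log (sin (α * u))) π :=
    continuousAt_const.add (ContinuousAt.log (by fun_prop) a1.ne')
  have c2 : Tendsto (fun u => log (sin u)) (𝓝[<] π) atBot := by
    refine tendsto_log_nhdsGT_zero.comp ?_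
    rw [tendsto_nhdsWithin_iff]
    constructor
    · have := continuous_sin.tendsto π
      rw [sin_pi] at this
      exact this.mono_left nhdsWithin_le_nhds
    · filter_upwards [Ioo_mem_nhdsLT pi_pos] with u hu using sin_pos_of_mem_Ioo hu
  have c3 : Tendsto (fun u => - log (sin u)) (𝓝[<] π) atTop := tendsto_neg_atBot_atTop.comp c2
  have := (c1.tendsto.mono_left (nhdsWithin_le_nhds (s := Iio π))).add_atTop c3
  have hγ : 0 < 1 / (1 - α) := by
    have : 0 < 1 - α := by linarith
    positivity
  exact this.const_mul_atTop hγ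

lemma wl_facts (h0 : 0 < α) (h1 : α < 1) (hx : 0 < x) {u : ℝ} (hu : u ∈ Ioo 0 π) :
    exp (wl α x u) = exp (α * wl α x u) * x * sin (α * u) / sin u ∧
    wa α u * x ^ (1 / (1 - α)) = exp (α * wl α x u) * x * sin ((1 - α) * u) / sin u := by
  have hA := sin_pos_of_mem_Ioo (mul_mem h0 h1 hu)
  have hG := sin_pos_of_mem_Ioo (mul_mem (sub_pos.2 h1) (by linarith : 1 - α < 1) hu)
  have hs := sin_pos_of_mem_Ioo hu
  have hγ : (1 - α) ≠ 0 := by linarith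
  constructor
  · have : exp (α * wl α x u) * x * sin (α * u) / sin u =
        exp (α * wl α x u + log x + log (sin (α * u)) - log (sin u)) := by
      rw [exp_sub, exp_add, exp_add, exp_log hx, exp_log hA, exp_log hs]
    rw [this]
    congr 1
    unfold wl
    field_simp
    ring
  · have : exp (α * wl α x u) * x * sin ((1 - α) * u) / sin u =
        exp (α * wl α x u + log x + log (sin ((1 - α) * u)) - log (sin u)) := by
      rw [exp_sub, exp_add, exp_add, exp_log hx, exp_log hG, exp_log hs]
    rw [this, rpow_def_of_pos hx]
    unfold wa
    rw [← exp_add]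
    congr 1
    unfold wl wH
    field_simp
    ring

lemma wM_curve (h0 : 0 < α) (h1 : α < 1) (hx : 0 < x) {u : ℝ} (hu : u ∈ Ioo 0 π) :
    wM α x (wl α x u) u = 0 := by
  have hs := sin_pos_of_mem_Ioo hu
  obtain ⟨f1, -⟩ := wl_facts h0 h1 hx hu
  unfold wM
  rw [f1]
  field_simp
  ring

lemma sin_gamma (α u : ℝ) : sin ((1 - α) * u) = sin u * cos (α * u) - cos u * sin (α * u) := by
  rw [← sin_sub]; ring_nf

lemma wR_curve (h0 : 0 < α) (h1 : α < 1) (hx : 0 < x) {u : ℝ} (hu : u ∈ Ioo 0 π) :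
    wR α x (wl α x u) u = - (wa α u * x ^ (1 / (1 - α))) := by
  have hs := sin_pos_of_mem_Ioo hu
  obtain ⟨f1, f2⟩ := wl_facts h0 h1 hx hu
  rw [f2, sin_gamma]
  unfold wR
  rw [f1]
  field_simp
  ring

lemma wcurve_deriv (h0 : 0 < α) (h1 : α < 1) (hx : 0 < x) {P : ℂ → ℂ}
    (hP : ∀ z, HasDerivAt P (whh α x z) z) {u : ℝ} (hu : u ∈ Ioo 0 π) :
    HasDerivAt (fun u : ℝ => (P (wl α x u + u * Complex.I)).im)
      (α / (1 - α) * (wa α u * x ^ (1 / (1 - α)) * exp (-(wa α u * x ^ (1 / (1 - α)))))) u := by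
  have hA := sin_pos_of_mem_Ioo (mul_mem h0 h1 hu)
  have hs := sin_pos_of_mem_Ioo hu
  have hγ : (1 - α) ≠ 0 := by linarith
  have e1 : HasDerivAt (fun u => sin (α * u)) (cos (α * u) * (α * 1)) u :=
    ((hasDerivAt_id u).const_mul α).sin
  have e : HasDerivAt (wl α x) (1 / (1 - α) * (cos (α * u) * (α * 1) / sin (α * u) - cos u / sin u)) u :=
    (((e1.log hA.ne').const_add (log x)).sub ((hasDerivAt_sin u).log hs.ne')).const_mul _
  refine (curve_deriv hP e (hasDerivAt_id u)).congr_deriv ?_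
  simp only [id]
  obtain ⟨f1, f2⟩ := wl_facts h0 h1 hx hu
  rw [wM_curve h0 h1 hx hu, wR_curve h0 h1 hx hu, exp_add, f1, add_zero]
  generalize exp (-(wa α u * x ^ (1 / (1 - α)))) = X
  rw [f2, sin_gamma]
  generalize exp (α * wl α x u) = q
  generalize sin u = S at *
  generalize sin (α * u) = T at *
  field_simp
  ring

lemma contour (h0 : 0 < α) (h1 : α < 1) (hx : 0 < x) (hI : IntegrableOn (wJ α x) (Ioi 0)) :
    ∫ r in Ioi 0, wJ α x r =
      α / (1 - α) * (x ^ (1 / (1 - α)) * wG α 1 (x ^ (1 / (1 - α)))) := by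
  obtain ⟨P, hP0, hP⟩ := exists_prim α x
  obtain ⟨K, hK⟩ := young_bound h0 h1 hx
  set g : ℝ → ℝ := fun r => (P ((log r : ℝ) + π * Complex.I)).im with hg
  have hexp : ∀ r : ℝ, 0 < r → exp (α * log r) = r ^ α := fun r hr => by
    rw [rpow_def_of_pos hr, mul_comm]
  have hgd : ∀ r ∈ Ioi (0:ℝ), HasDerivAt g (wJ α x r) r := by
    intro r hr
    have hr : 0 < r := hr
    refine (curve_deriv hP (hasDerivAt_log hr.ne') (hasDerivAt_const r π)).congr_deriv ?_
    unfold wR wM wJ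
    rw [exp_add, exp_log hr, hexp r hr, sin_pi, cos_pi, zero_mul, add_zero, add_comm π, sin_add_pi]
    have e1 : r * (-1) - x * r ^ α * cos (α * π) = -r + -(x * r ^ α * cos (α * π)) := by ring
    have e2 : r * 0 - x * r ^ α * sin (α * π) = -(x * r ^ α * sin (α * π)) := by ring
    rw [e1, e2, exp_add, sin_neg, neg_neg]
    field_simp
  have hg0 : Tendsto g (𝓝[>] 0) (𝓝 0) := by
    refine squeeze_zero_norm' (a := fun r => r * exp (r + x * r ^ α) * π) ?_ ?_
    · filter_upwards [self_mem_nhdsWithin] with r hr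
      have hr : 0 < r := hr
      have := prim_vert hP (s := log r) (v := 0) (B := r * exp (r + x * r ^ α)) le_rfl pi_pos.le
        (fun t ht => by
          rw [exp_add, exp_log hr]
          apply mul_le_mul_of_nonneg_left _ hr.le
          rw [exp_le_exp]
          unfold wR
          rw [exp_log hr, hexp r hr]
          have hy : 0 < x * r ^ α := by positivity
          nlinarith [cos_le_one t, neg_one_le_cos (α * t)])
      rw [Complex.ofReal_zero, zero_mul, add_zero, prim_real hP0 hP, sub_zero] at this
      exact this
    · have hi : Tendsto (fun r : ℝ => r) (𝓝[>] 0) (𝓝 0) := tendsto_id.mono_left nhdsWithin_le_nhds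
      have hr : Tendsto (fun r : ℝ => r ^ α) (𝓝[>] 0) (𝓝 0) := by
        have := (continuousAt_rpow_const (0:ℝ) α (Or.inr h0.le)).tendsto
        rw [zero_rpow h0.ne'] at this
        exact this.mono_left nhdsWithin_le_nhds
      have := (hi.mul (hi.add (hr.const_mul x)).rexp).mul_const π
      simpa using this
  have hlim := tendsto_limUnder_of_hasDerivAt_of_integrableOn_Ioi hgd hI
  set m := limUnder atTop g with hm
  rw [integral_Ioi_tendsto hgd hI hg0 hlim]
  obtain ⟨W, hW⟩ : ∃ W, W = x ^ (1 / (1 - α)) := ⟨_, rfl⟩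
  have hWp : 0 < W := by rw [hW]; positivity
  have hcd := fun u (hu : u ∈ Ioo 0 π) => wcurve_deriv h0 h1 hx hP hu
  rw [← hW] at hcd ⊢
  have h_intg : IntegrableOn (fun u => α / (1 - α) * (wa α u * W * exp (-(wa α u * W)))) (Ioo 0 π) := by
    refine ((wG_integrable h0 h1 hWp 1).const_mul (α / (1 - α) * W)).congr ?_
    refine Eventually.of_forall fun u => ?_
    simp only
    ring
  have hl0 : Tendsto (fun u : ℝ => (P (wl α x u + u * Complex.I)).im) (𝓝[>] 0) (𝓝 0) := by
    have t1 : Tendsto (fun u : ℝ => ((wl α x u : ℂ) + (u : ℂ) * Complex.I)) (𝓝[>] 0)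
        (𝓝 (((1 / (1 - α) * (log x + log α) : ℝ) : ℂ) + ((0:ℝ):ℂ) * Complex.I)) := by
      refine ((Complex.continuous_ofReal.tendsto _).comp (wl_tendsto_zero h0)).add ?_
      refine Tendsto.mul_const _ ?_
      exact (Complex.continuous_ofReal.tendsto _).mono_left nhdsWithin_le_nhds
    have t2 := (Complex.continuous_im.tendsto _).comp ((hP _).continuousAt.tendsto.comp t1)
    rw [Complex.ofReal_zero, zero_mul, add_zero, prim_real hP0 hP] at t2
    exact t2
  have hl1 : Tendsto (fun u : ℝ => (P (wl α x u + u * Complex.I)).im) (𝓝[<] π) (𝓝 m) := by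
    have hla := wl_atTop (x := x) h0 h1
    have hr : Tendsto (fun u => exp (wl α x u)) (𝓝[<] π) atTop := tendsto_exp_atTop.comp hla
    have t1 := hlim.comp hr
    have t2 : Tendsto (fun u : ℝ => (P (wl α x u + π * Complex.I)).im - (P (wl α x u + u * Complex.I)).im)
        (𝓝[<] π) (𝓝 0) := by
      refine squeeze_zero_norm' (a := fun u => 4 * exp K * ((exp (wl α x u) / 4) ^ 1 * exp (-(exp (wl α x u) / 4))) * π) ?_ ?_
      · have hcos : ∀ᶠ u in 𝓝[<] π, cos u < -(3/4) := by
          have := (continuous_cos.tendsto π).mono_left (nhdsWithin_le_nhds (s := Iio π))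
          rw [cos_pi] at this
          exact this.eventually_lt_const (by norm_num)
        filter_upwards [hcos, Ioo_mem_nhdsLT pi_pos] with u hcu hu
        refine prim_vert hP hu.1.le hu.2.le fun t ht => ?_
        have hr0 := exp_pos (wl α x u)
        have hk := hK _ hr0.le
        have hct : cos t ≤ -(3/4) := (cos_le_cos_of_nonneg_of_le_pi hu.1.le ht.2 ht.1).trans hcu.le
        have he : exp (α * wl α x u) = exp (wl α x u) ^ α := by
          rw [← exp_mul, mul_comm]
        rw [exp_add]
        have : 4 * exp K * ((exp (wl α x u) / 4) ^ 1 * exp (-(exp (wl α x u) / 4))) =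
          exp (wl α x u) * exp (K + -(exp (wl α x u) / 4)) := by rw [exp_add]; ring
        rw [this]
        apply mul_le_mul_of_nonneg_left _ hr0.le
        rw [exp_le_exp]
        unfold wR
        rw [he]
        have hy : 0 < x * exp (wl α x u) ^ α := by positivity
        nlinarith [neg_one_le_cos (α * t)]
      · have t3 := (tendsto_pow_mul_exp_neg_atTop_nhds_zero 1).comp (hr.atTop_div_const (by norm_num : (0:ℝ) < 4))
        have := (t3.const_mul (4 * exp K)).mul_const π
        simpa using this
    have t4 := t1.sub t2
    rw [sub_zero] at t4
    refine t4.congr fun u => ?_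
    simp only [Function.comp, g, log_exp]
    ring
  have key := intervalIntegral.integral_eq_sub_of_hasDerivAt_of_tendsto pi_pos hcd
    (by rwa [intervalIntegrable_iff_integrableOn_Ioo_of_le pi_pos.le]) hl0 hl1
  rw [intervalIntegral.integral_of_le pi_pos.le, integral_Ioc_eq_integral_Ioo, sub_zero] at key
  rw [← key]
  unfold wG
  rw [← integral_const_mul, ← integral_const_mul]
  refine integral_congr_ae (Eventually.of_forall fun u => ?_)
  simp only
  ring

end M

/-- Theorem D (b)(i): for every `α ∈ (0, 4/5]`, the function `x ↦ φ(-α, 0, -x)`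
is log-concave on `[0,∞)`. -/
theorem wright_beta_zero_logConcave (α : ℝ) (hα : α ∈ Set.Ioc (0 : ℝ) (4/5 : ℝ)) :
    LogConcaveOn' (fun x => wright (-α) 0 (-x)) (Set.Ici 0) := by
  obtain ⟨h0, h45⟩ := hα
  have h1 : α < 1 := by linarith
  have hγ : 0 < 1 - α := by linarith
  refine logConcave_of_rep h0 h45 (k := α / (1 - α) / π) (by positivity) ?_ ?_
  · have : ∀ n : ℕ, (-(0:ℝ)) ^ n / ((n.factorial : ℝ) * Real.Gamma (0 + -α * n)) = 0 := by
      intro n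
      rcases Nat.eq_zero_or_pos n with h | h
      · subst h; simp
      · rw [neg_zero, zero_pow h.ne', zero_div]
    simp only [wright, this, tsum_zero]
  · intro x hx
    obtain ⟨hI, he⟩ := wright_eq_integral h0 h1 hx
    rw [he, contour h0 h1 hx hI]
    ring
end

section
/- For every α ∈ (0,1) and every β ≥ α, the function x ↦ φ(-α, β, -x) is log-concave on [0,∞). -/
open Filter Topology

/-- recursive array -/
noncomputable def wU (α β : ℝ) : ℕ → ℕ → ℝ
  | 0, n => if n = 0 then 1 else 0
  | (m+1), n => (β + m - α * n) * wU α β m n + α * n * wU α β m (n-1)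

lemma wU_zero_of_lt (α β : ℝ) (m n : ℕ) (h : m < n) : wU α β m n = 0 := by
  induction m generalizing n with
  | zero => simp [wU]; omega
  | succ m ih => rw [wU, ih n (by omega), ih (n-1) (by omega)]; simp

lemma wU_pos {α β : ℝ} (h0 : 0 < α) (h1 : α < 1) (hβ : α ≤ β) (m n : ℕ) (h : n ≤ m) :
    0 < wU α β m n := by
  induction m generalizing n with
  | zero => simp [wU, Nat.le_zero.mp h]
  | succ m ih =>
    rw [wU]
    rcases Nat.lt_or_ge m n with hn | hn
    · obtain rfl : n = m + 1 := by omega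
      rw [wU_zero_of_lt α β m (m+1) (by omega)]
      have := ih m le_rfl
      simp only [mul_zero, zero_add, Nat.add_sub_cancel]
      positivity
    · have hh := ih n hn
      have h2 := ih (n-1) (by omega)
      have : (n:ℝ) ≤ m := by exact_mod_cast hn
      have : 0 < β + m - α * n := by nlinarith [Nat.cast_nonneg (α := ℝ) n]
      positivity

lemma wU_nonneg {α β : ℝ} (h0 : 0 < α) (h1 : α < 1) (hβ : α ≤ β) (m n : ℕ) :
    0 ≤ wU α β m n := by
  rcases Nat.lt_or_ge m n with hn | hn
  · rw [wU_zero_of_lt α β m n hn]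
  · exact (wU_pos h0 h1 hβ m n hn).le

lemma wU_step {a f g u0 u1 u2 u3 : ℝ} (ha : 0 < a) (hf : 0 ≤ f - a) (hg : 0 ≤ g - a)
    (k1 : u1 * u3 ≤ u2 ^ 2) (k2 : (f - a) * (u0 * u2) ≤ (f - a) * u1 ^ 2)
    (k3 : (f - a) * (u0 * u3) ≤ (f - a) * (u1 * u2)) :
    ((g + a) * u1 + (f - a) * u0) * ((g - a) * u3 + (f + a) * u2) ≤ (g * u2 + f * u1) ^ 2 := by
  have e1 := mul_le_mul_of_nonneg_left k1 (mul_nonneg hg (by linarith : 0 ≤ g + a))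
  have e2 := mul_le_mul_of_nonneg_left k2 (by linarith : 0 ≤ f + a)
  have e3 := mul_le_mul_of_nonneg_left k3 hg
  nlinarith [mul_nonneg (sq_nonneg a) (sq_nonneg (u1 - u2))]

lemma wU_logc {α β : ℝ} (h0 : 0 < α) (h1 : α < 1) (hβ : α ≤ β) (m n : ℕ) :
    wU α β m n * wU α β m (n+2) ≤ wU α β m (n+1) ^ 2 := by
  induction m generalizing n with
  | zero => simp [wU]
  | succ m ih =>
    rcases Nat.lt_or_ge (m+1) (n+2) with hn | hn
    · rw [wU_zero_of_lt α β (m+1) (n+2) hn]; simp; positivity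
    have hnm : (n:ℝ) + 1 ≤ m := by exact_mod_cast (by omega : n + 1 ≤ m)
    have hn0 : (0:ℝ) ≤ n := Nat.cast_nonneg n
    have key := @wU_step α (α * (n+1)) (β + m - α * (n+1)) (wU α β m (n-1)) (wU α β m n)
      (wU α β m (n+1)) (wU α β m (n+2)) h0 (by nlinarith) (by nlinarith)
      (ih n) ?_ ?_
    · simp only [wU]
      convert key using 2
      · push_cast; ring
      · simp only [show n + 2 - 1 = n + 1 by omega]; push_cast; ring
      · simp only [Nat.add_sub_cancel]; push_cast; ring
    · rcases n with _ | n
      · simp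
      · exact mul_le_mul_of_nonneg_left (ih n) (by push_cast; nlinarith)
    · rcases n with _ | n
      · simp
      · refine mul_le_mul_of_nonneg_left ?_ (by push_cast; nlinarith)
        have p0 := wU_pos h0 h1 hβ m n (by omega)
        have p1 := wU_pos h0 h1 hβ m (n+1) (by omega)
        have p2 := wU_pos h0 h1 hβ m (n+2) (by omega)
        have q1 : wU α β m n * wU α β m (n+2) ≤ wU α β m (n+1) ^ 2 := ih n
        have q2 : wU α β m (n+1) * wU α β m (n+3) ≤ wU α β m (n+2) ^ 2 := ih (n+1)
        have p3 := wU_nonneg h0 h1 hβ m (n+3)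
        change wU α β m n * wU α β m (n+3) ≤ wU α β m (n+1) * wU α β m (n+2)
        have := mul_le_mul q1 q2 (by positivity) (by positivity)
        have h12 : 0 < wU α β m (n+1) * wU α β m (n+2) := by positivity
        refine le_of_mul_le_mul_right ?_ h12
        nlinarith

lemma wU_eq (α β : ℝ) (m n : ℕ) : wU α β m n =
    ∑ i ∈ Finset.range (n+1), (-1:ℝ)^i * n.choose i * ∏ j ∈ Finset.range m, (β - α * i + j) := by
  induction m generalizing n with
  | zero =>
    have := Int.alternating_sum_range_choose (n := n)
    have h2 : (∑ i ∈ Finset.range (n+1), (-1:ℝ)^i * n.choose i) = if n = 0 then 1 else 0 := by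
      exact_mod_cast this
    simp [wU, h2]
  | succ m ih =>
    rw [wU, ih n, ih (n-1)]
    rcases n with _ | n
    · simp [Finset.prod_range_succ]; ring
    · simp only [Nat.add_sub_cancel]
      have e : ∑ i ∈ Finset.range (n+1), (-1:ℝ)^i * n.choose i * ∏ j ∈ Finset.range m, (β - α * i + j)
        = ∑ i ∈ Finset.range (n+1+1), (-1:ℝ)^i * n.choose i * ∏ j ∈ Finset.range m, (β - α * i + j) := by
        rw [Finset.sum_range_succ _ (n+1)]; simp
      rw [e, Finset.mul_sum, Finset.mul_sum, ← Finset.sum_add_distrib]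
      refine Finset.sum_congr rfl fun i _ => ?_
      rw [Finset.prod_range_succ]
      have hc : ((n:ℝ)+1) * n.choose i = (n+1).choose i * ((n:ℝ) + 1 - i) := by
        rcases Nat.lt_or_ge (n+1) i with h | h
        · rw [Nat.choose_eq_zero_of_lt h, Nat.choose_eq_zero_of_lt (by omega)]; simp
        · have := Nat.choose_mul_succ_eq n i
          have h3 : ((n + 1 - i : ℕ) : ℝ) = (n:ℝ) + 1 - i := by rw [Nat.cast_sub h]; push_cast; ring
          rw [← h3]; rw [mul_comm]; exact_mod_cast this
      push_cast
      linear_combination (α * (-1:ℝ)^i * ∏ j ∈ Finset.range m, (β - α * i + j)) * hc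

lemma logc_interp {W : ℕ → ℝ} {M : ℕ} (hp : ∀ n ≤ M, 0 < W n)
    (hc : ∀ n, W n * W (n+2) ≤ W (n+1) ^ 2) {i k j : ℕ} (hik : i ≤ k) (hkj : k ≤ j) (hij : i < j)
    (hj : j ≤ M) :
    W i ^ (((j:ℝ) - k)/((j:ℝ) - i)) * W j ^ (((k:ℝ) - i)/((j:ℝ) - i)) ≤ W k := by
  have hik' : (i:ℝ) ≤ k := by exact_mod_cast hik
  have hkj' : (k:ℝ) ≤ j := by exact_mod_cast hkj
  have hij' : (0:ℝ) < (j:ℝ) - i := by have : (i:ℝ) < j := by exact_mod_cast hij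
                                      linarith
  have hl : ∀ n, n + 2 ≤ M → Real.log (W n) + Real.log (W (n+2)) ≤ 2 * Real.log (W (n+1)) := by
    intro n hn
    have a := hp n (by omega); have b := hp (n+1) (by omega); have c := hp (n+2) hn
    rw [← Real.log_mul a.ne' c.ne']
    calc _ ≤ Real.log (W (n+1)^2) := Real.log_le_log (by positivity) (hc n)
      _ = _ := by rw [Real.log_pow]; norm_num
  have main : ((j:ℝ) - k) * Real.log (W i) + ((k:ℝ) - i) * Real.log (W j)
      ≤ ((j:ℝ) - i) * Real.log (W k) := by
    rcases hkj.eq_or_lt with rfl | hlt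
    · simp
    set L := fun n => Real.log (W n) with hL
    have mono : ∀ q n, n + q + 1 ≤ M → L (n+q+1) - L (n+q) ≤ L (n+1) - L n := by
      intro q n
      induction q with
      | zero => intro _; exact le_rfl
      | succ q ih =>
        intro h
        have := ih (by omega)
        have h2 := hl (n+q) (by omega)
        simp only [hL] at *
        have e1 : n + (q+1) + 1 = n + q + 2 := by omega
        have e2 : n + (q+1) = n + q + 1 := by omega
        rw [e1, e2]; linarith
    have up : ∀ q, k + q ≤ M → L (k+q) ≤ L k + q * (L (k+1) - L k) := by
      intro q
      induction q with
      | zero => intro _; simp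
      | succ q ih =>
        intro h
        have := ih (by omega)
        have h2 := mono q k (by omega)
        push_cast
        have e : k + (q+1) = k + q + 1 := by omega
        rw [e]; linarith
    have dn : ∀ q, q ≤ k → L (k-q) ≤ L k - q * (L (k+1) - L k) := by
      intro q
      induction q with
      | zero => intro _; simp
      | succ q ih =>
        intro h
        have := ih (by omega)
        have h2 := mono (q+1) (k-(q+1)) (by omega)
        have e : k - (q+1) + (q+1) = k := by omega
        have e2 : k - (q+1) + 1 = k - q := by omega
        rw [e, e2] at h2
        push_cast
        linarith
    have u := up (j - k) (by omega)
    have d := dn (k - i) (by omega)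
    rw [Nat.cast_sub hkj, show k + (j-k) = j by omega] at u
    rw [Nat.cast_sub hik, show k - (k-i) = i by omega] at d
    have a1 := mul_le_mul_of_nonneg_left u (by linarith : (0:ℝ) ≤ (k:ℝ) - i)
    have a2 := mul_le_mul_of_nonneg_left d (by linarith : (0:ℝ) ≤ (j:ℝ) - k)
    show ((j:ℝ) - k) * L i + ((k:ℝ) - i) * L j ≤ ((j:ℝ) - i) * L k
    nlinarith
  have pi := hp i (by omega); have pk := hp k (by omega); have pj := hp j hj
  rw [Real.rpow_def_of_pos pi, Real.rpow_def_of_pos pj, ← Real.exp_add, ← Real.le_log_iff_exp_le pk]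
  have : Real.log (W i) * (((j:ℝ) - k)/((j:ℝ) - i)) + Real.log (W j) * (((k:ℝ) - i)/((j:ℝ) - i))
    = (((j:ℝ) - k) * Real.log (W i) + ((k:ℝ) - i) * Real.log (W j)) / ((j:ℝ) - i) := by ring
  rw [this, div_le_iff₀ hij']; linarith

lemma inv_GammaSeq_tendsto (s : ℝ) :
    Tendsto (fun m => (Real.GammaSeq s m)⁻¹) atTop (𝓝 (Real.Gamma s)⁻¹) := by
  by_cases h : Real.Gamma s = 0
  · obtain ⟨k, hk⟩ := (Real.Gamma_eq_zero_iff s).1 h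
    rw [h, inv_zero]
    refine tendsto_const_nhds.congr' ?_
    filter_upwards [eventually_ge_atTop k] with m hm
    have : ∏ j ∈ Finset.range (m + 1), (s + (j:ℝ)) = 0 :=
      Finset.prod_eq_zero (i := k) (by simp; omega) (by rw [hk]; ring)
    simp [Real.GammaSeq, this]
  · exact (Real.GammaSeq_tendsto_Gamma s).inv₀ h

lemma inv_GammaSeq_eq (s : ℝ) (m : ℕ) (hm : 1 ≤ m) :
    (Real.GammaSeq s m)⁻¹ =
      s * (∏ j ∈ Finset.range m, (1 + s / ((j:ℝ) + 1))) * (m:ℝ) ^ (-s) := by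
  have hm' : (0:ℝ) < m := by exact_mod_cast hm
  have hf : (m.factorial : ℝ) = ∏ j ∈ Finset.range m, ((j:ℝ) + 1) := by
    rw [← Finset.prod_range_add_one_eq_factorial]; push_cast; rfl
  have h2 : ∏ j ∈ Finset.range m, (1 + s / ((j:ℝ) + 1))
      = (∏ j ∈ Finset.range m, (s + ((j:ℝ) + 1))) / m.factorial := by
    rw [hf, ← Finset.prod_div_distrib]
    refine Finset.prod_congr rfl fun j _ => ?_
    have : (j:ℝ) + 1 ≠ 0 := by positivity
    field_simp; ring
  have hp := (Real.rpow_pos_of_pos hm' s).ne'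
  have hfac : (m.factorial : ℝ) ≠ 0 := by positivity
  rw [Real.GammaSeq, h2, Finset.prod_range_succ', Real.rpow_neg hm'.le, inv_div]
  push_cast
  field_simp
  ring

lemma prod_e_bound (r : ℝ) (hr : 0 ≤ r) (i k : ℕ) (hki : k ≤ i) :
    ∏ j ∈ Finset.range k, (r / ((j:ℝ) + 1) * Real.exp (r / ((j:ℝ) + 1)))
      ≤ Real.exp (2 * r + r * Real.log i) := by
  rw [Finset.prod_mul_distrib, ← Real.exp_sum]
  have h1 : ∏ j ∈ Finset.range k, (r / ((j:ℝ) + 1)) = r ^ k / k.factorial := by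
    rw [Finset.prod_div_distrib, ← Finset.prod_range_add_one_eq_factorial]
    push_cast
    simp only [Finset.prod_const, Finset.card_range]
  have h2 : ∑ j ∈ Finset.range k, r / ((j:ℝ) + 1) ≤ r * (1 + Real.log i) := by
    have e : ∑ j ∈ Finset.range k, r / ((j:ℝ) + 1) = r * (harmonic k : ℝ) := by
      rw [harmonic]; push_cast; rw [Finset.mul_sum]; rfl
    rw [e]
    refine mul_le_mul_of_nonneg_left ((harmonic_le_one_add_log k).trans ?_) hr
    rcases Nat.eq_zero_or_pos k with rfl | hk
    · simpa using Real.log_natCast_nonneg i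
    · have : Real.log k ≤ Real.log i := Real.log_le_log (by exact_mod_cast hk) (by exact_mod_cast hki)
      linarith
  rw [h1, show 2 * r + r * Real.log i = r + r * (1 + Real.log i) by ring, Real.exp_add]
  gcongr
  exact Real.pow_div_factorial_le_exp r hr k

lemma inv_GammaSeq_bound {α β : ℝ} (h0 : 0 < α) (h1 : α < 1) (hβ : 0 < β) (i m : ℕ) (hm : 1 ≤ m) :
    |(Real.GammaSeq (β - α * i) m)⁻¹|
      ≤ Real.exp (2 * β) * Real.exp 4 ^ i * (i.factorial : ℝ) ^ α := by
  set s := β - α * i with hs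
  set r := α * i with hr
  have hi0 : (0:ℝ) ≤ i := Nat.cast_nonneg i
  have hr0 : 0 ≤ r := by positivity
  have hri : r ≤ i := by nlinarith
  have hm' : (0:ℝ) < m := by exact_mod_cast hm
  set e : ℕ → ℝ := fun j => r / ((j:ℝ) + 1) * Real.exp (r / ((j:ℝ) + 1)) with he
  set k := ⌊r⌋₊ with hk
  have hki : k ≤ i := by
    have := (Nat.floor_le hr0).trans hri
    exact_mod_cast this
  have fac : ∀ j : ℕ, |1 + s / ((j:ℝ) + 1)|
      ≤ Real.exp (s / ((j:ℝ) + 1)) * (if j < k then e j else 1) := by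
    intro j
    have hj : (0:ℝ) < (j:ℝ) + 1 := by positivity
    rcases le_or_gt 0 (1 + s / ((j:ℝ) + 1)) with h | h
    · rw [abs_of_nonneg h]
      have a : 1 + s / ((j:ℝ) + 1) ≤ Real.exp (s / ((j:ℝ) + 1)) := by
        linarith [Real.add_one_le_exp (s / ((j:ℝ) + 1))]
      refine a.trans (le_mul_of_one_le_right (Real.exp_pos _).le ?_)
      split_ifs with hjk
      · have : ((j + 1 : ℕ):ℝ) ≤ r := (Nat.le_floor_iff hr0).1 hjk
        push_cast at this
        have q : 1 ≤ r / ((j:ℝ) + 1) := by rw [le_div_iff₀ hj]; linarith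
        exact one_le_mul_of_one_le_of_one_le q (Real.one_le_exp (by positivity))
      · exact le_rfl
    · rw [abs_of_neg h]
      have hsj : s / ((j:ℝ) + 1) < -1 := by linarith
      rw [div_lt_iff₀ hj] at hsj
      have hjk : j < k := by
        refine (Nat.le_floor_iff hr0).2 ?_
        push_cast; linarith
      rw [if_pos hjk]
      simp only [he]
      have a : 1 ≤ Real.exp (s / ((j:ℝ) + 1)) * Real.exp (r / ((j:ℝ) + 1)) := by
        rw [← Real.exp_add, ← add_div]
        apply Real.one_le_exp
        apply div_nonneg _ hj.le
        linarith
      have b : -(1 + s / ((j:ℝ) + 1)) ≤ r / ((j:ℝ) + 1) := by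
        have : 0 ≤ (s + r) / ((j:ℝ) + 1) := div_nonneg (by linarith) hj.le
        rw [add_div] at this; linarith
      calc _ ≤ r / ((j:ℝ) + 1) := b
        _ ≤ r / ((j:ℝ) + 1) * (Real.exp (s / ((j:ℝ) + 1)) * Real.exp (r / ((j:ℝ) + 1))) :=
          le_mul_of_one_le_right (by positivity) a
        _ = _ := by ring
  have pe : ∏ j ∈ Finset.range m, (if j < k then e j else 1)
      = ∏ j ∈ Finset.range (min m k), e j := by
    rw [Finset.prod_ite]
    simp only [Finset.prod_const_one, mul_one]
    congr 1
    ext j; simp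
  have hH : ∑ j ∈ Finset.range m, s / ((j:ℝ) + 1) = s * (harmonic m : ℝ) := by
    rw [harmonic]; push_cast; rw [Finset.mul_sum]; rfl
  have P : |∏ j ∈ Finset.range m, (1 + s / ((j:ℝ) + 1))|
      ≤ Real.exp (s * (harmonic m : ℝ)) * Real.exp (2 * r + r * Real.log i) := by
    rw [Finset.abs_prod]
    calc _ ≤ ∏ j ∈ Finset.range m, (Real.exp (s / ((j:ℝ) + 1)) * (if j < k then e j else 1)) :=
          Finset.prod_le_prod (fun _ _ => abs_nonneg _) (fun j _ => fac j)
      _ = Real.exp (s * (harmonic m : ℝ)) * ∏ j ∈ Finset.range (min m k), e j := by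
          rw [Finset.prod_mul_distrib, ← Real.exp_sum, pe, hH]
      _ ≤ _ := by
          gcongr
          exact prod_e_bound r hr0 i (min m k) (by omega)
  have hs1 : |s| ≤ Real.exp (β + i) := by
    refine le_trans (abs_le.2 ⟨by linarith, by linarith⟩) (le_trans (by linarith : β + i ≤ β + i + 1) (Real.add_one_le_exp _))
  have g1 := harmonic_le_one_add_log m
  have g2 : Real.log m ≤ (harmonic m : ℝ) := by
    refine le_trans (Real.log_le_log hm' ?_) (log_add_one_le_harmonic m)
    push_cast; linarith
  have hsH : s * ((harmonic m : ℝ) - Real.log m) ≤ β := by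
    have : s ≤ β := by linarith
    nlinarith
  have hlog : (i:ℝ) * Real.log i ≤ i + Real.log i.factorial := by
    rcases Nat.eq_zero_or_pos i with h | h
    · simp [h]
    · have hi : (0:ℝ) < i := by exact_mod_cast h
      have := Real.pow_div_factorial_le_exp (i:ℝ) hi0 i
      rw [div_le_iff₀ (by positivity)] at this
      have := Real.log_le_log (by positivity) this
      rw [Real.log_pow, Real.log_mul (Real.exp_pos _).ne' (by positivity), Real.log_exp] at this
      exact this
  rw [inv_GammaSeq_eq s m hm, abs_mul, abs_mul, Real.rpow_def_of_pos hm', abs_of_pos (Real.exp_pos _),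
    Real.rpow_def_of_pos (by positivity : (0:ℝ) < i.factorial), ← Real.exp_nat_mul]
  calc _ ≤ Real.exp (β + i) * (Real.exp (s * (harmonic m : ℝ)) * Real.exp (2 * r + r * Real.log i)) *
        Real.exp (Real.log m * -s) := by gcongr
    _ ≤ _ := by
      simp only [← Real.exp_add]
      apply Real.exp_le_exp.2
      have : r * Real.log i ≤ i + Real.log i.factorial * α := by
        have := mul_le_mul_of_nonneg_left hlog h0.le
        rw [hr]; nlinarith
      nlinarith

lemma bound_summable {α : ℝ} (h1 : α < 1) (C D : ℝ) (hD : 0 < D) :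
    Summable (fun i : ℕ => C * (D ^ i * (i.factorial : ℝ) ^ α / i.factorial)) := by
  apply Summable.mul_left
  refine summable_of_ratio_test_tendsto_lt_one (l := 0) one_pos ?_ ?_
  · refine Eventually.of_forall fun i => ?_
    positivity
  · have h : Tendsto (fun n : ℕ => D * ((n:ℝ) + 1) ^ (-(1 - α))) atTop (𝓝 0) := by
      have a := (tendsto_rpow_neg_atTop (by linarith : 0 < 1 - α)).comp
        ((tendsto_natCast_atTop_atTop (R := ℝ)).atTop_add (tendsto_const_nhds (x := (1:ℝ))))
      simpa using a.const_mul D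
    refine h.congr fun n => ?_
    have hn : (0:ℝ) < (n:ℝ) + 1 := by positivity
    have hf : (0:ℝ) < n.factorial := by positivity
    rw [Real.norm_of_nonneg (by positivity), Real.norm_of_nonneg (by positivity),
      Nat.factorial_succ]
    push_cast
    rw [Real.mul_rpow hn.le hf.le, show -(1-α) = α - 1 by ring, Real.rpow_sub_one hn.ne']
    have := (Real.rpow_pos_of_pos hf α).ne'
    field_simp
    ring

lemma choose_tendsto {N : ℕ → ℕ} {v : ℕ → ℝ} {x : ℝ} (hv : Tendsto v atTop atTop)
    (hN : Tendsto (fun m => (N m : ℝ) / v m) atTop (𝓝 x)) (i : ℕ) :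
    Tendsto (fun m => ((N m).choose i : ℝ) / v m ^ i) atTop (𝓝 (x ^ i / i.factorial)) := by
  induction i with
  | zero => simp
  | succ i ih =>
    have h1 : Tendsto (fun m => (N m : ℝ) / v m - i / v m) atTop (𝓝 (x - 0)) :=
      hN.sub (hv.const_div_atTop _)
    have h2 := (ih.mul h1).div_const ((i:ℝ) + 1)
    have e : x ^ i / i.factorial * (x - 0) / ((i:ℝ) + 1) = x ^ (i+1) / (i+1).factorial := by
      rw [Nat.factorial_succ]; push_cast; field_simp; ring
    rw [e] at h2
    refine h2.congr fun m => ?_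
    have hc : ((N m).choose (i+1) : ℝ) * (i + 1) = (N m).choose i * ((N m : ℝ) - i) := by
      rcases Nat.lt_or_ge (N m) i with h | h
      · rw [Nat.choose_eq_zero_of_lt h, Nat.choose_eq_zero_of_lt (by omega)]; simp
      · rw [← Nat.cast_sub h]; exact_mod_cast Nat.choose_succ_right_eq (N m) i
    have hi : (i:ℝ) + 1 ≠ 0 := by positivity
    rw [← sub_div, div_mul_div_comm, ← hc, ← pow_succ]
    field_simp

lemma wU_tendsto {α β : ℝ} (h0 : 0 < α) (h1 : α < 1) (hβ : 0 < β) {x : ℝ} (hx : 0 ≤ x) :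
    Tendsto (fun m : ℕ => wU α β (m+1) ⌊x * (m:ℝ) ^ α⌋₊ / ((m:ℝ) ^ β * m.factorial)) atTop
      (𝓝 (wright (-α) β (-x))) := by
  have hv : Tendsto (fun m : ℕ => (m:ℝ) ^ α) atTop atTop :=
    (tendsto_rpow_atTop h0).comp tendsto_natCast_atTop_atTop
  have hN : Tendsto (fun m : ℕ => ((⌊x * (m:ℝ) ^ α⌋₊ : ℕ) : ℝ) / (m:ℝ) ^ α) atTop (𝓝 x) :=
    (tendsto_nat_floor_mul_div_atTop hx).comp hv
  have key : Tendsto (fun m : ℕ => ∑' i : ℕ, (-1:ℝ) ^ i *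
      (((⌊x * (m:ℝ) ^ α⌋₊).choose i : ℝ) / ((m:ℝ) ^ α) ^ i) * (Real.GammaSeq (β - α * i) m)⁻¹)
      atTop (𝓝 (wright (-α) β (-x))) := by
    rw [wright]
    refine tendsto_tsum_of_dominated_convergence
      (bound_summable h1 (Real.exp (2 * β)) ((x+1) * Real.exp 4) (by positivity)) ?_ ?_
    · intro i
      have := ((choose_tendsto hv hN i).const_mul ((-1:ℝ)^i)).mul (inv_GammaSeq_tendsto (β - α * i))
      convert this using 2
      rw [neg_pow, show β + -α * i = β - α * i by ring, div_eq_mul_inv, mul_inv]; ring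
    · filter_upwards [eventually_ge_atTop 1] with m hm i
      have hm' : (0:ℝ) < m := by exact_mod_cast hm
      have hvm : 0 < (m:ℝ) ^ α := Real.rpow_pos_of_pos hm' α
      rw [norm_mul, norm_mul, norm_pow, norm_neg, norm_one, one_pow, one_mul, Real.norm_eq_abs,
        Real.norm_eq_abs, abs_of_nonneg (by positivity)]
      have hc : ((⌊x * (m:ℝ) ^ α⌋₊).choose i : ℝ) / ((m:ℝ) ^ α) ^ i ≤ (x+1) ^ i / i.factorial := by
        have a := Nat.choose_le_pow_div (α := ℝ) i ⌊x * (m:ℝ) ^ α⌋₊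
        have b : ((⌊x * (m:ℝ) ^ α⌋₊ : ℕ) : ℝ) ≤ (x + 1) * (m:ℝ) ^ α :=
          (Nat.floor_le (by positivity)).trans (by nlinarith)
        rw [div_le_iff₀ (by positivity)]
        calc _ ≤ _ := a
          _ ≤ ((x + 1) * (m:ℝ) ^ α) ^ i / i.factorial := by gcongr
          _ = _ := by rw [mul_pow]; ring
      calc _ ≤ (x+1) ^ i / i.factorial *
            (Real.exp (2 * β) * Real.exp 4 ^ i * (i.factorial : ℝ) ^ α) := by
              gcongr
              exact inv_GammaSeq_bound h0 h1 hβ i m hm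
        _ = _ := by rw [mul_pow]; ring
  refine key.congr' ?_
  filter_upwards [eventually_ge_atTop 1] with m hm
  have hm' : (0:ℝ) < m := by exact_mod_cast hm
  rw [wU_eq, tsum_eq_sum (s := Finset.range (⌊x * (m:ℝ) ^ α⌋₊ + 1)), Finset.sum_div]
  · refine Finset.sum_congr rfl fun i _ => ?_
    have e : (m:ℝ) ^ (β - α * i) = (m:ℝ) ^ β / ((m:ℝ) ^ α) ^ i := by
      rw [Real.rpow_sub hm', Real.rpow_mul hm'.le, Real.rpow_natCast]
    have := (Real.rpow_pos_of_pos hm' α).ne'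
    have := (Real.rpow_pos_of_pos hm' β).ne'
    rw [Real.GammaSeq, inv_div, e]
    field_simp
  · intro i hi
    rw [Nat.choose_eq_zero_of_lt (by simpa using hi)]
    simp

lemma wright_nonneg' {α β : ℝ} (h0 : 0 < α) (h1 : α < 1) (hβ : α ≤ β) {x : ℝ} (hx : 0 ≤ x) :
    0 ≤ wright (-α) β (-x) :=
  ge_of_tendsto' (wU_tendsto h0 h1 (h0.trans_le hβ) hx) fun m =>
    div_nonneg (wU_nonneg h0 h1 hβ _ _) (by positivity)

lemma wright_lc_lt {α β : ℝ} (h0 : 0 < α) (h1 : α < 1) (hβ : α ≤ β) {x y t : ℝ} (hx : 0 ≤ x)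
    (hxy : x < y) (ht0 : 0 < t) (ht1 : t < 1) :
    wright (-α) β (-x) ^ (1 - t) * wright (-α) β (-y) ^ t
      ≤ wright (-α) β (-((1 - t) * x + t * y)) := by
  set z := (1 - t) * x + t * y with hz
  have hxz : x ≤ z := by nlinarith
  have hzy : z ≤ y := by nlinarith
  have hβ0 := h0.trans_le hβ
  have hv : Tendsto (fun m : ℕ => (m:ℝ) ^ α) atTop atTop :=
    (tendsto_rpow_atTop h0).comp tendsto_natCast_atTop_atTop
  have hN : ∀ w : ℝ, 0 ≤ w →
      Tendsto (fun m : ℕ => ((⌊w * (m:ℝ) ^ α⌋₊ : ℕ) : ℝ) / (m:ℝ) ^ α) atTop (𝓝 w) :=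
    fun w hw => (tendsto_nat_floor_mul_div_atTop hw).comp hv
  have Nx := hN x hx
  have Nz := hN z (hx.trans hxz)
  have Ny := hN y (hx.trans hxy.le)
  have hvpos : ∀ᶠ m : ℕ in atTop, 0 < (m:ℝ) ^ α := hv.eventually_gt_atTop 0
  have hyx : y - x ≠ 0 := by linarith
  have E1 : Tendsto (fun m : ℕ => (((⌊y * (m:ℝ) ^ α⌋₊ : ℕ) : ℝ) - (⌊z * (m:ℝ) ^ α⌋₊ : ℕ)) /
      (((⌊y * (m:ℝ) ^ α⌋₊ : ℕ) : ℝ) - (⌊x * (m:ℝ) ^ α⌋₊ : ℕ))) atTop (𝓝 (1 - t)) := by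
    have := (Ny.sub Nz).div (Ny.sub Nx) hyx
    rw [show (y - z) / (y - x) = 1 - t by rw [div_eq_iff hyx, hz]; ring] at this
    refine this.congr' ?_
    filter_upwards [hvpos] with m hm
    simp only [Pi.div_apply, ← sub_div]
    rw [div_div_div_cancel_right₀ hm.ne']
  have E2 : Tendsto (fun m : ℕ => (((⌊z * (m:ℝ) ^ α⌋₊ : ℕ) : ℝ) - (⌊x * (m:ℝ) ^ α⌋₊ : ℕ)) /
      (((⌊y * (m:ℝ) ^ α⌋₊ : ℕ) : ℝ) - (⌊x * (m:ℝ) ^ α⌋₊ : ℕ))) atTop (𝓝 t) := by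
    have := (Nz.sub Nx).div (Ny.sub Nx) hyx
    rw [show (z - x) / (y - x) = t by rw [div_eq_iff hyx, hz]; ring] at this
    refine this.congr' ?_
    filter_upwards [hvpos] with m hm
    simp only [Pi.div_apply, ← sub_div]
    rw [div_div_div_cancel_right₀ hm.ne']
  have Tx := (wU_tendsto h0 h1 hβ0 hx).rpow E1 (Or.inr (by linarith))
  have Ty := (wU_tendsto h0 h1 hβ0 (hx.trans hxy.le)).rpow E2 (Or.inr ht0)
  refine le_of_tendsto_of_tendsto (Tx.mul Ty) (wU_tendsto h0 h1 hβ0 (hx.trans hxz)) ?_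
  have lt_ev : ∀ᶠ m : ℕ in atTop, ⌊x * (m:ℝ) ^ α⌋₊ < ⌊y * (m:ℝ) ^ α⌋₊ := by
    filter_upwards [Nx.eventually_lt Ny hxy, hvpos] with m hm hp
    rw [div_lt_div_iff_of_pos_right hp] at hm
    exact_mod_cast hm
  have le_ev : ∀ᶠ m : ℕ in atTop, ⌊y * (m:ℝ) ^ α⌋₊ ≤ m + 1 := by
    have hb : Tendsto (fun m : ℕ => (m:ℝ) ^ (1 - α)) atTop atTop :=
      (tendsto_rpow_atTop (by linarith)).comp tendsto_natCast_atTop_atTop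
    filter_upwards [hb.eventually_ge_atTop y, eventually_ge_atTop 1] with m hm hm1
    have hm' : (0:ℝ) < m := by exact_mod_cast hm1
    have hp := Real.rpow_pos_of_pos hm' α
    have : y * (m:ℝ) ^ α ≤ m := by
      calc _ ≤ (m:ℝ) ^ (1 - α) * (m:ℝ) ^ α := by gcongr
        _ = m := by rw [← Real.rpow_add hm']; simp
    have := Nat.floor_le_of_le this
    omega
  filter_upwards [lt_ev, le_ev, eventually_ge_atTop 1] with m hlt hle hm
  have hm' : (0:ℝ) < m := by exact_mod_cast hm
  have hp := Real.rpow_pos_of_pos hm' α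
  have hpb := Real.rpow_pos_of_pos hm' β
  have hQ : 0 < (m:ℝ) ^ β * m.factorial := by positivity
  refine logc_interp (W := fun n => wU α β (m+1) n / ((m:ℝ) ^ β * m.factorial)) (M := m + 1)
    (fun n hn => div_pos (wU_pos h0 h1 hβ _ _ hn) hQ) (fun n => ?_)
    (Nat.floor_mono (by gcongr)) (Nat.floor_mono (by gcongr)) hlt hle
  rw [div_mul_div_comm, div_pow, ← sq]
  gcongr
  exact wU_logc h0 h1 hβ _ _

/-- Theorem D (b)(ii): for every `α ∈ (0,1)` and `β ≥ α`, the function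
`x ↦ φ(-α, β, -x)` is log-concave on `[0,∞)`. -/
theorem wright_logConcave_of_le (α β : ℝ) (hα : α ∈ Set.Ioo (0 : ℝ) 1) (hβ : α ≤ β) :
    LogConcaveOn' (fun x => wright (-α) β (-x)) (Set.Ici 0) := by
  obtain ⟨h0, h1⟩ := hα
  intro x hx y hy t ht
  have hx : 0 ≤ x := hx
  have hy : 0 ≤ y := hy
  rcases ht.1.eq_or_lt with rfl | ht0
  · simp
  rcases ht.2.eq_or_lt with rfl | ht1
  · simp
  show wright (-α) β (-x) ^ (1 - t) * wright (-α) β (-y) ^ t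
      ≤ wright (-α) β (-((1 - t) * x + t * y))
  rcases lt_trichotomy x y with h | rfl | h
  · exact wright_lc_lt h0 h1 hβ hx h ht0 ht1
  · rw [show (1 - t) * x + t * x = x by ring,
      ← Real.rpow_add_of_nonneg (wright_nonneg' h0 h1 hβ hx) (by linarith) ht0.le]
    simp
  · have := wright_lc_lt h0 h1 hβ hy h (t := 1 - t) (by linarith) (by linarith)
    rw [show 1 - (1 - t) = t by ring] at this
    rw [mul_comm, add_comm]
    exact this
end
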